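/- arXiv:2110.15050 — 3 statements merged into one kernel-verified Lean document; each statement's English description precedes it below -/
import Mathlib

section
/- Let α>0, 0<p<1, and let r_{n,k} be the root-cluster weights for linear preferential attachment trees with parameter α (φ(δ)=Γ(δ+1/α)/Γ(1/α)). Then for every integer k ≥ 1, the normalized k-th moment of the root-cluster size satisfies lim_{n→∞} m_k(n)/n^{k(p+α)/(1+α)} = C_k·(1+α)·Γ(1/(1+α))/(α·Γ((kp+α(k-1))/(1+α))), where C_k is given by the Bell-polynomial recursion. -/
open Finset Filter Asymptotics

/-- The root-cluster weight recursion. -/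
noncomputable def clusterRec (p : ℝ) (φ : ℕ → ℝ) (r : ℕ → ℕ → ℝ) (b : ℕ → ℝ) : Prop :=
  (∀ m, b m = ∑ k ∈ Finset.Icc 1 m, r m k) ∧
  ∀ n k : ℕ, 1 ≤ n → 1 ≤ k →
    r n k =
      ∑ δ ∈ Finset.range n, ∑ s ∈ (Finset.range (δ + 1)).attach,
        (δ.choose s.1 : ℝ) * (φ δ / (δ.factorial : ℝ)) *
          ∑ f ∈ (Finset.Nat.antidiagonalTuple δ (n - 1)).filter (fun f => ∀ i, 1 ≤ f i),
            (((n - 1).factorial : ℝ) / ∏ i, ((f i).factorial : ℝ)) *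
              ∑ g ∈ (Finset.Nat.antidiagonalTuple s.1 (k - 1)).filter (fun g => ∀ i, 1 ≤ g i),
                p ^ s.1 * (1 - p) ^ (δ - s.1) *
                  (∏ i : Fin s.1,
                    r (f (Fin.castLE (Nat.lt_succ_iff.mp (Finset.mem_range.mp s.2)) i)) (g i)) *
                  ∏ j ∈ Finset.univ.filter (fun j : Fin δ => s.1 ≤ (j : ℕ)), b (f j)

/-- Partial Bell polynomials. -/
noncomputable def bellPartial (k j : ℕ) (x : ℕ → ℝ) : ℝ :=
  ∑ m ∈ (Fintype.piFinset (fun _ : Fin (k - j + 1) => Finset.range (k + 1))).filter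
      (fun m : Fin (k - j + 1) → ℕ => (∑ i : Fin (k - j + 1), ((i : ℕ) + 1) * m i) = k ∧ (∑ i, m i) = j),
    (k.factorial : ℝ) *
      ∏ i : Fin (k - j + 1), x ((i : ℕ) + 1) ^ m i /
        (((m i).factorial : ℝ) * (((i : ℕ) + 1).factorial : ℝ) ^ m i)

/-!
The root-cluster generating function `∑ₙ ∑ₖ r n k uᵏ xⁿ / n!` solves a separable differential
equation, explicitly at `u = 1`, where it is `1 - (1 - (1 + 1 / α) x)^(α / (1 + α))`. Putting
`u = exp t`, subtracting the value at `u = 1` and extracting the coefficient of `tᵏ` turns that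
equation into a hierarchy of linear equations `(1 - x) sₖ' = (θ - β) sₖ + gₖ` for the (rescaled)
moment generating functions, with `θ = (p + α) / (1 + α)`, `β = α / (1 + α)` and `gₖ` a polynomial
in `s₁, …, sₖ₋₁` and powers of `1 - x`. By induction `sₖ` is asymptotic to a constant multiple of
`(1 - x)^(-(k θ - β))` on the level of coefficients, and comparing the leading coefficients of both
sides gives the Bell polynomial recursion. This transfer needs no complex analysis: asymptotics
relative to `[xⁿ] (1 - x)^(-γ)` survive Cauchy products by Silverman–Toeplitz and pass through the
linear equation by Stolz–Cesàro.
-/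

namespace RootCluster

open PowerSeries Topology

section BinomialPow

variable {R A : Type*} [CommRing R] [BinomialRing R] [CommRing A] [Algebra R A]

theorem eq_of_derivative_eq_mul [IsAddTorsionFree A] {F G Q : A⟦X⟧}
    (hF : d⁄dX A F = Q * F) (hG : d⁄dX A G = Q * G)
    (h0 : constantCoeff F = constantCoeff G) : F = G := by
  ext n
  induction n using Nat.strong_induction_on with
  | _ n ih =>
    cases n with
    | zero => simpa using h0
    | succ n =>
      have hcoeff : coeff n (d⁄dX A F) = coeff n (d⁄dX A G) := by
        rw [hF, hG, coeff_mul, coeff_mul]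
        refine Finset.sum_congr rfl fun ij hij => ?_
        rw [ih ij.2 (by have := mem_antidiagonal.mp hij; omega)]
      rw [coeff_derivative, coeff_derivative, ← Nat.cast_succ, mul_comm, ← nsmul_eq_mul,
        mul_comm, ← nsmul_eq_mul] at hcoeff
      exact nsmul_right_injective n.succ_ne_zero hcoeff

theorem coeff_subst_eq_sum_range {B : Type*} [CommRing B] [Algebra B A] (f : B⟦X⟧) {W : A⟦X⟧}
    (hW : constantCoeff W = 0) {n N : ℕ} (hn : n < N) :
    coeff n (f.subst W) = ∑ d ∈ range N, coeff d f • coeff n (W ^ d) := by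
  rw [coeff_subst' (.of_constantCoeff_zero' hW), finsum_eq_sum_of_support_subset (s := range N)]
  intro d hd
  by_contra hdN
  have hX : X ^ d ∣ W ^ d := pow_dvd_pow_of_dvd (X_dvd_iff.mpr hW) d
  have hnd : n < d := hn.trans_le (by simpa using hdN)
  exact hd (by simp [X_pow_dvd_iff.mp hX n hnd])

/-- The power `F ^ s` of a formal power series with constant coefficient `1`, for an exponent `s`
in a binomial ring: the substitution of `F - 1` into the binomial series `(1 + X) ^ s`. -/
noncomputable def binomialPow (F : A⟦X⟧) (s : R) : A⟦X⟧ :=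
  (binomialSeries A s).subst (F - 1)

variable {F G : A⟦X⟧}

theorem hasSubst_sub_one (hF : constantCoeff F = 1) : HasSubst (F - 1) :=
  .of_constantCoeff_zero' (by simp [hF])

theorem coeff_binomialPow (hF : constantCoeff F = 1) (s : R) {n N : ℕ} (hn : n < N) :
    coeff n (binomialPow F s) = ∑ d ∈ range N, Ring.choose s d • coeff n ((F - 1) ^ d) := by
  rw [binomialPow, coeff_subst_eq_sum_range _ (by simp [hF]) hn]
  simp only [binomialSeries_coeff, smul_assoc, one_smul]

theorem constantCoeff_binomialPow (hF : constantCoeff F = 1) (s : R) :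
    constantCoeff (binomialPow F s) = 1 := by
  rw [← coeff_zero_eq_constantCoeff_apply, coeff_binomialPow hF s zero_lt_one]
  simp

theorem binomialPow_add (hF : constantCoeff F = 1) (s t : R) :
    binomialPow F (s + t) = binomialPow F s * binomialPow F t := by
  rw [binomialPow, binomialSeries_add, subst_mul (hasSubst_sub_one hF), binomialPow, binomialPow]

theorem binomialPow_natCast (hF : constantCoeff F = 1) (n : ℕ) :
    binomialPow F (n : R) = F ^ n := by
  have hS := hasSubst_sub_one hF
  rw [binomialPow, binomialSeries_nat, ← coe_substAlgHom hS, map_pow, map_add, map_one,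
    coe_substAlgHom hS, subst_X hS, add_sub_cancel]

theorem binomialPow_zero (hF : constantCoeff F = 1) : binomialPow F (0 : R) = 1 := by
  simpa using binomialPow_natCast (R := R) hF 0

theorem binomialPow_one (hF : constantCoeff F = 1) : binomialPow F (1 : R) = F := by
  simpa using binomialPow_natCast (R := R) hF 1

theorem binomialPow_mul_binomialPow_neg (hF : constantCoeff F = 1) (s : R) :
    binomialPow F s * binomialPow F (-s) = 1 := by
  rw [← binomialPow_add hF, add_neg_cancel, binomialPow_zero hF]

theorem derivative_binomialSeries (s : R) :
    d⁄dX A (binomialSeries A s) = s • binomialSeries A (s - 1) := by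
  ext n
  have h := Ring.choose_smul_choose s (Nat.le_add_left 1 n)
  rw [Nat.choose_one_right, Ring.choose_one_right, Nat.add_sub_cancel, Nat.cast_one] at h
  rw [coeff_derivative, coeff_smul, binomialSeries_coeff, binomialSeries_coeff, ← smul_assoc,
    smul_eq_mul, ← h, ← Nat.cast_succ, mul_comm, ← nsmul_eq_mul, smul_assoc]

theorem derivative_binomialPow (hF : constantCoeff F = 1) (s : R) :
    d⁄dX A (binomialPow F s) = s • (binomialPow F (s - 1) * d⁄dX A F) := by
  have hS := hasSubst_sub_one hF
  rw [binomialPow, derivative_subst hS, derivative_binomialSeries, map_sub, derivative_one,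
    sub_zero, ← algebraMap_smul A s (binomialSeries A (s - 1)), subst_smul hS,
    algebraMap_smul, smul_mul_assoc, binomialPow]

theorem derivative_binomialPow_eq_mul (hF : constantCoeff F = 1) (s : R) :
    d⁄dX A (binomialPow F s) = s • (binomialPow F (-1 : R) * d⁄dX A F) * binomialPow F s := by
  rw [derivative_binomialPow hF, sub_eq_add_neg, binomialPow_add hF, smul_mul_assoc]
  congr 1
  ring

theorem binomialPow_neg_one_mul_self (hF : constantCoeff F = 1) :
    binomialPow F (-1 : R) * F = 1 := by
  simpa [binomialPow_one hF, mul_comm] using binomialPow_mul_binomialPow_neg hF (1 : R)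

theorem one_sub_X_mul_derivative_binomialPow (s : R) :
    (1 - X) * d⁄dX A (binomialPow (1 - X) s) = -(s • binomialPow (1 - X) s) := by
  have hX1 : constantCoeff (1 - X : A⟦X⟧) = 1 := by simp
  have hinv := binomialPow_neg_one_mul_self (R := R) hX1
  rw [derivative_binomialPow_eq_mul hX1, map_sub, derivative_one, derivative_X, zero_sub]
  simp only [Algebra.smul_def]
  linear_combination (-(algebraMap R A⟦X⟧ s * binomialPow (1 - X) s)) * hinv

theorem eq_C_mul_binomialPow_of_one_sub_X_mul_derivative [IsAddTorsionFree A] {s : R}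
    (h : (1 - X) * d⁄dX A F = s • F) : F = C (constantCoeff F) * binomialPow (1 - X) (-s) := by
  have hX1 : constantCoeff (1 - X : A⟦X⟧) = 1 := by simp
  have hinv := binomialPow_neg_one_mul_self (R := R) hX1
  have hsol := one_sub_X_mul_derivative_binomialPow (A := A) (-s)
  simp only [Algebra.smul_def, map_neg, neg_mul, neg_neg] at h hsol
  refine eq_of_derivative_eq_mul (Q := algebraMap R A⟦X⟧ s * binomialPow (1 - X) (-1 : R)) ?_ ?_ ?_
  · linear_combination binomialPow (1 - X) (-1 : R) * h - d⁄dX A F * hinv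
  · rw [Derivation.leibniz, derivative_C, smul_zero, add_zero, smul_eq_mul]
    linear_combination C (constantCoeff F) * (binomialPow (1 - X) (-1 : R) * hsol -
      d⁄dX A (binomialPow (1 - X) (-s)) * hinv)
  · simp [constantCoeff_binomialPow hX1]

theorem mul_binomialPow [IsAddTorsionFree A] (hF : constantCoeff F = 1)
    (hG : constantCoeff G = 1) (s : R) :
    binomialPow (F * G) s = binomialPow F s * binomialPow G s := by
  have hFG : constantCoeff (F * G) = 1 := by rw [map_mul, hF, hG, one_mul]
  have hFinv := binomialPow_neg_one_mul_self (R := R) hF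
  have hGinv := binomialPow_neg_one_mul_self (R := R) hG
  have hinv : binomialPow (F * G) (-1 : R) = binomialPow F (-1 : R) * binomialPow G (-1 : R) := by
    linear_combination (binomialPow F (-1 : R) * binomialPow G (-1 : R)) *
      binomialPow_neg_one_mul_self (R := R) hFG
      - binomialPow (F * G) (-1 : R) * (hGinv + binomialPow G (-1 : R) * G * hFinv)
  refine eq_of_derivative_eq_mul (derivative_binomialPow_eq_mul hFG s) ?_ ?_
  · rw [Derivation.leibniz, derivative_binomialPow_eq_mul hF, derivative_binomialPow_eq_mul hG,
      Derivation.leibniz, hinv]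
    simp only [Algebra.smul_def]
    linear_combination (-(algebraMap R A⟦X⟧ s * binomialPow F s * binomialPow G s)) *
      (binomialPow G (-1 : R) * d⁄dX A G * hFinv + binomialPow F (-1 : R) * d⁄dX A F * hGinv)
  · simp only [map_mul, constantCoeff_binomialPow, hF, hG, hFG, one_mul]

theorem binomialPow_binomialPow [IsAddTorsionFree A] (hF : constantCoeff F = 1) (s t : R) :
    binomialPow (binomialPow F s) t = binomialPow F (s * t) := by
  have hFs := constantCoeff_binomialPow hF s
  refine eq_of_derivative_eq_mul (derivative_binomialPow_eq_mul hFs t) ?_ ?_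
  · rw [derivative_binomialPow_eq_mul hF, derivative_binomialPow_eq_mul hF s]
    simp only [Algebra.smul_def, map_mul]
    linear_combination (-(algebraMap R A⟦X⟧ s * algebraMap R A⟦X⟧ t * binomialPow F (-1 : R) *
      d⁄dX A F * binomialPow F (s * t))) * binomialPow_neg_one_mul_self (R := R) hFs
  · rw [constantCoeff_binomialPow hF, constantCoeff_binomialPow hFs]

theorem coeff_one_sub_binomialPow {W : A⟦X⟧} (hW : constantCoeff W = 0) (s : R) {n N : ℕ}
    (hn : n < N) : coeff n (binomialPow (1 - W) (-s)) =
      ∑ d ∈ range N, Ring.multichoose s d • coeff n (W ^ d) := by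
  rw [coeff_binomialPow (by simp [hW]) _ hn]
  refine Finset.sum_congr rfl fun d _ => ?_
  rw [sub_sub_cancel_left, neg_pow, Ring.choose_neg, ← Ring.multichoose_eq]
  rcases d.even_or_odd with hd | hd
  · simp [hd.neg_one_pow, Int.negOnePow_even (d : ℤ) (by exact_mod_cast hd)]
  · simp [hd.neg_one_pow, Int.negOnePow_odd (d : ℤ) (by exact_mod_cast hd)]

theorem coeff_one_sub_X_binomialPow (s : R) (n : ℕ) :
    coeff n (binomialPow (1 - X : A⟦X⟧) (-s)) = algebraMap R A (Ring.multichoose s n) := by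
  rw [coeff_one_sub_binomialPow constantCoeff_X s n.lt_succ_self,
    Finset.sum_eq_single_of_mem n (by simp), coeff_X_pow_self, Algebra.algebraMap_eq_smul_one]
  intro d _ hd
  rw [coeff_X_pow, if_neg hd.symm, smul_zero]

theorem subst_mk_multichoose {W : A⟦X⟧} (hW : constantCoeff W = 0) (s : R) :
    (mk (Ring.multichoose s)).subst W = binomialPow (1 - W) (-s) := by
  ext n
  rw [coeff_subst_eq_sum_range _ hW n.lt_succ_self, coeff_one_sub_binomialPow hW s n.lt_succ_self]
  simp only [coeff_mk]

end BinomialPow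

section Toeplitz

theorem silverman_toeplitz {ι 𝕜 E : Type*} [NormedField 𝕜] [NormedAddCommGroup E]
    [NormedSpace 𝕜 E] {l : Filter ι} {s : ι → Finset ℕ} {w : ι → ℕ → 𝕜} {W : 𝕜} {M : ℝ}
    {a : ℕ → E} {A : E} (hbdd : ∀ᶠ n in l, ∑ k ∈ s n, ‖w n k‖ ≤ M)
    (hcol : ∀ k, Tendsto (w · k) l (𝓝 0)) (hrow : Tendsto (fun n => ∑ k ∈ s n, w n k) l (𝓝 W))
    (ha : Tendsto a atTop (𝓝 A)) : Tendsto (fun n => ∑ k ∈ s n, w n k • a k) l (𝓝 (W • A)) := by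
  suffices hdiff : Tendsto (fun n => ∑ k ∈ s n, w n k • (a k - A)) l (𝓝 0) by
    simpa [smul_sub, Finset.sum_smul] using hdiff.add (hrow.smul_const A)
  rw [NormedAddGroup.tendsto_nhds_zero]
  intro ε hε
  have hK : 0 < |M| + 1 := by positivity
  obtain ⟨N, hN⟩ := Metric.tendsto_atTop.mp ha (ε / 2 / (|M| + 1)) (by positivity)
  have hhead : Tendsto (fun n => ∑ k ∈ range N, ‖w n k‖ * ‖a k - A‖) l (𝓝 0) := by
    simpa using tendsto_finsetSum (range N) fun k _ => (hcol k).norm.mul_const ‖a k - A‖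
  filter_upwards [hbdd, hhead.eventually_lt_const (half_pos hε)] with n hn hnhead
  have htail : ∀ k, N ≤ k → ‖a k - A‖ ≤ ε / 2 / (|M| + 1) := fun k hk => by
    simpa [dist_eq_norm] using (hN k hk).le
  calc ‖∑ k ∈ s n, w n k • (a k - A)‖
      ≤ ∑ k ∈ s n, ‖w n k‖ * ‖a k - A‖ := by
        simpa only [norm_smul] using norm_sum_le (s n) fun k => w n k • (a k - A)
    _ ≤ ∑ k ∈ s n, ((if k < N then ‖w n k‖ * ‖a k - A‖ else 0)
          + ‖w n k‖ * (ε / 2 / (|M| + 1))) := by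
        refine Finset.sum_le_sum fun k _ => ?_
        split_ifs with hk
        · exact le_add_of_nonneg_right (by positivity)
        · rw [zero_add]
          exact mul_le_mul_of_nonneg_left (htail k (not_lt.mp hk)) (norm_nonneg _)
    _ ≤ (∑ k ∈ range N, ‖w n k‖ * ‖a k - A‖) + (|M| + 1) * (ε / 2 / (|M| + 1)) := by
        rw [Finset.sum_add_distrib, ← Finset.sum_filter, ← Finset.sum_mul]
        refine add_le_add ?_ (mul_le_mul_of_nonneg_right ?_ (by positivity))
        · refine Finset.sum_le_sum_of_subset_of_nonneg (fun k hk => ?_) fun _ _ _ => by positivity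
          exact mem_range.mpr (mem_filter.mp hk).2
        · exact hn.trans ((le_abs_self M).trans (by linarith))
    _ < ε := by
        rw [mul_div_cancel₀ _ hK.ne']
        linarith

theorem stolz_cesaro {q T : ℕ → ℝ} {L : ℝ} (hT : StrictMono T) (hTtop : Tendsto T atTop atTop)
    (h : Tendsto (fun n => (q (n + 1) - q n) / (T (n + 1) - T n)) atTop (𝓝 L)) :
    Tendsto (fun n => q n / T n) atTop (𝓝 L) := by
  have hstep : ∀ n, 0 < T (n + 1) - T n := fun n => sub_pos.mpr (hT n.lt_succ_self)
  have hinv : ∀ x : ℝ, Tendsto (fun n => x / T n) atTop (𝓝 0) := fun x => hTtop.const_div_atTop x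
  have hrow : Tendsto (fun n => ∑ k ∈ range n, (T (k + 1) - T k) / T n) atTop (𝓝 1) := by
    have hsub : Tendsto (fun n => 1 - T 0 / T n) atTop (𝓝 1) := by
      simpa using (hinv (T 0)).const_sub 1
    refine hsub.congr' ?_
    filter_upwards [hTtop.eventually_gt_atTop 0] with n hn
    rw [← Finset.sum_div, Finset.sum_range_sub, sub_div, div_self hn.ne']
  have hbdd : ∀ᶠ n in atTop, ∑ k ∈ range n, ‖(T (k + 1) - T k) / T n‖ ≤ 2 := by
    filter_upwards [hTtop.eventually_gt_atTop 0, hrow.eventually_le_const one_lt_two] with n hn hle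
    refine (Finset.sum_congr rfl fun k _ => ?_).trans_le hle
    exact Real.norm_of_nonneg (div_pos (hstep k) hn).le
  have hmain := (silverman_toeplitz hbdd (fun k => hinv _) hrow h).add (hinv (q 0))
  rw [one_smul, add_zero] at hmain
  refine hmain.congr fun n => ?_
  have hterm : ∀ k, ((T (k + 1) - T k) / T n) • ((q (k + 1) - q k) / (T (k + 1) - T k))
      = (q (k + 1) - q k) / T n := fun k => by
    rw [smul_eq_mul, div_mul_div_comm, mul_comm (T n), mul_div_mul_left _ _ (hstep k).ne']
  rw [Finset.sum_congr rfl fun k _ => hterm k, ← Finset.sum_div, Finset.sum_range_sub, ← add_div,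
    sub_add_cancel]

end Toeplitz

section Multichoose

theorem multichoose_eq_prod_div (s : ℝ) (n : ℕ) :
    Ring.multichoose s n = (∏ i ∈ range n, (s + i)) / n.factorial := by
  rw [eq_div_iff (by positivity), mul_comm, ← nsmul_eq_mul,
    Ring.factorial_nsmul_multichoose_eq_ascPochhammer, Polynomial.ascPochhammer_smeval_eq_eval]
  induction n with
  | zero => simp
  | succ n ih => rw [ascPochhammer_succ_eval, ih, Finset.prod_range_succ]

theorem multichoose_succ_mul (s : ℝ) (n : ℕ) :
    Ring.multichoose s (n + 1) * (n + 1) = (s + n) * Ring.multichoose s n := by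
  rw [multichoose_eq_prod_div, multichoose_eq_prod_div, Finset.prod_range_succ, Nat.factorial_succ]
  push_cast
  field_simp

theorem multichoose_pos {s : ℝ} (hs : 0 < s) (n : ℕ) : 0 < Ring.multichoose s n := by
  rw [multichoose_eq_prod_div]
  positivity

theorem Gamma_div_Gamma_eq_multichoose {s : ℝ} (hs : 0 < s) (n : ℕ) :
    Real.Gamma (n + s) / Real.Gamma s = n.factorial * Ring.multichoose s n := by
  induction n with
  | zero => simp [(Real.Gamma_pos_of_pos hs).ne']
  | succ n ih =>
    rw [show ((n + 1 : ℕ) : ℝ) + s = (n + s) + 1 by push_cast; ring,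
      Real.Gamma_add_one (by positivity), mul_div_assoc, ih, Nat.factorial_succ]
    push_cast
    linear_combination (-(n.factorial : ℝ)) * multichoose_succ_mul s n

theorem tendsto_multichoose_mul_rpow {s : ℝ} (hs : Real.Gamma s ≠ 0) :
    Tendsto (fun n : ℕ => Ring.multichoose s n * (n : ℝ) ^ (1 - s)) atTop
      (𝓝 (Real.Gamma s)⁻¹) := by
  have h := ((Real.GammaSeq_tendsto_Gamma s).inv₀ hs).mul (tendsto_natCast_div_add_atTop s)
  rw [mul_one] at h
  refine h.congr' ?_
  filter_upwards [tendsto_natCast_atTop_atTop.eventually_gt_atTop (-s), eventually_gt_atTop 0]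
    with n hns hn
  have hn' : (0 : ℝ) < n := by exact_mod_cast hn
  have hpow : (n : ℝ) ^ s ≠ 0 := (Real.rpow_pos_of_pos hn' s).ne'
  have hsn : s + n ≠ 0 := by linarith
  rw [Real.GammaSeq, multichoose_eq_prod_div, Finset.prod_range_succ, Real.rpow_sub hn',
    Real.rpow_one, inv_div, add_comm (n : ℝ) s]
  field_simp

theorem tendsto_multichoose_div_multichoose {γ δ : ℝ} (hγ : Real.Gamma γ ≠ 0) (hδ : 0 < δ)
    (h : γ < δ) : Tendsto (fun n => Ring.multichoose γ n / Ring.multichoose δ n) atTop (𝓝 0) := by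
  have hpow : Tendsto (fun n : ℕ => (n : ℝ) ^ (-(δ - γ))) atTop (𝓝 0) :=
    (tendsto_rpow_neg_atTop (sub_pos.mpr h)).comp tendsto_natCast_atTop_atTop
  have hΓδ := (Real.Gamma_pos_of_pos hδ).ne'
  have hlim := ((tendsto_multichoose_mul_rpow hγ).div (tendsto_multichoose_mul_rpow hΓδ)
    (inv_ne_zero hΓδ)).mul hpow
  rw [mul_zero] at hlim
  refine hlim.congr' ?_
  filter_upwards [eventually_gt_atTop 0] with n hn
  have hn' : (0 : ℝ) < n := by exact_mod_cast hn
  have hpow₁ := (Real.rpow_pos_of_pos hn' (1 - δ)).ne'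
  have hpow₂ := (Real.rpow_pos_of_pos hn' (δ - γ)).ne'
  rw [Pi.div_apply, show 1 - γ = (1 - δ) + (δ - γ) by ring, Real.rpow_add hn',
    Real.rpow_neg hn'.le, ← mul_assoc, mul_right_comm, mul_div_mul_right _ _ hpow₁,
    mul_div_right_comm, mul_assoc, mul_inv_cancel₀ hpow₂, mul_one]

theorem tendsto_multichoose_div_multichoose_add {γ δ : ℝ} (hγ : Real.Gamma γ ≠ 0) (hδ : 0 < δ)
    (h : γ < δ) (i : ℕ) :
    Tendsto (fun n => Ring.multichoose γ n / Ring.multichoose δ (n + i)) atTop (𝓝 0) := by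
  induction i with
  | zero => exact tendsto_multichoose_div_multichoose hγ hδ h
  | succ i ih =>
    have hratio : Tendsto (fun n : ℕ => (n + (i + 1 : ℝ)) / (n + (i + δ))) atTop (𝓝 1) := by
      simpa [add_comm] using
        tendsto_add_mul_div_add_mul_atTop_nhds (i + 1 : ℝ) (i + δ) 1 (d := 1) one_ne_zero
    have hlim := ih.mul hratio
    rw [zero_mul] at hlim
    refine hlim.congr fun n => ?_
    have hrec := multichoose_succ_mul δ (n + i)
    have hc := (multichoose_pos hδ (n + i)).ne'
    have hc' := (multichoose_pos hδ (n + i + 1)).ne'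
    push_cast at hrec
    rw [div_mul_div_comm, ← add_assoc n i 1, div_eq_div_iff (by positivity) hc']
    linear_combination (Ring.multichoose γ n) * hrec

end Multichoose

section CoeffAsymp

/-- `CoeffAsymp f γ L` says that `[xⁿ] f ∼ L [xⁿ] (1 - x)^(-γ)` as `n → ∞`, where for `L = 0` this
means that the quotient tends to zero; it records the singular behaviour `L (1 - x)^(-γ)` of `f`
at `1` on the level of coefficients. -/
def CoeffAsymp (f : ℝ⟦X⟧) (γ L : ℝ) : Prop :=
  Tendsto (fun n => coeff n f / Ring.multichoose γ n) atTop (𝓝 L)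

namespace CoeffAsymp

variable {f g : ℝ⟦X⟧} {γ δ L M : ℝ}

theorem add (hf : CoeffAsymp f γ L) (hg : CoeffAsymp g γ M) : CoeffAsymp (f + g) γ (L + M) :=
  (Tendsto.add hf hg).congr fun n => by rw [map_add, add_div]

theorem C_mul (s : ℝ) (hf : CoeffAsymp f γ L) : CoeffAsymp (C s * f) γ (s * L) :=
  (Tendsto.const_mul s hf).congr fun n => by rw [coeff_C_mul, mul_div_assoc]

theorem sum {ι : Type*} {S : Finset ι} {f : ι → ℝ⟦X⟧} {L : ι → ℝ}
    (hf : ∀ i ∈ S, CoeffAsymp (f i) γ (L i)) : CoeffAsymp (∑ i ∈ S, f i) γ (∑ i ∈ S, L i) :=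
  (tendsto_finsetSum S hf).congr fun n => by rw [map_sum, Finset.sum_div]

theorem of_lt (hf : CoeffAsymp f γ L) (hγ : 0 < γ) (h : γ < δ) : CoeffAsymp f δ 0 := by
  have hlim := hf.mul (tendsto_multichoose_div_multichoose (Real.Gamma_pos_of_pos hγ).ne'
    (hγ.trans h) h)
  rw [mul_zero] at hlim
  exact hlim.congr fun n => div_mul_div_cancel₀ (multichoose_pos hγ n).ne'

end CoeffAsymp

theorem coeffAsymp_binomialPow {γ : ℝ} (hγ : 0 < γ) :
    CoeffAsymp (binomialPow (1 - X) (-γ)) γ 1 :=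
  tendsto_const_nhds.congr fun n => by
    rw [coeff_one_sub_X_binomialPow, Algebra.algebraMap_self, RingHom.id_apply,
      div_self (multichoose_pos hγ n).ne']

theorem coeffAsymp_binomialPow_of_lt {γ δ : ℝ} (hγ : Real.Gamma γ ≠ 0) (hδ : 0 < δ) (h : γ < δ) :
    CoeffAsymp (binomialPow (1 - X) (-γ)) δ 0 :=
  (tendsto_multichoose_div_multichoose hγ hδ h).congr fun n => by
    rw [coeff_one_sub_X_binomialPow, Algebra.algebraMap_self, RingHom.id_apply]

theorem sum_antidiagonal_multichoose (γ δ : ℝ) (n : ℕ) :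
    ∑ ij ∈ antidiagonal n, Ring.multichoose γ ij.1 * Ring.multichoose δ ij.2 =
      Ring.multichoose (γ + δ) n := by
  have h := congrArg (coeff n)
    (binomialPow_add (F := (1 - X : ℝ⟦X⟧)) (by simp) (-γ) (-δ))
  rw [← neg_add, coeff_mul] at h
  simpa only [coeff_one_sub_X_binomialPow, Algebra.algebraMap_self, RingHom.id_apply] using h.symm

/-- The weight `[xⁱ](1-x)^(-γ) · [xⁿ⁻ⁱ](1-x)^(-δ) / [xⁿ](1-x)^(-(γ+δ))`; for fixed `n` these average
the normalised coefficients of two factors into those of their product. -/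
noncomputable def convWeight (γ δ : ℝ) (n i : ℕ) : ℝ :=
  Ring.multichoose γ i * Ring.multichoose δ (n - i) / Ring.multichoose (γ + δ) n

section ConvWeight

variable {γ δ : ℝ}

theorem convWeight_nonneg (hγ : 0 < γ) (hδ : 0 < δ) (n i : ℕ) : 0 ≤ convWeight γ δ n i :=
  (div_pos (mul_pos (multichoose_pos hγ i) (multichoose_pos hδ _))
    (multichoose_pos (add_pos hγ hδ) n)).le

theorem sum_convWeight (hγ : 0 < γ) (hδ : 0 < δ) (n : ℕ) :
    ∑ i ∈ range (n + 1), convWeight γ δ n i = 1 := by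
  have h := sum_antidiagonal_multichoose γ δ n
  rw [Finset.Nat.sum_antidiagonal_eq_sum_range_succ_mk] at h
  simp only [convWeight]
  rw [← Finset.sum_div, h, div_self (multichoose_pos (add_pos hγ hδ) n).ne']

theorem tendsto_convWeight (hγ : 0 < γ) (hδ : 0 < δ) (i : ℕ) :
    Tendsto (convWeight γ δ · i) atTop (𝓝 0) := by
  rw [← tendsto_add_atTop_iff_nat i]
  have h := (tendsto_multichoose_div_multichoose_add (Real.Gamma_pos_of_pos hδ).ne'
    (add_pos hγ hδ) (lt_add_of_pos_left δ hγ) i).const_mul (Ring.multichoose γ i)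
  rw [mul_zero] at h
  exact h.congr fun n => by rw [convWeight, Nat.add_sub_cancel, mul_div_assoc]

theorem convWeight_flip (γ δ : ℝ) {n i : ℕ} (hi : i ≤ n) :
    convWeight γ δ n (n - i) = convWeight δ γ n i := by
  rw [convWeight, convWeight, Nat.sub_sub_self hi, mul_comm, add_comm]

theorem tendsto_sum_convWeight_mul (hγ : 0 < γ) (hδ : 0 < δ) {a b : ℕ → ℝ} {A B : ℝ}
    (ha : Tendsto a atTop (𝓝 A)) (hb : Tendsto b atTop (𝓝 B)) :
    Tendsto (fun n => ∑ i ∈ range (n + 1), convWeight γ δ n i * b (n - i) * a i) atTop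
      (𝓝 (B * A)) := by
  obtain ⟨K, hK⟩ := (hb.norm).bddAbove_range
  have hbK : ∀ n, ‖b n‖ ≤ K := fun n => hK ⟨n, rfl⟩
  have hnorm : ∀ γ' δ' : ℝ, 0 < γ' → 0 < δ' → ∀ n,
      ∑ i ∈ range (n + 1), ‖convWeight γ' δ' n i‖ = 1 := fun γ' δ' hγ' hδ' n => by
    simp only [Real.norm_of_nonneg (convWeight_nonneg hγ' hδ' n _), sum_convWeight hγ' hδ' n]
  refine silverman_toeplitz (𝕜 := ℝ) (E := ℝ) (s := fun n => range (n + 1)) (M := K)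
    (.of_forall fun n => ?_) (fun i => ?_) ?_ ha
  · calc ∑ i ∈ range (n + 1), ‖convWeight γ δ n i * b (n - i)‖
        ≤ ∑ i ∈ range (n + 1), ‖convWeight γ δ n i‖ * K :=
          Finset.sum_le_sum fun i _ => (norm_mul_le _ _).trans
            (mul_le_mul_of_nonneg_left (hbK _) (norm_nonneg _))
      _ = K := by rw [← Finset.sum_mul, hnorm γ δ hγ hδ, one_mul]
  · exact (tendsto_convWeight hγ hδ i).zero_mul_isBoundedUnder_le
      (isBoundedUnder_of ⟨K, fun n => hbK (n - i)⟩)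
  · have hrow := silverman_toeplitz (𝕜 := ℝ) (E := ℝ) (s := fun n => range (n + 1)) (M := 1)
      (W := 1) (.of_forall fun n => (hnorm δ γ hδ hγ n).le)
      (tendsto_convWeight hδ hγ) (by simp only [sum_convWeight hδ hγ, tendsto_const_nhds]) hb
    rw [one_smul] at hrow
    refine hrow.congr fun n => ?_
    rw [← Finset.sum_range_reflect]
    refine Finset.sum_congr rfl fun i hi => ?_
    have hi' : i ≤ n := Nat.lt_succ_iff.mp (mem_range.mp hi)
    rw [show n + 1 - 1 - i = n - i by omega, convWeight_flip δ γ hi', smul_eq_mul]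

end ConvWeight

theorem CoeffAsymp.mul {f g : ℝ⟦X⟧} {γ δ L M : ℝ} (hγ : 0 < γ) (hδ : 0 < δ)
    (hf : CoeffAsymp f γ L) (hg : CoeffAsymp g δ M) : CoeffAsymp (f * g) (γ + δ) (L * M) := by
  have h := tendsto_sum_convWeight_mul hγ hδ hf hg
  rw [mul_comm M] at h
  refine h.congr fun n => ?_
  rw [coeff_mul, Finset.Nat.sum_antidiagonal_eq_sum_range_succ_mk, Finset.sum_div]
  refine Finset.sum_congr rfl fun i _ => ?_
  have hi := (multichoose_pos hγ i).ne'
  have hni := (multichoose_pos hδ (n - i)).ne'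
  rw [convWeight]
  field_simp

section ODE

theorem coeff_succ_of_one_sub_X_mul_derivative {A : Type*} [CommRing A] {f h : A⟦X⟧}
    (hode : (1 - X) * d⁄dX A f = h) (n : ℕ) :
    coeff (n + 1) f * (n + 1) = n * coeff n f + coeff n h := by
  have hn := congrArg (coeff n) hode
  rw [sub_mul, one_mul, map_sub, coeff_derivative] at hn
  cases n with
  | zero => simpa using hn
  | succ n =>
    rw [coeff_succ_X_mul, coeff_derivative] at hn
    rw [← hn]
    push_cast
    ring

theorem multichoose_div_succ_sub {e γ : ℝ} (he : 0 < e) (n : ℕ) :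
    Ring.multichoose γ (n + 1) / Ring.multichoose e (n + 1) -
        Ring.multichoose γ n / Ring.multichoose e n =
      (γ - e) * Ring.multichoose γ n / ((n + 1) * Ring.multichoose e (n + 1)) := by
  have hγ' := multichoose_succ_mul γ n
  have he' := multichoose_succ_mul e n
  have h0 := (multichoose_pos he n).ne'
  have h1 := (multichoose_pos he (n + 1)).ne'
  rw [div_sub_div _ _ h1 h0, div_eq_div_iff (by positivity) (by positivity)]
  linear_combination (Ring.multichoose e (n + 1) * Ring.multichoose e n) * hγ' -
    (Ring.multichoose e (n + 1) * Ring.multichoose γ n) * he'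

theorem CoeffAsymp.of_one_sub_X_mul_derivative {f g : ℝ⟦X⟧} {e γ G : ℝ} (he : 0 < e) (hγ : e < γ)
    (h : (1 - X) * d⁄dX ℝ f = C e * f + g) (hg : CoeffAsymp g γ G) :
    CoeffAsymp f γ (G / (γ - e)) := by
  have hγ0 : 0 < γ := he.trans hγ
  set T : ℕ → ℝ := fun n => Ring.multichoose γ n / Ring.multichoose e n
  set q : ℕ → ℝ := fun n => coeff n f / Ring.multichoose e n with hq
  have hTstep : ∀ n, T (n + 1) - T n =
      (γ - e) * Ring.multichoose γ n / ((n + 1) * Ring.multichoose e (n + 1)) :=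
    multichoose_div_succ_sub he
  have hqstep : ∀ n, q (n + 1) - q n = coeff n g / ((n + 1) * Ring.multichoose e (n + 1)) := by
    intro n
    have hrec := coeff_succ_of_one_sub_X_mul_derivative h n
    rw [map_add, coeff_C_mul] at hrec
    have he' := multichoose_succ_mul e n
    have h0 := (multichoose_pos he n).ne'
    have h1 := (multichoose_pos he (n + 1)).ne'
    rw [hq, div_sub_div _ _ h1 h0, div_eq_div_iff (by positivity) (by positivity)]
    linear_combination (Ring.multichoose e (n + 1) * Ring.multichoose e n) * hrec -
      (Ring.multichoose e (n + 1) * coeff n f) * he'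
  have hTmono : StrictMono T := strictMono_nat_of_lt_succ fun n => by
    have h1 := multichoose_pos he (n + 1)
    rw [← sub_pos, hTstep]
    exact div_pos (mul_pos (sub_pos.mpr hγ) (multichoose_pos hγ0 n)) (by positivity)
  have hTtop : Tendsto T atTop atTop := by
    have h0 := tendsto_multichoose_div_multichoose (Real.Gamma_pos_of_pos he).ne' hγ0 hγ
    refine (tendsto_inv_nhdsGT_zero.comp (tendsto_nhdsWithin_iff.mpr ⟨h0, .of_forall fun n =>
      div_pos (multichoose_pos he n) (multichoose_pos hγ0 n)⟩)).congr fun n => inv_div _ _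
  have hstep : Tendsto (fun n => (q (n + 1) - q n) / (T (n + 1) - T n)) atTop
      (𝓝 (G / (γ - e))) := by
    refine (Tendsto.div_const hg (γ - e)).congr fun n => ?_
    have h1 := (multichoose_pos he (n + 1)).ne'
    rw [hqstep, hTstep, div_div_div_cancel_right₀ (by positivity), div_div, mul_comm]
  refine (stolz_cesaro hTmono hTtop hstep).congr fun n => ?_
  exact div_div_div_cancel_right₀ (multichoose_pos he n).ne' _ _

end ODE

end CoeffAsymp

section EGF

variable {A : Type*} [CommRing A] [Algebra ℝ A]

/-- The exponential generating function `∑_{n ≥ 1} xₙ Xⁿ / n!` of a sequence indexed by the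
positive integers; the value `x 0` is ignored. -/
noncomputable def egf (x : ℕ → A) : A⟦X⟧ :=
  X * PowerSeries.mk fun n => ((n + 1).factorial : ℝ)⁻¹ • x (n + 1)

theorem constantCoeff_egf (x : ℕ → A) : constantCoeff (egf x) = 0 := by
  simp [egf]

theorem coeff_egf (x : ℕ → A) {n : ℕ} (hn : n ≠ 0) :
    coeff n (egf x) = (n.factorial : ℝ)⁻¹ • x n := by
  obtain ⟨n, rfl⟩ := Nat.exists_eq_succ_of_ne_zero hn
  rw [egf, coeff_succ_X_mul, coeff_mk]

end EGF

section Bell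

theorem X_pow_dvd_pow_sub_pow {A : Type*} [CommRing A] {f g : A⟦X⟧} {l : ℕ} (hf : X ∣ f)
    (hg : X ∣ g) (h : X ^ (l + 1) ∣ f - g) (j : ℕ) :
    X ^ (l + 1 + j) ∣ f ^ (j + 1) - g ^ (j + 1) := by
  rw [← Commute.geom_sum₂_mul (Commute.all f g), add_comm, pow_add]
  refine mul_dvd_mul (Finset.dvd_sum fun i hi => ?_) h
  have hi' : i + (j + 1 - 1 - i) = j := by have := mem_range.mp hi; omega
  conv_lhs => rw [← hi', pow_add]
  exact mul_dvd_mul (pow_dvd_pow_of_dvd hf i) (pow_dvd_pow_of_dvd hg _)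

theorem coeff_sum_C_mul_X_pow_pow {ι A : Type*} [Fintype ι] [DecidableEq ι] [CommRing A]
    (y : ι → A) (e : ι → ℕ) (j k : ℕ) :
    coeff k ((∑ i, C (y i) * X ^ e i) ^ j) =
      ∑ m ∈ (piAntidiag univ j).filter (fun m => ∑ i, e i * m i = k),
        (Nat.multinomial univ m : A) * ∏ i, y i ^ m i := by
  have hterm : ∀ m : ι → ℕ, (Nat.multinomial univ m : A⟦X⟧) * ∏ i, (C (y i) * X ^ e i) ^ m i =
      C (Nat.multinomial univ m * ∏ i, y i ^ m i) * X ^ ∑ i, e i * m i := fun m => by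
    simp only [mul_pow, Finset.prod_mul_distrib, ← pow_mul, Finset.prod_pow_eq_pow_sum, map_mul,
      map_prod, map_pow, map_natCast, mul_assoc]
  rw [Finset.sum_pow_eq_sum_piAntidiag, map_sum, Finset.sum_filter]
  refine Finset.sum_congr rfl fun m _ => ?_
  rw [hterm, coeff_C_mul_X_pow]
  simp only [eq_comm]

theorem bellPartial_eq_sum_multinomial (x : ℕ → ℝ) {j k : ℕ} (hjk : j ≤ k) :
    (j.factorial : ℝ) * bellPartial k j x = k.factorial *
      ∑ m ∈ (piAntidiag univ j).filter (fun m : Fin (k - j + 1) → ℕ =>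
          ∑ i : Fin (k - j + 1), ((i : ℕ) + 1) * m i = k),
        (Nat.multinomial univ m : ℝ) *
          ∏ i : Fin (k - j + 1), (((i + 1 : ℕ).factorial : ℝ)⁻¹ * x (i + 1)) ^ m i := by
  rw [bellPartial, Finset.mul_sum, Finset.mul_sum]
  refine Finset.sum_congr ?_ fun m hm => ?_
  · ext m
    simp only [mem_filter, mem_piAntidiag, Fintype.mem_piFinset, mem_range]
    refine ⟨fun ⟨_, h, hj⟩ => ⟨⟨hj, fun _ _ => mem_univ _⟩, h⟩,
      fun ⟨⟨hj, _⟩, h⟩ => ⟨fun i => ?_, h, hj⟩⟩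
    have hmi : m i ≤ ∑ i, m i := Finset.single_le_sum (fun _ _ => Nat.zero_le _) (mem_univ i)
    exact Nat.lt_succ_of_le ((hmi.trans_eq hj).trans hjk)
  · have hsum : ∑ i, m i = j := (mem_piAntidiag.mp (mem_filter.mp hm).1).1
    have hmult : (∏ i, ((m i).factorial : ℝ)) * Nat.multinomial univ m = j.factorial := by
      have h := Nat.multinomial_spec univ m
      rw [hsum] at h
      exact_mod_cast h
    have hne : (∏ i, ((m i).factorial : ℝ)) ≠ 0 := by positivity
    simp only [Finset.prod_div_distrib, Finset.prod_mul_distrib, mul_pow, inv_pow,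
      Finset.prod_inv_distrib, ← hmult]
    field_simp

theorem coeff_egf_pow (x : ℕ → ℝ) {j k : ℕ} (hj : 1 ≤ j) (hjk : j ≤ k) :
    k.factorial * coeff k (egf x ^ j) = j.factorial * bellPartial k j x := by
  set trunc : ℝ⟦X⟧ := ∑ i : Fin (k - j + 1), C (((i + 1 : ℕ).factorial : ℝ)⁻¹ * x (i + 1)) *
    X ^ (i + 1 : ℕ) with htrunc
  have htrunc_dvd : X ∣ trunc :=
    Finset.dvd_sum fun i _ => Dvd.dvd.mul_left (dvd_pow_self _ i.1.succ_ne_zero) _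
  have hsub : X ^ (k - j + 1 + 1) ∣ egf x - trunc := by
    refine X_pow_dvd_iff.mpr fun m hm => ?_
    rw [map_sub, sub_eq_zero, htrunc, map_sum]
    simp only [coeff_C_mul_X_pow]
    rcases m with _ | m
    · simp [constantCoeff_egf]
    · rw [Finset.sum_eq_single ⟨m, by omega⟩ (fun i _ hi => if_neg fun h =>
          hi (Fin.ext (Nat.succ_injective h).symm)) (fun h => absurd (mem_univ _) h), if_pos rfl,
        coeff_egf x m.succ_ne_zero, smul_eq_mul]
  have hpow := X_pow_dvd_pow_sub_pow (X_dvd_iff.mpr (constantCoeff_egf x)) htrunc_dvd hsub (j - 1)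
  rw [Nat.sub_add_cancel hj, show k - j + 1 + 1 + (j - 1) = k + 1 by omega] at hpow
  have hcoeff := X_pow_dvd_iff.mp hpow k k.lt_succ_self
  rw [map_sub, sub_eq_zero] at hcoeff
  rw [hcoeff, htrunc, coeff_sum_C_mul_X_pow_pow, bellPartial_eq_sum_multinomial x hjk]

end Bell

section Recursion

theorem prod_ite_val_lt {M : Type*} [CommMonoid M] {δ s : ℕ} (hs : s ≤ δ) (x y : Fin δ → M) :
    (∏ i : Fin δ, if (i : ℕ) < s then x i else y i) =
      (∏ i : Fin s, x (i.castLE hs)) * ∏ j ∈ univ.filter (fun j : Fin δ => s ≤ (j : ℕ)), y j := by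
  rw [Finset.prod_ite]
  congr 1
  · refine (Finset.prod_bij (fun i _ => i.castLE hs) (fun i _ => by simp)
      (fun i _ j _ h => by simpa using h) (fun j hj => ?_) fun _ _ => rfl).symm
    exact ⟨⟨j, (mem_filter.mp hj).2⟩, mem_univ _, rfl⟩
  · simp only [not_lt]

theorem prod_ite_val_lt_const {M : Type*} [CommMonoid M] {δ s : ℕ} (hs : s ≤ δ) (x y : M) :
    (∏ i : Fin δ, if (i : ℕ) < s then x else y) = x ^ s * y ^ (δ - s) := by
  have hlt : #{j : Fin δ | (j : ℕ) < s} = s := by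
    simpa [hs] using Fin.card_filter_val_lt (n := δ) (m := s)
  rw [Finset.prod_ite, Finset.prod_const, Finset.prod_const, hlt, ← Finset.compl_filter,
    Finset.card_compl, hlt, Fintype.card_fin]

theorem sum_castLE_le {δ s : ℕ} (hs : s ≤ δ) (f : Fin δ → ℕ) :
    ∑ i : Fin s, f (i.castLE hs) ≤ ∑ i, f i := by
  have h := Finset.sum_map univ (Fin.castLEEmb hs) f
  simp only [Fin.coe_castLEEmb] at h
  exact h ▸ Finset.sum_le_sum_of_subset (subset_univ _)

theorem coeff_prod_eq_sum_antidiagonalTuple {A : Type*} [CommRing A] {δ : ℕ} (F : Fin δ → A⟦X⟧)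
    (n : ℕ) : coeff n (∏ i, F i) =
      ∑ f ∈ Finset.Nat.antidiagonalTuple δ n, ∏ i, coeff (f i) (F i) := by
  rw [PowerSeries.coeff_prod]
  refine Finset.sum_nbij' (fun l => (l : Fin δ → ℕ)) Finsupp.equivFunOnFinite.symm
    (fun l hl => ?_) (fun f hf => ?_) (fun l _ => by ext; simp) (fun f _ => by ext; simp)
    fun _ _ => rfl
  · exact Finset.Nat.mem_antidiagonalTuple.mpr (mem_finsuppAntidiag.mp hl).1
  · simpa using Finset.Nat.mem_antidiagonalTuple.mp hf

variable {A : Type*} [CommRing A] [Algebra ℝ A]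

theorem coeff_prod_egf {δ : ℕ} (x : Fin δ → ℕ → A) (n : ℕ) :
    coeff n (∏ i, egf (x i)) =
      ∑ f ∈ (Finset.Nat.antidiagonalTuple δ n).filter (fun f => ∀ i, 1 ≤ f i),
        (∏ i, ((f i).factorial : ℝ))⁻¹ • ∏ i, x i (f i) := by
  rw [coeff_prod_eq_sum_antidiagonalTuple, Finset.sum_filter]
  refine Finset.sum_congr rfl fun f _ => ?_
  split_ifs with hf
  · rw [← Finset.prod_inv_distrib, ← Finset.prod_smul]
    exact Finset.prod_congr rfl fun i _ => coeff_egf _ (Nat.one_le_iff_ne_zero.mp (hf i))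
  · push Not at hf
    obtain ⟨i, hi⟩ := hf
    refine Finset.prod_eq_zero (mem_univ i) ?_
    rw [Nat.lt_one_iff.mp hi, coeff_zero_eq_constantCoeff_apply, constantCoeff_egf]

/-- The generating polynomial `∑ k, r n k * u ^ k` of the root-cluster sizes of trees with `n`
vertices, evaluated at an element `u` of an `ℝ`-algebra. -/
noncomputable def clusterSum (r : ℕ → ℕ → ℝ) (u : A) (n : ℕ) : A :=
  ∑ k ∈ Icc 1 n, r n k • u ^ k

variable {p : ℝ} {φ : ℕ → ℝ} {r : ℕ → ℕ → ℝ} {b : ℕ → ℝ}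

theorem clusterSum_one (h : clusterRec p φ r b) (n : ℕ) :
    clusterSum r (1 : A) n = algebraMap ℝ A (b n) := by
  simp only [clusterSum, one_pow, h.1, map_sum, Algebra.algebraMap_eq_smul_one]

theorem clusterRec_eq_zero_of_lt (h : clusterRec p φ r b) {n k : ℕ} (hn : 1 ≤ n) (hk : n < k) :
    r n k = 0 := by
  induction n using Nat.strong_induction_on generalizing k with
  | _ n ih =>
  rw [h.2 n k hn (hn.trans hk.le)]
  refine Finset.sum_eq_zero fun δ _ => Finset.sum_eq_zero fun s _ =>
    mul_eq_zero_of_right _ (Finset.sum_eq_zero fun f hf =>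
      mul_eq_zero_of_right _ (Finset.sum_eq_zero fun g hg => ?_))
  rw [mem_filter, Finset.Nat.mem_antidiagonalTuple] at hf hg
  have hs : s.1 ≤ δ := Nat.lt_succ_iff.mp (mem_range.mp s.2)
  obtain ⟨i, hi⟩ : ∃ i : Fin s.1, f (i.castLE hs) < g i := by
    by_contra! hle
    have hgf := (Finset.sum_le_sum fun i _ => hle i).trans (sum_castLE_le hs f)
    omega
  have hfi : f (i.castLE hs) ≤ n - 1 :=
    hf.1 ▸ Finset.single_le_sum (fun _ _ => Nat.zero_le _) (mem_univ _)
  rw [Finset.prod_eq_zero (mem_univ i) (ih _ (by omega) (hf.2 _) hi), mul_zero, zero_mul]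

theorem prod_clusterSum (hr : ∀ n k, 1 ≤ n → n < k → r n k = 0) (u : A) {s n : ℕ} {f : Fin s → ℕ}
    (hf : ∑ i, f i ≤ n) (hf1 : ∀ i, 1 ≤ f i) :
    ∏ i, clusterSum r u (f i) = ∑ k ∈ range (n + 1),
      (∑ g ∈ (Finset.Nat.antidiagonalTuple s k).filter (fun g => ∀ i, 1 ≤ g i),
        ∏ i, r (f i) (g i)) • u ^ k := by
  simp only [clusterSum, Finset.prod_univ_sum, Finset.sum_smul, Finset.prod_smul,
    Finset.prod_pow_eq_pow_sum]
  rw [Finset.sum_sigma']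
  symm
  refine Finset.sum_bij_ne_zero (fun x _ _ => x.2) ?_ ?_ ?_ ?_ <;>
    simp only [mem_sigma, mem_range, mem_filter, Finset.Nat.mem_antidiagonalTuple,
      Fintype.mem_piFinset, mem_Icc]
  · rintro ⟨k, g⟩ ⟨_, _, hg⟩ hne i
    refine ⟨hg i, not_lt.mp fun hlt => hne ?_⟩
    rw [Finset.prod_eq_zero (mem_univ i) (hr _ _ (hf1 i) hlt), zero_smul]
  · rintro ⟨k, g⟩ ⟨_, hk, _⟩ _ ⟨k', g'⟩ ⟨_, hk', _⟩ _ hg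
    exact Sigma.ext (hk.symm.trans (congrArg (∑ i, · i) hg |>.trans hk')) (heq_of_eq hg)
  · intro g hg hne
    have hsum := (Finset.sum_le_sum fun i _ => (hg i).2).trans hf
    exact ⟨⟨∑ i, g i, g⟩, ⟨Nat.lt_succ_of_le hsum, rfl, fun i => (hg i).1⟩, hne, rfl⟩
  · rintro ⟨k, g⟩ ⟨_, hk, _⟩ _
    rw [hk]

theorem coeff_egf_pow_mul_egf_pow (x y : ℕ → A) {s δ : ℕ} (hs : s ≤ δ) (n : ℕ) :
    coeff n (egf x ^ s * egf y ^ (δ - s)) =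
      ∑ f ∈ (Finset.Nat.antidiagonalTuple δ n).filter (fun f => ∀ i, 1 ≤ f i),
        (∏ i, ((f i).factorial : ℝ))⁻¹ •
          ((∏ i : Fin s, x (f (i.castLE hs))) *
            ∏ j ∈ univ.filter (fun j : Fin δ => s ≤ (j : ℕ)), y (f j)) := by
  have hprod : egf x ^ s * egf y ^ (δ - s) =
      ∏ i : Fin δ, egf (if (i : ℕ) < s then x else y) := by
    simp only [← prod_ite_val_lt_const hs, apply_ite egf]
  rw [hprod, coeff_prod_egf]
  refine Finset.sum_congr rfl fun f _ => ?_
  rw [← prod_ite_val_lt hs (fun i => x (f i)) fun i => y (f i)]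
  simp only [ite_apply]

theorem coeff_smul_add_smul_pow (h : clusterRec p φ r b) (u : A) (δ n : ℕ) :
    coeff n ((p • egf (clusterSum r u) + (1 - p) • egf (clusterSum r (1 : A))) ^ δ) =
      ∑ s ∈ (range (δ + 1)).attach,
        ∑ f ∈ (Finset.Nat.antidiagonalTuple δ n).filter (fun f => ∀ i, 1 ≤ f i),
          ∑ k ∈ range (n + 1),
            ∑ g ∈ (Finset.Nat.antidiagonalTuple s.1 k).filter (fun g => ∀ i, 1 ≤ g i),
              ((δ.choose s.1 : ℝ) * (p ^ s.1 * (1 - p) ^ (δ - s.1)) *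
                (∏ i, ((f i).factorial : ℝ))⁻¹ *
                ((∏ i : Fin s.1,
                  r (f (Fin.castLE (Nat.lt_succ_iff.mp (Finset.mem_range.mp s.2)) i)) (g i)) *
                ∏ j ∈ univ.filter (fun j : Fin δ => s.1 ≤ (j : ℕ)), b (f j))) • u ^ k := by
  rw [add_pow, map_sum, ← Finset.sum_attach]
  refine Finset.sum_congr rfl fun s _ => ?_
  have hs : s.1 ≤ δ := Nat.lt_succ_iff.mp (mem_range.mp s.2)
  rw [smul_pow, smul_pow, smul_mul_smul_comm, mul_comm, ← nsmul_eq_mul, ← Nat.cast_smul_eq_nsmul ℝ,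
    smul_smul, coeff_smul, coeff_egf_pow_mul_egf_pow _ _ hs, Finset.smul_sum]
  refine Finset.sum_congr rfl fun f hf => ?_
  rw [mem_filter, Finset.Nat.mem_antidiagonalTuple] at hf
  rw [prod_clusterSum (fun _ _ => clusterRec_eq_zero_of_lt h) u
    ((sum_castLE_le hs f).trans_eq hf.1) fun i => hf.2 _]
  simp only [clusterSum_one h, ← map_prod, Finset.sum_smul, Finset.smul_sum,
    ← Algebra.commutes (R := ℝ), ← Algebra.smul_def, smul_smul]
  refine Finset.sum_congr rfl fun k _ => Finset.sum_congr rfl fun g _ => ?_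
  ring_nf

theorem clusterSum_succ (h : clusterRec p φ r b) (u : A) (n : ℕ) :
    clusterSum r u (n + 1) = u * ∑ δ ∈ range (n + 1), (φ δ / δ.factorial * n.factorial) •
      coeff n ((p • egf (clusterSum r u) + (1 - p) • egf (clusterSum r (1 : A))) ^ δ) := by
  have hshift : clusterSum r u (n + 1) = ∑ k ∈ range (n + 1), r (n + 1) (k + 1) • u ^ (k + 1) := by
    rw [clusterSum, range_eq_Ico, Finset.sum_Ico_add' (fun k => r (n + 1) k • u ^ k) 0 (n + 1) 1]
    rfl
  have hrec := fun k => h.2 (n + 1) (k + 1) (Nat.le_add_left 1 n) (Nat.le_add_left 1 k)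
  rw [hshift]
  simp only [coeff_smul_add_smul_pow h, hrec, Nat.add_sub_cancel,
    Finset.mul_sum, Finset.sum_smul, Finset.smul_sum]
  rw [Finset.sum_comm]
  refine Finset.sum_congr rfl fun δ _ => ?_
  rw [Finset.sum_comm]
  refine Finset.sum_congr rfl fun s _ => ?_
  rw [Finset.sum_comm]
  refine Finset.sum_congr rfl fun f _ => Finset.sum_congr rfl fun k _ =>
    Finset.sum_congr rfl fun g _ => ?_
  rw [smul_smul, mul_smul_comm, ← pow_succ']
  congr 1
  ring

theorem derivative_egf_clusterSum (h : clusterRec p φ r b) (u : A) :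
    d⁄dX A (egf (clusterSum r u)) = C u * (PowerSeries.mk fun δ => φ δ / δ.factorial).subst
      (p • egf (clusterSum r u) + (1 - p) • egf (clusterSum r (1 : A))) := by
  have h0 :
      constantCoeff (p • egf (clusterSum r u) + (1 - p) • egf (clusterSum r (1 : A))) = 0 := by
    simp [constantCoeff_egf]
  ext n
  have hcast : (n : A) + 1 = algebraMap ℝ A (n + 1) := by simp
  rw [coeff_C_mul, coeff_subst_eq_sum_range _ h0 n.lt_succ_self, coeff_derivative,
    coeff_egf _ n.succ_ne_zero, clusterSum_succ h]
  simp only [coeff_mk, hcast, ← Algebra.commutes, ← Algebra.smul_def, smul_smul, Finset.smul_sum,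
    Finset.mul_sum, mul_smul_comm]
  refine Finset.sum_congr rfl fun δ _ => ?_
  congr 1
  rw [Nat.factorial_succ]
  push_cast
  field_simp

end Recursion

section ClusterSeries

theorem derivative_rescale {A : Type*} [CommRing A] (c : A) (f : A⟦X⟧) :
    d⁄dX A (rescale c f) = C c * rescale c (d⁄dX A f) := by
  ext n
  rw [coeff_C_mul, coeff_derivative, coeff_rescale, coeff_rescale, coeff_derivative]
  ring

theorem rescale_subst {A B : Type*} [CommRing A] [CommRing B] [Algebra B A] (c : A) (f : B⟦X⟧)
    {W : A⟦X⟧} (hW : constantCoeff W = 0) : rescale c (f.subst W) = f.subst (rescale c W) := by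
  have hcW : constantCoeff (rescale c W) = 0 := by
    rw [← coeff_zero_eq_constantCoeff_apply, coeff_rescale, coeff_zero_eq_constantCoeff_apply, hW,
      mul_zero]
  ext n
  rw [coeff_rescale, coeff_subst_eq_sum_range _ hW n.lt_succ_self,
    coeff_subst_eq_sum_range _ hcW n.lt_succ_self, Finset.mul_sum]
  refine Finset.sum_congr rfl fun d _ => ?_
  rw [← map_pow, coeff_rescale, mul_smul_comm]

variable {A : Type*} [CommRing A] [Algebra ℝ A]

variable (A) in
theorem isAddTorsionFree_of_algebra_real : IsAddTorsionFree A :=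
  letI : Module ℚ A := Module.compHom A (algebraMap ℚ ℝ)
  .of_module_rat A

/-- The bivariate generating function `∑ n, ρₙ(u) (β x)ⁿ / n!` of the root-cluster weights, where
`ρₙ(u) = ∑ k, r n k * u ^ k`. The factor `β` normalises the radius of convergence to one. -/
noncomputable def clusterSeries (r : ℕ → ℕ → ℝ) (β : ℝ) (u : A) : A⟦X⟧ :=
  rescale (algebraMap ℝ A β) (egf (clusterSum r u))

theorem coeff_clusterSeries (r : ℕ → ℕ → ℝ) (β : ℝ) (u : A) {n : ℕ} (hn : n ≠ 0) :
    coeff n (clusterSeries r β u) = (β ^ n / n.factorial) • clusterSum r u n := by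
  rw [clusterSeries, coeff_rescale, coeff_egf _ hn, ← map_pow, ← Algebra.smul_def, smul_smul,
    div_eq_mul_inv]

theorem constantCoeff_clusterSeries (r : ℕ → ℕ → ℝ) (β : ℝ) (u : A) :
    constantCoeff (clusterSeries r β u) = 0 := by
  rw [clusterSeries, ← coeff_zero_eq_constantCoeff_apply, coeff_rescale,
    coeff_zero_eq_constantCoeff_apply, constantCoeff_egf, mul_zero]

variable {a p β : ℝ} {φ : ℕ → ℝ} {r : ℕ → ℕ → ℝ} {b : ℕ → ℝ}

theorem derivative_clusterSeries (h : clusterRec p φ r b)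
    (hφ : ∀ δ, φ δ / δ.factorial = Ring.multichoose a δ) (β : ℝ) (u : A) :
    d⁄dX A (clusterSeries r β u) = β • (C u * binomialPow
      (1 - (p • clusterSeries r β u + (1 - p) • clusterSeries r β (1 : A))) (-a)) := by
  have hsmul (c : ℝ) (f : A⟦X⟧) :
      c • rescale (algebraMap ℝ A β) f = rescale (algebraMap ℝ A β) (c • f) := by
    ext n
    simp only [coeff_smul, coeff_rescale, mul_smul_comm]
  have hC : rescale (algebraMap ℝ A β) (C u) = C u := by
    ext n
    cases n <;> simp [coeff_C]
  have h0 :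
      constantCoeff (p • egf (clusterSum r u) + (1 - p) • egf (clusterSum r (1 : A))) = 0 := by
    simp [constantCoeff_egf]
  have hcluster := constantCoeff_clusterSeries (A := A) r β
  simp only [clusterSeries] at hcluster ⊢
  rw [derivative_rescale, derivative_egf_clusterSum h, map_mul, rescale_subst _ _ h0, map_add,
    ← hsmul, ← hsmul, ← subst_mk_multichoose (by simp [hcluster])]
  simp only [hφ, hC, Algebra.smul_def, PowerSeries.algebraMap_apply]

theorem one_sub_clusterSeries_one (h : clusterRec p φ r b)
    (hφ : ∀ δ, φ δ / δ.factorial = Ring.multichoose a δ) (hβ : (a + 1) * β = 1) :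
    1 - clusterSeries r β (1 : A) = binomialPow (1 - X) β := by
  have := isAddTorsionFree_of_algebra_real A
  set B := clusterSeries r β (1 : A) with hB
  have hB1 : constantCoeff (1 - B) = 1 := by simp [hB, constantCoeff_clusterSeries]
  have hBode : d⁄dX A (1 - B) = -(β • binomialPow (1 - B) (-a)) := by
    rw [map_sub, derivative_one, zero_sub, hB, derivative_clusterSeries h hφ, ← hB, ← add_smul,
      add_sub_cancel, one_smul, map_one, one_mul]
  have hpow : binomialPow (1 - B) (a + 1) = 1 - X := by
    refine derivative.ext ?_ ?_
    · rw [derivative_binomialPow hB1, hBode, add_sub_cancel_right, mul_neg, mul_smul_comm,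
        binomialPow_mul_binomialPow_neg hB1, smul_neg, smul_smul, hβ, one_smul, map_sub,
        derivative_one, derivative_X, zero_sub]
    · simp [constantCoeff_binomialPow hB1]
  rw [← hpow, binomialPow_binomialPow hB1, hβ, binomialPow_one hB1]

theorem one_sub_X_mul_derivative_clusterSeries_sub (h : clusterRec p φ r b)
    (hφ : ∀ δ, φ δ / δ.factorial = Ring.multichoose a δ) (hβ : (a + 1) * β = 1) (u : A)
    {S V : A⟦X⟧} (hS : S = clusterSeries r β u - clusterSeries r β (1 : A))
    (hV : V = binomialPow (1 - X) (-β) * S) :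
    (1 - X) * d⁄dX A S = β • (binomialPow (1 - X) β *
      (C u * binomialPow (1 - p • V) (-a) - 1)) := by
  have := isAddTorsionFree_of_algebra_real A
  have hX1 : constantCoeff (1 - X : A⟦X⟧) = 1 := by simp
  have hV0 : constantCoeff V = 0 := by simp [hV, hS, constantCoeff_clusterSeries]
  have hpV1 : constantCoeff (1 - p • V) = 1 := by simp [hV0]
  have hB : clusterSeries r β (1 : A) = 1 - binomialPow (1 - X) β := by
    rw [← one_sub_clusterSeries_one h hφ hβ, sub_sub_cancel]
  have hfac : 1 - (p • clusterSeries r β u + (1 - p) • clusterSeries r β (1 : A)) =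
      binomialPow (1 - X) β * (1 - p • V) := by
    have hRV : S = binomialPow (1 - X) β * V := by
      rw [hV, ← mul_assoc, binomialPow_mul_binomialPow_neg hX1, one_mul]
    rw [mul_sub, mul_one, mul_smul_comm, ← hRV, hS, ← one_sub_clusterSeries_one h hφ hβ]
    module
  have hexp : (1 - X) * binomialPow (1 - X : A⟦X⟧) (β * -a) = binomialPow (1 - X) β := by
    nth_rw 1 [← binomialPow_one (R := ℝ) hX1]
    rw [← binomialPow_add hX1]
    congr 1
    linarith
  have hB1 : (1 - X) * d⁄dX A (clusterSeries r β (1 : A)) = β • binomialPow (1 - X) β := by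
    rw [hB, map_sub, derivative_one, zero_sub, mul_neg, one_sub_X_mul_derivative_binomialPow,
      neg_neg]
  have hR : (1 - X) * d⁄dX A (clusterSeries r β u) =
      β • (C u * binomialPow (1 - X) β * binomialPow (1 - p • V) (-a)) := by
    rw [derivative_clusterSeries h hφ, hfac, mul_binomialPow (constantCoeff_binomialPow hX1 β) hpV1,
      binomialPow_binomialPow hX1, ← hexp, mul_smul_comm]
    congr 1
    ring
  rw [hS, map_sub, mul_sub, hB1, hR, ← smul_sub]
  congr 1
  ring

end ClusterSeries

section SwapVars

variable {R : Type*} [CommRing R]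

/-- The ring endomorphism exchanging the two variables of a power series in two variables, viewed
as a power series over a power series ring. -/
noncomputable def swapVars : R⟦X⟧⟦X⟧ →+* R⟦X⟧⟦X⟧ where
  toFun f := PowerSeries.mk fun k => PowerSeries.mk fun n => coeff k (coeff n f)
  map_one' := by
    ext k n
    rcases eq_or_ne k 0 with rfl | hk <;> rcases eq_or_ne n 0 with rfl | hn <;>
      simp [coeff_one, *]
  map_zero' := by ext; simp
  map_add' f g := by ext; simp
  map_mul' f g := by
    ext k n
    simp only [coeff_mk, coeff_mul, map_sum]
    rw [Finset.sum_comm]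

theorem coeff_coeff_swapVars (f : R⟦X⟧⟦X⟧) (k n : ℕ) :
    coeff n (coeff k (swapVars f)) = coeff k (coeff n f) := by
  simp [swapVars]

theorem coeff_swapVars_derivative (f : R⟦X⟧⟦X⟧) (k : ℕ) :
    coeff k (swapVars (d⁄dX R⟦X⟧ f)) = d⁄dX R (coeff k (swapVars f)) := by
  ext n
  have hn : (n : R⟦X⟧) + 1 = C ((n : R) + 1) := by simp
  rw [coeff_derivative, coeff_coeff_swapVars, coeff_coeff_swapVars, coeff_derivative, hn,
    coeff_mul_C]

theorem swapVars_map_C (g : R⟦X⟧) : swapVars (map C g) = C g := by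
  ext k n
  rw [coeff_coeff_swapVars, coeff_map, coeff_C, coeff_C]
  split_ifs <;> simp

theorem swapVars_C (u : R⟦X⟧) : swapVars (C u) = map C u := by
  ext k n
  rw [coeff_coeff_swapVars, coeff_map, coeff_C, coeff_C]
  split_ifs <;> simp

variable {S : Type*} [CommRing S] [Algebra S R]

theorem swapVars_smul (s : S) (f : R⟦X⟧⟦X⟧) : swapVars (s • f) = s • swapVars f := by
  ext k n
  simp only [coeff_coeff_swapVars, coeff_smul]

variable [BinomialRing S]

theorem swapVars_binomialPow_one_sub_X (s : S) :
    swapVars (binomialPow (1 - X : R⟦X⟧⟦X⟧) s) = C (binomialPow (1 - X : R⟦X⟧) s) := by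
  rw [← swapVars_map_C]
  congr 1
  ext1 n
  rw [← neg_neg s, coeff_map, coeff_one_sub_X_binomialPow, coeff_one_sub_X_binomialPow,
    PowerSeries.algebraMap_apply]

theorem swapVars_binomialPow_one_sub {W : R⟦X⟧⟦X⟧} (hW : constantCoeff W = 0)
    (hsW : constantCoeff (swapVars W) = 0) (s : S) :
    swapVars (binomialPow (1 - W) (-s)) = binomialPow (1 - swapVars W) (-s) := by
  ext k n
  rw [coeff_coeff_swapVars, coeff_one_sub_binomialPow hW s (N := n + k + 1) (by omega),
    coeff_one_sub_binomialPow hsW s (N := n + k + 1) (by omega)]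
  simp only [map_sum, coeff_smul, ← map_pow, coeff_coeff_swapVars]

end SwapVars

section GradedAsymp

/-- `GradedAsymp θ σ N F f` says that the coefficients `Fᵢ(x)` of `F = ∑ Fᵢ(x) tⁱ` satisfy
`Fᵢ(x) ∼ fᵢ (1 - x)^(-(i θ - σ))` on the level of coefficients for `1 ≤ i < N`, where
`f = ∑ fᵢ tⁱ`, and that both series have no term of degree zero in `t`. -/
structure GradedAsymp (θ σ : ℝ) (N : ℕ) (F : ℝ⟦X⟧⟦X⟧) (f : ℝ⟦X⟧) : Prop where
  constantCoeff_left : constantCoeff F = 0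
  constantCoeff_right : constantCoeff f = 0
  coeffAsymp : ∀ i, 1 ≤ i → i < N → CoeffAsymp (coeff i F) (i * θ - σ) (coeff i f)

namespace GradedAsymp

variable {θ σ τ : ℝ} {N M : ℕ} {F G : ℝ⟦X⟧⟦X⟧} {f g : ℝ⟦X⟧}

theorem mono (hF : GradedAsymp θ σ N F f) (h : M ≤ N) : GradedAsymp θ σ M F f :=
  ⟨hF.1, hF.2, fun i hi hiM => hF.3 i hi (hiM.trans_le h)⟩

theorem mul (hθ : 0 < θ) (hσ : σ < θ) (hF : GradedAsymp θ σ N F f) (hG : GradedAsymp θ 0 N G g) :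
    GradedAsymp θ σ (N + 1) (F * G) (f * g) := by
  refine ⟨by rw [map_mul, hF.1, zero_mul], by rw [map_mul, hF.2, zero_mul], fun m _ hm => ?_⟩
  rw [coeff_mul, coeff_mul]
  refine CoeffAsymp.sum fun ij hij => ?_
  have hadd : ij.1 + ij.2 = m := mem_antidiagonal.mp hij
  rcases Nat.eq_zero_or_pos ij.1 with hi | hi
  · simp [hi, hF.1, hF.2, CoeffAsymp]
  rcases Nat.eq_zero_or_pos ij.2 with hj | hj
  · simp [hj, hG.1, hG.2, CoeffAsymp]
  have hi' : (1 : ℝ) ≤ ij.1 := by exact_mod_cast hi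
  have hj' : (0 : ℝ) < ij.2 := by exact_mod_cast hj
  have hexp : (m : ℝ) * θ - σ = (ij.1 * θ - σ) + (ij.2 * θ - 0) := by
    rw [← hadd]
    push_cast
    ring
  rw [hexp]
  exact CoeffAsymp.mul (by nlinarith) (by simpa using mul_pos hj' hθ)
    (hF.3 _ hi (by omega)) (hG.3 _ hj (by omega))

theorem C_binomialPow_mul (hσ : σ < θ) (hτ : 0 < τ) (hθ : 0 < θ) (hF : GradedAsymp θ σ N F f) :
    GradedAsymp θ (σ - τ) N (C (binomialPow (1 - X) (-τ)) * F) f := by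
  refine ⟨by rw [map_mul, hF.1, mul_zero], hF.2, fun i hi hiN => ?_⟩
  have hi' : (1 : ℝ) ≤ i := by exact_mod_cast hi
  rw [coeff_C_mul, ← one_mul (coeff i f), show (i : ℝ) * θ - (σ - τ) = τ + (i * θ - σ) by ring]
  exact (coeffAsymp_binomialPow hτ).mul hτ (by nlinarith) (hF.3 i hi hiN)

theorem mul_pow (hθ : 0 < θ) (hσ : σ < θ) (hF : GradedAsymp θ σ N F f)
    (hG : GradedAsymp θ 0 N G g) (d : ℕ) : GradedAsymp θ σ N (F * G ^ d) (f * g ^ d) := by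
  induction d with
  | zero => simpa using hF
  | succ d ih =>
    simpa only [pow_succ, ← mul_assoc] using (ih.mul hθ hσ hG).mono N.le_succ

theorem C_mul_renormalized_pow (hσ : 0 < σ) (hσθ : σ < θ) (hF : GradedAsymp θ σ N F f) (d : ℕ) :
    GradedAsymp θ σ N (C (binomialPow (1 - X) σ) *
      (C (binomialPow (1 - X) (-σ)) * F) ^ (d + 1)) (f ^ (d + 1)) := by
  have hX1 : constantCoeff (1 - X : ℝ⟦X⟧) = 1 := by simp
  have hV := hF.C_binomialPow_mul hσθ hσ (hσ.trans hσθ)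
  rw [sub_self] at hV
  rw [pow_succ', ← mul_assoc, ← mul_assoc, ← map_mul, binomialPow_mul_binomialPow_neg hX1, map_one,
    one_mul, pow_succ']
  exact hF.mul_pow (hσ.trans hσθ) hσθ hV d

theorem C_mul_renormalized_pow_add_two (hσ : 0 < σ) (hσθ : σ < θ) (hF : GradedAsymp θ σ N F f)
    (d : ℕ) : GradedAsymp θ σ (N + 1) (C (binomialPow (1 - X) σ) *
      (C (binomialPow (1 - X) (-σ)) * F) ^ (d + 2)) (f ^ (d + 2)) := by
  have hV := hF.C_binomialPow_mul hσθ hσ (hσ.trans hσθ)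
  rw [sub_self] at hV
  rw [pow_succ _ (d + 1), ← mul_assoc, pow_succ f]
  exact (hF.C_mul_renormalized_pow hσ hσθ d).mul (hσ.trans hσθ) hσθ hV

theorem coeffAsymp_mul_coeff_renormalized_pow_of_lt (hσ : 0 < σ) (hσθ : σ < θ)
    (hΓ : Real.Gamma (-σ) ≠ 0) (hF : GradedAsymp θ σ N F f) {m : ℕ} (hm : m < N) (d : ℕ) :
    CoeffAsymp (binomialPow (1 - X) σ * coeff m ((C (binomialPow (1 - X) (-σ)) * F) ^ d))
      (N * θ - σ) 0 := by
  have hmN : (m : ℝ) + 1 ≤ N := by exact_mod_cast hm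
  have hm0 : (0 : ℝ) ≤ m := m.cast_nonneg
  rcases Nat.eq_zero_or_pos m with rfl | hm1
  · rcases d with _ | d
    · have hE := coeffAsymp_binomialPow_of_lt (δ := N * θ - σ) hΓ (by nlinarith) (by nlinarith)
      simpa using hE
    · simp [hF.1, CoeffAsymp]
  · have hm1' : (1 : ℝ) ≤ m := by exact_mod_cast hm1
    rcases d with _ | d
    · simp [coeff_one, hm1.ne', CoeffAsymp]
    · rw [← coeff_C_mul]
      exact ((hF.C_mul_renormalized_pow hσ hσθ d).3 m hm1 hm).of_lt (by nlinarith) (by nlinarith)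

end GradedAsymp

end GradedAsymp

section MomentODE

theorem coeff_map_C_mul_binomialPow {R : Type*} [CommRing R] [BinomialRing R] {u : R⟦X⟧}
    {v : R⟦X⟧⟦X⟧} (hv : constantCoeff v = 0) (a p : R) (k : ℕ) :
    coeff k (map C u * binomialPow (1 - p • v) (-a)) =
      ∑ m ∈ range (k + 1), ∑ d ∈ range (m + 1),
        C (coeff (k - m) u * (Ring.multichoose a d * p ^ d)) * coeff m (v ^ d) := by
  have hpv : constantCoeff (p • v) = 0 := by simp [hv]
  rw [mul_comm, coeff_mul, Finset.Nat.sum_antidiagonal_eq_sum_range_succ_mk]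
  refine Finset.sum_congr rfl fun m _ => ?_
  rw [coeff_one_sub_binomialPow hpv a m.lt_succ_self, coeff_map, Finset.sum_mul]
  refine Finset.sum_congr rfl fun d _ => ?_
  rw [smul_pow, coeff_smul, smul_smul, smul_eq_C_mul, map_mul C (coeff (k - m) u)]
  ring

theorem coeff_map_C_mul_binomialPow_eq_add {R : Type*} [CommRing R] [BinomialRing R] {u : R⟦X⟧}
    (hu : constantCoeff u = 1) {v : R⟦X⟧⟦X⟧} (hv : constantCoeff v = 0) (a p : R) {k : ℕ}
    (hk : k ≠ 0) :
    coeff k (map C u * binomialPow (1 - p • v) (-a)) =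
      C (a * p) * coeff k v +
      (∑ d ∈ Icc 2 k, C (Ring.multichoose a d * p ^ d) * coeff k (v ^ d) +
        ∑ m ∈ range k, ∑ d ∈ range (m + 1),
          C (coeff (k - m) u * (Ring.multichoose a d * p ^ d)) * coeff m (v ^ d)) := by
  have hsplit (x : ℕ → R⟦X⟧) : ∑ d ∈ range (k + 1), x d = x 0 + (x 1 + ∑ d ∈ Icc 2 k, x d) := by
    rw [range_eq_Ico, Finset.sum_eq_sum_Ico_succ_bot k.succ_pos,
      Finset.sum_eq_sum_Ico_succ_bot (by lia)]
    rfl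
  rw [coeff_map_C_mul_binomialPow hv, Finset.sum_range_succ, tsub_self,
    coeff_zero_eq_constantCoeff_apply, hu, hsplit]
  simp only [one_mul, pow_zero, coeff_one, if_neg hk, mul_zero, zero_add, pow_one,
    Ring.multichoose_one_right]
  ring

/-- The hierarchy of linear differential equations satisfied by the coefficients `sₖ(x)` of the
centred moment generating function `s = ∑ sₖ(x) tᵏ`: the `k`-th one is the coefficient of `tᵏ` in
`(1 - x) ∂ₓs = β ((1 - x)^β u(t) (1 - p (1 - x)^(-β) s)^(-a) - (1 - x)^β)`. -/
structure MomentODE (a p β : ℝ) (u : ℝ⟦X⟧) (s : ℝ⟦X⟧⟦X⟧) : Prop where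
  constantCoeff_eq_zero : constantCoeff s = 0
  one_sub_X_mul_derivative : ∀ k ≠ 0, (1 - X) * d⁄dX ℝ (coeff k s) =
    C β * (binomialPow (1 - X) β * coeff k (map C u *
      binomialPow (1 - p • (C (binomialPow (1 - X) (-β)) * s)) (-a)))

namespace MomentODE

variable {a p β θ : ℝ} {u f : ℝ⟦X⟧} {s : ℝ⟦X⟧⟦X⟧}

theorem one_sub_X_mul_derivative_eq_add (h : MomentODE a p β u s) (hu : constantCoeff u = 1)
    (hθ : θ = β * a * p + β) {k : ℕ} (hk : k ≠ 0) :
    (1 - X) * d⁄dX ℝ (coeff k s) = C (θ - β) * coeff k s + C β *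
      (∑ d ∈ Icc 2 k, C (Ring.multichoose a d * p ^ d) * (binomialPow (1 - X) β *
          coeff k ((C (binomialPow (1 - X) (-β)) * s) ^ d)) +
        ∑ m ∈ range k, ∑ d ∈ range (m + 1), C (coeff (k - m) u * (Ring.multichoose a d * p ^ d)) *
          (binomialPow (1 - X) β * coeff m ((C (binomialPow (1 - X) (-β)) * s) ^ d))) := by
  have hX1 : constantCoeff (1 - X : ℝ⟦X⟧) = 1 := by simp
  have hv0 : constantCoeff (C (binomialPow (1 - X : ℝ⟦X⟧) (-β)) * s) = 0 := by
    rw [map_mul, h.constantCoeff_eq_zero, mul_zero]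
  have hθβ : (C (θ - β) : ℝ⟦X⟧) = C β * C (a * p) := by
    rw [← map_mul, hθ]
    congr 1
    ring
  have hEv : binomialPow (1 - X) β * coeff k (C (binomialPow (1 - X) (-β)) * s) = coeff k s := by
    rw [coeff_C_mul, ← mul_assoc, binomialPow_mul_binomialPow_neg hX1, one_mul]
  rw [h.one_sub_X_mul_derivative k hk, coeff_map_C_mul_binomialPow_eq_add hu hv0 a p hk, hθβ]
  simp only [mul_left_comm (C _) (binomialPow (1 - X : ℝ⟦X⟧) β), ← Finset.mul_sum]
  linear_combination C β * C (a * p) * hEv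

theorem coeff_one_eq (h : MomentODE a p β u s) (hu : constantCoeff u = 1)
    (hθ : θ = β * a * p + β) (hθ0 : θ ≠ 0) (hs : constantCoeff (coeff 1 s) = 0) :
    coeff 1 s = C (β * coeff 1 u / θ) *
      (binomialPow (1 - X) (-(θ - β)) + C (-1) * binomialPow (1 - X) (-(-β))) := by
  have hode := h.one_sub_X_mul_derivative_eq_add hu hθ one_ne_zero
  have hE := one_sub_X_mul_derivative_binomialPow (A := ℝ) β
  set c := β * coeff 1 u / θ with hc
  have hcθ : (C β * C (coeff 1 u) : ℝ⟦X⟧) = C c * (C (θ - β) + C β) := by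
    rw [← map_mul, ← map_add, ← map_mul, hc]
    congr 1
    field_simp
    ring
  have hhom : (1 - X) * d⁄dX ℝ (coeff 1 s + C c * binomialPow (1 - X) β) =
      (θ - β) • (coeff 1 s + C c * binomialPow (1 - X) β) := by
    simp only [Nat.one_lt_two, Icc_eq_empty_of_lt, sum_empty, zero_add, range_one, sum_singleton,
      tsub_zero, pow_zero, Ring.multichoose_zero_right, mul_one, coeff_zero_one] at hode
    rw [smul_eq_C_mul] at hE ⊢
    rw [map_add, Derivation.leibniz, derivative_C, smul_zero, add_zero, smul_eq_mul]
    linear_combination hode + C c * hE + binomialPow (1 - X) β * hcθ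
  have hsol := eq_C_mul_binomialPow_of_one_sub_X_mul_derivative hhom
  have hX1 : constantCoeff (1 - X : ℝ⟦X⟧) = 1 := by simp
  rw [map_add, hs, map_mul, constantCoeff_C, constantCoeff_binomialPow hX1, zero_add,
    mul_one] at hsol
  rw [neg_neg, map_neg, map_one]
  linear_combination hsol

theorem coeffAsymp_coeff_one (h : MomentODE a p β u s) (hu : constantCoeff u = 1)
    (hθ : θ = β * a * p + β) (hβ : 0 < β) (hβθ : β < θ) (hΓ : Real.Gamma (-β) ≠ 0)
    (hs : constantCoeff (coeff 1 s) = 0) : CoeffAsymp (coeff 1 s) (θ - β) (β * coeff 1 u / θ) := by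
  have hlow := coeffAsymp_binomialPow_of_lt (δ := θ - β) hΓ (by linarith) (by linarith)
  rw [h.coeff_one_eq hu hθ (hβ.trans hβθ).ne' hs]
  simpa using ((coeffAsymp_binomialPow (sub_pos.mpr hβθ)).add (hlow.C_mul (-1))).C_mul
    (β * coeff 1 u / θ)

theorem coeffAsymp_coeff (h : MomentODE a p β u s) (hu : constantCoeff u = 1)
    (hθ : θ = β * a * p + β) (hβ : 0 < β) (hβθ : β < θ) (hΓ : Real.Gamma (-β) ≠ 0) {k : ℕ}
    (hk : 2 ≤ k) (hsf : GradedAsymp θ β k s f) :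
    CoeffAsymp (coeff k s) (k * θ - β)
      (β * (∑ d ∈ Icc 2 k, Ring.multichoose a d * p ^ d * coeff k (f ^ d)) / ((k - 1) * θ)) := by
  have hk' : (2 : ℝ) ≤ k := by exact_mod_cast hk
  have hpow : ∀ d ∈ Icc 2 k, CoeffAsymp (binomialPow (1 - X) β *
      coeff k ((C (binomialPow (1 - X) (-β)) * s) ^ d)) (k * θ - β) (coeff k (f ^ d)) := by
    intro d hd
    obtain ⟨e, rfl⟩ := Nat.exists_eq_add_of_le' (mem_Icc.mp hd).1
    rw [← coeff_C_mul]
    exact (hsf.C_mul_renormalized_pow_add_two hβ hβθ e).3 k (by lia) k.lt_succ_self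
  have hlead := CoeffAsymp.sum fun d hd => (hpow d hd).C_mul (Ring.multichoose a d * p ^ d)
  have hlow := CoeffAsymp.sum (S := range k) fun m hm => CoeffAsymp.sum (S := range (m + 1))
    fun d _ => (hsf.coeffAsymp_mul_coeff_renormalized_pow_of_lt hβ hβθ hΓ (mem_range.mp hm) d).C_mul
      (coeff (k - m) u * (Ring.multichoose a d * p ^ d))
  have hinhom := (hlead.add hlow).C_mul β
  simp only [mul_zero, Finset.sum_const_zero, add_zero] at hinhom
  convert hinhom.of_one_sub_X_mul_derivative (sub_pos.mpr hβθ) (by nlinarith)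
    (h.one_sub_X_mul_derivative_eq_add hu hθ (by lia)) using 2
  ring

theorem gradedAsymp (h : MomentODE a p β u s) (hu : constantCoeff u = 1)
    (hθ : θ = β * a * p + β) (hβ : 0 < β) (hβθ : β < θ) (hΓ : Real.Gamma (-β) ≠ 0)
    (hs : constantCoeff (coeff 1 s) = 0) (hf0 : constantCoeff f = 0)
    (hf1 : coeff 1 f = β * coeff 1 u / θ)
    (hf : ∀ k : ℕ, 2 ≤ k → (k - 1) * θ * coeff k f =
      β * ∑ d ∈ Icc 2 k, Ring.multichoose a d * p ^ d * coeff k (f ^ d)) (N : ℕ) :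
    GradedAsymp θ β N s f := by
  induction N with
  | zero => exact ⟨h.constantCoeff_eq_zero, hf0, fun i _ hi => absurd hi i.not_lt_zero⟩
  | succ N ih =>
    refine ⟨h.constantCoeff_eq_zero, hf0, fun k hk hkN => ?_⟩
    rcases hk.eq_or_lt with rfl | hk2
    · rw [hf1, Nat.cast_one, one_mul]
      exact h.coeffAsymp_coeff_one hu hθ hβ hβθ hΓ hs
    · have hk2' : (2 : ℝ) ≤ k := by exact_mod_cast hk2
      have hden : ((k : ℝ) - 1) * θ ≠ 0 := mul_ne_zero (by linarith) (hβ.trans hβθ).ne'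
      rw [← mul_div_cancel_left₀ (coeff k f) hden, hf k hk2]
      exact h.coeffAsymp_coeff hu hθ hβ hβθ hΓ hk2 (ih.mono (Nat.lt_succ_iff.mp hkN))

end MomentODE

end MomentODE

section Moments

theorem coeff_clusterSum_exp (r : ℕ → ℕ → ℝ) (n k : ℕ) :
    coeff k (clusterSum r (exp ℝ) n) = (∑ j ∈ Icc 1 n, (j : ℝ) ^ k * r n j) / k.factorial := by
  rw [clusterSum, map_sum, Finset.sum_div]
  refine Finset.sum_congr rfl fun j _ => ?_
  rw [coeff_smul, exp_pow_eq_rescale_exp, coeff_rescale, coeff_exp]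
  simp only [one_div, map_inv₀, map_natCast, smul_eq_mul]
  ring

/-- The generating function `∑ sₖ(x) tᵏ` of the root-cluster moments: for `n, k ≥ 1` the
coefficient of `xⁿ` in `sₖ` is `βⁿ / n!` times `∑ⱼ jᵏ r n j / k!`. Evaluating the cluster series at
`u = exp t` produces the moments, and subtracting its value at `u = 1` removes the `0`-th one. -/
noncomputable def momentSeries (r : ℕ → ℕ → ℝ) (β : ℝ) : ℝ⟦X⟧⟦X⟧ :=
  swapVars (clusterSeries r β (exp ℝ) - clusterSeries r β 1)

theorem constantCoeff_coeff_momentSeries (r : ℕ → ℕ → ℝ) (β : ℝ) (k : ℕ) :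
    constantCoeff (coeff k (momentSeries r β)) = 0 := by
  rw [← coeff_zero_eq_constantCoeff_apply, momentSeries, coeff_coeff_swapVars,
    coeff_zero_eq_constantCoeff_apply, map_sub, constantCoeff_clusterSeries,
    constantCoeff_clusterSeries, sub_zero, map_zero]

theorem coeff_coeff_momentSeries (r : ℕ → ℕ → ℝ) (β : ℝ) {n : ℕ} (hn : n ≠ 0) (k : ℕ) :
    coeff n (coeff k (momentSeries r β)) = β ^ n / n.factorial *
      (coeff k (clusterSum r (exp ℝ) n) - coeff k (clusterSum r (1 : ℝ⟦X⟧) n)) := by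
  rw [momentSeries, coeff_coeff_swapVars, map_sub, coeff_clusterSeries _ _ _ hn,
    coeff_clusterSeries _ _ _ hn, ← smul_sub, coeff_smul, map_sub, smul_eq_mul]

variable {a p β θ : ℝ} {φ : ℕ → ℝ} {r : ℕ → ℕ → ℝ} {b : ℕ → ℝ}

theorem constantCoeff_momentSeries (h : clusterRec p φ r b) (β : ℝ) :
    constantCoeff (momentSeries r β) = 0 := by
  rw [← coeff_zero_eq_constantCoeff_apply]
  ext n
  rcases eq_or_ne n 0 with rfl | hn
  · simpa using constantCoeff_coeff_momentSeries r β 0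
  · rw [coeff_coeff_momentSeries r β hn, coeff_clusterSum_exp, clusterSum_one h]
    simp [h.1 n]

theorem momentODE_momentSeries (h : clusterRec p φ r b)
    (hφ : ∀ δ, φ δ / δ.factorial = Ring.multichoose a δ) (hβ : (a + 1) * β = 1) :
    MomentODE a p β (exp ℝ) (momentSeries r β) := by
  refine ⟨constantCoeff_momentSeries h β, fun k hk => ?_⟩
  have hode := congrArg swapVars
    (one_sub_X_mul_derivative_clusterSeries_sub h hφ hβ (exp ℝ) rfl rfl)
  set S := clusterSeries r β (exp ℝ) - clusterSeries r β (1 : ℝ⟦X⟧) with hS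
  have hX : swapVars (1 - X : ℝ⟦X⟧⟦X⟧) = C (1 - X) := by
    rw [← swapVars_map_C, map_sub (PowerSeries.map C), map_one, map_X]
  have hV : swapVars (binomialPow (1 - X) (-β) * S) =
      C (binomialPow (1 - X) (-β)) * momentSeries r β := by
    rw [map_mul, swapVars_binomialPow_one_sub_X, momentSeries]
  have hpow : swapVars (binomialPow (1 - p • (binomialPow (1 - X) (-β) * S)) (-a)) =
      binomialPow (1 - p • (C (binomialPow (1 - X) (-β)) * momentSeries r β)) (-a) := by
    rw [swapVars_binomialPow_one_sub (by simp [hS, constantCoeff_clusterSeries])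
      (by simp [swapVars_smul, hV, constantCoeff_momentSeries h]), swapVars_smul, hV]
  rw [map_mul, hX, swapVars_smul, map_mul, swapVars_binomialPow_one_sub_X, map_sub swapVars,
    map_mul swapVars, map_one, swapVars_C, hpow] at hode
  have hcoeff := congrArg (coeff k) hode
  rw [coeff_C_mul, coeff_swapVars_derivative, coeff_smul, coeff_C_mul, map_sub (coeff k), coeff_one,
    if_neg hk, sub_zero, smul_eq_C_mul] at hcoeff
  exact hcoeff

theorem multichoose_neg_eq (h : clusterRec p φ r b)
    (hφ : ∀ δ, φ δ / δ.factorial = Ring.multichoose a δ) (hβ : (a + 1) * β = 1) {n : ℕ}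
    (hn : n ≠ 0) : Ring.multichoose (-β) n = -(β ^ n / n.factorial * b n) := by
  have hB := congrArg (coeff n) (one_sub_clusterSeries_one (A := ℝ) h hφ hβ)
  rw [← neg_neg β, coeff_one_sub_X_binomialPow, neg_neg, map_sub, coeff_one, if_neg hn, zero_sub,
    coeff_clusterSeries _ _ _ hn, clusterSum_one h] at hB
  exact hB.symm

theorem moment_eq (h : clusterRec p φ r b)
    (hφ : ∀ δ, φ δ / δ.factorial = Ring.multichoose a δ) (hβ : (a + 1) * β = 1) {n k : ℕ}
    (hn : n ≠ 0) (hk : k ≠ 0) :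
    (∑ j ∈ Icc 1 n, (j : ℝ) ^ k * r n j) / b n =
      -k.factorial * (coeff n (coeff k (momentSeries r β)) / Ring.multichoose (-β) n) := by
  have hw : β ^ n / n.factorial ≠ 0 :=
    div_ne_zero (pow_ne_zero n (right_ne_zero_of_mul_eq_one hβ)) (by positivity)
  have hone : coeff k (algebraMap ℝ ℝ⟦X⟧ (b n)) = 0 := by
    rw [PowerSeries.algebraMap_apply, coeff_C, if_neg hk]
  rw [multichoose_neg_eq h hφ hβ hn, coeff_coeff_momentSeries r β hn, coeff_clusterSum_exp,
    clusterSum_one h, hone, sub_zero, neg_mul, div_neg, mul_neg, neg_neg, mul_div_mul_left _ _ hw]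
  field_simp

theorem CoeffAsymp.tendsto_div_multichoose_div_rpow {f : ℝ⟦X⟧} {γ σ L : ℝ} (hγ : 0 < γ)
    (hσ : Real.Gamma σ ≠ 0) (hf : CoeffAsymp f γ L) :
    Tendsto (fun n => coeff n f / Ring.multichoose σ n / (n : ℝ) ^ (γ - σ)) atTop
      (𝓝 (L * Real.Gamma σ / Real.Gamma γ)) := by
  have hnum := Tendsto.mul hf (tendsto_multichoose_mul_rpow (Real.Gamma_pos_of_pos hγ).ne')
  have hlim := hnum.div (tendsto_multichoose_mul_rpow hσ) (inv_ne_zero hσ)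
  rw [div_inv_eq_mul, mul_right_comm, ← div_eq_mul_inv] at hlim
  refine hlim.congr' ?_
  filter_upwards [eventually_gt_atTop 0] with n hn
  have hn0 : (0 : ℝ) < n := by exact_mod_cast hn
  have hpow : (n : ℝ) ^ (1 - σ) = (n : ℝ) ^ (1 - γ) * (n : ℝ) ^ (γ - σ) := by
    rw [← Real.rpow_add hn0]
    ring_nf
  have hγn := (multichoose_pos hγ n).ne'
  have hn1 := (Real.rpow_pos_of_pos hn0 (1 - γ)).ne'
  simp only [Pi.div_apply]
  rw [hpow]
  field_simp

theorem mul_coeff_egf_eq_of_bellPartial {c : ℕ → ℝ} {k : ℕ} (hk : 2 ≤ k)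
    (hc : (k - 1) * θ * c k =
      β * ∑ d ∈ Icc 2 k, p ^ d * (d.factorial * Ring.multichoose a d) * bellPartial k d c) :
    (k - 1) * θ * coeff k (egf c) =
      β * ∑ d ∈ Icc 2 k, Ring.multichoose a d * p ^ d * coeff k (egf c ^ d) := by
  have hkf : (k.factorial : ℝ) ≠ 0 := by positivity
  rw [coeff_egf _ (by lia), smul_eq_mul, mul_left_comm, hc, inv_mul_eq_iff_eq_mul₀ hkf,
    mul_left_comm (k.factorial : ℝ), Finset.mul_sum (a := (k.factorial : ℝ))]
  congr 1
  refine Finset.sum_congr rfl fun d hd => ?_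
  have hd' := mem_Icc.mp hd
  linear_combination -(Ring.multichoose a d * p ^ d) * coeff_egf_pow c (by lia) hd'.2

theorem tendsto_moment_div_rpow (h : clusterRec p φ r b)
    (hφ : ∀ δ, φ δ / δ.factorial = Ring.multichoose a δ) (ha : 0 < a) (hp : 0 < p)
    (hβ : (a + 1) * β = 1) (hθ : θ = β * a * p + β) {c : ℕ → ℝ} (hc1 : c 1 = β / θ)
    (hc : ∀ k : ℕ, 2 ≤ k → (k - 1) * θ * c k =
      β * ∑ d ∈ Icc 2 k, p ^ d * (d.factorial * Ring.multichoose a d) * bellPartial k d c)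
    {k : ℕ} (hk : 1 ≤ k) :
    Tendsto (fun n : ℕ => ((∑ j ∈ Icc 1 n, (j : ℝ) ^ k * r n j) / b n) / (n : ℝ) ^ (k * θ)) atTop
      (𝓝 (c k * Real.Gamma (1 - β) / (β * Real.Gamma (k * θ - β)))) := by
  have hβ0 : 0 < β := pos_of_mul_pos_right (hβ ▸ one_pos) (by positivity)
  have hβ1 : β < 1 := by nlinarith
  have hβθ : β < θ := by rw [hθ]; linarith [mul_pos (mul_pos hβ0 ha) hp]
  have hk' : (1 : ℝ) ≤ k := by exact_mod_cast hk
  have hΓ1 : Real.Gamma (1 - β) = -β * Real.Gamma (-β) := by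
    rw [← Real.Gamma_add_one (neg_ne_zero.mpr hβ0.ne'), neg_add_eq_sub]
  have hΓ : Real.Gamma (-β) ≠ 0 :=
    right_ne_zero_of_mul (hΓ1 ▸ (Real.Gamma_pos_of_pos (sub_pos.mpr hβ1)).ne')
  have hγ : 0 < k * θ - β := by nlinarith
  have hasymp : CoeffAsymp (coeff k (momentSeries r β)) (k * θ - β) (coeff k (egf c)) :=
    ((momentODE_momentSeries h hφ hβ).gradedAsymp (by simp) hθ hβ0 hβθ hΓ
      (constantCoeff_coeff_momentSeries r β 1) (constantCoeff_egf c)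
      (by simp [coeff_egf, coeff_exp, hc1])
      (fun m hm => mul_coeff_egf_eq_of_bellPartial hm (hc m hm)) (k + 1)).3 k hk k.lt_succ_self
  have hlim := (hasymp.tendsto_div_multichoose_div_rpow hγ hΓ).const_mul (-k.factorial : ℝ)
  rw [sub_neg_eq_add, sub_add_cancel, coeff_egf _ (by lia), smul_eq_mul] at hlim
  have hval : -(k.factorial : ℝ) * ((k.factorial : ℝ)⁻¹ * c k * Real.Gamma (-β) /
      Real.Gamma (k * θ - β)) = c k * Real.Gamma (1 - β) / (β * Real.Gamma (k * θ - β)) := by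
    rw [hΓ1]
    field_simp
  rw [← hval]
  refine hlim.congr' ?_
  filter_upwards [eventually_ne_atTop 0] with n hn
  rw [moment_eq h hφ hβ hn (by lia), mul_div_assoc]

end Moments

end RootCluster

theorem stmt6_general (α p : ℝ) (hα : 0 < α) (hp0 : 0 < p)
    (r : ℕ → ℕ → ℝ) (b : ℕ → ℝ)
    (hrec : clusterRec p (fun δ => Real.Gamma ((δ : ℝ) + 1 / α) / Real.Gamma (1 / α)) r b)
    (C : ℕ → ℝ) (hC1 : C 1 = α / (p + α))
    (hCk : ∀ k : ℕ, 2 ≤ k →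
      ((k : ℝ) - 1) * (p / α + 1) * C k
        = ∑ j ∈ Finset.Icc 2 k,
            p ^ j * (Real.Gamma (1 / α + (j : ℝ)) / Real.Gamma (1 / α)) * bellPartial k j C)
    (k : ℕ) (hk : 1 ≤ k) :
    Tendsto (fun n : ℕ =>
        ((∑ j ∈ Finset.Icc 1 n, (j : ℝ) ^ k * r n j) / b n)
          / (n : ℝ) ^ ((k : ℝ) * (p + α) / (1 + α)))
      atTop
      (nhds (C k * (1 + α) * Real.Gamma (1 / (1 + α))
        / (α * Real.Gamma (((k : ℝ) * p + α * ((k : ℝ) - 1)) / (1 + α))))) := by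
  have hΓ := RootCluster.Gamma_div_Gamma_eq_multichoose (one_div_pos.mpr hα)
  have hφ (δ : ℕ) : Real.Gamma ((δ : ℝ) + 1 / α) / Real.Gamma (1 / α) / δ.factorial =
      Ring.multichoose (1 / α) δ := by
    rw [hΓ, mul_div_cancel_left₀ _ (by positivity)]
  have hC (k : ℕ) (hk : 2 ≤ k) : ((k : ℝ) - 1) * ((p + α) / (1 + α)) * C k =
      α / (1 + α) * ∑ d ∈ Icc 2 k,
        p ^ d * (d.factorial * Ring.multichoose (1 / α) d) * bellPartial k d C := by
    simp only [← hΓ, add_comm _ (1 / α), ← hCk k hk]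
    field_simp
  have hlim := RootCluster.tendsto_moment_div_rpow (θ := (p + α) / (1 + α)) hrec hφ
    (one_div_pos.mpr hα) hp0 (β := α / (1 + α)) (by field_simp) (by field_simp)
    (by rw [hC1]; field_simp) hC hk
  have hexp : (k : ℝ) * ((p + α) / (1 + α)) - α / (1 + α) =
      (k * p + α * (k - 1)) / (1 + α) := by ring
  have hone : 1 - α / (1 + α) = 1 / (1 + α) := by field_simp; ring
  convert hlim using 2
  · rw [mul_div_assoc]
  · rw [hexp, hone]
    field_simp

/-- for linear preferential attachment trees with parameter `α > 0`,
the `k`-th moment of the root-cluster size, normalized by `n^{k(p+α)/(1+α)}`,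
converges to `C_k (1+α) Γ(1/(1+α)) / (α Γ((kp+α(k-1))/(1+α)))`. -/
theorem stmt6 (α p : ℝ) (hα : 0 < α) (hp0 : 0 < p) (hp1 : p < 1)
    (r : ℕ → ℕ → ℝ) (b : ℕ → ℝ)
    (hrec : clusterRec p (fun δ => Real.Gamma ((δ : ℝ) + 1 / α) / Real.Gamma (1 / α)) r b)
    (C : ℕ → ℝ) (hC1 : C 1 = α / (p + α))
    (hCk : ∀ k : ℕ, 2 ≤ k →
      ((k : ℝ) - 1) * (p / α + 1) * C k
        = ∑ j ∈ Finset.Icc 2 k,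
            p ^ j * (Real.Gamma (1 / α + (j : ℝ)) / Real.Gamma (1 / α)) * bellPartial k j C)
    (k : ℕ) (hk : 1 ≤ k) :
    Tendsto (fun n : ℕ =>
        ((∑ j ∈ Finset.Icc 1 n, (j : ℝ) ^ k * r n j) / b n)
          / (n : ℝ) ^ ((k : ℝ) * (p + α) / (1 + α)))
      atTop
      (nhds (C k * (1 + α) * Real.Gamma (1 / (1 + α))
        / (α * Real.Gamma (((k : ℝ) * p + α * ((k : ℝ) - 1)) / (1 + α))))) :=
  stmt6_general α p hα hp0 r b hrec C hC1 hCk k hk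
end

section
/- Let 0<p<1 and let C_k denote the sequence defined by the Bell-polynomial recursion with α=1, i.e. C_1 = 1/(p+1) and for k ≥ 2, (k-1)(p+1)·C_k = Σ_{j=2}^{k} p^j·j!·B_{k,j}(C_1,…,C_{k-j+1}). Then for every integer k ≥ 1, C_k = p^{k-1}·Γ(kp+k-1)/((p+1)^{2k-1}·Γ(kp)); equivalently C_k = ((k-1)!·p^{k-1}/(p+1)^{2k-1})·C(kp+k-2, k-1), where C(z, k-1) is the generalized binomial coefficient. -/
open Finset Filter Asymptotics

/-!
With `F = ∑_{k ≥ 1} C_k X ^ k / k!`, one has `j! * B_{k,j}(C) = k! * [X ^ k] F ^ j`, so the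
recursion is a geometric series in `p * F` and sums to the differential equation
`(p + 1) * X F' * (1 - p * F) = (p + 1) * F - p * F ^ 2`. Multiplied by `F ^ (b - 1)`, this relates
the coefficients of `X ^ n` in `F ^ b` and `F ^ (b + 1)` alone; descending from `b = n`, where the
coefficient is `C_1 ^ n`, to `b = 1` yields `C_n` as a product over the steps, which is a
Pochhammer symbol and hence a quotient of Gamma values.
-/

section PowerSeriesCoefficients

open PowerSeries

variable {R : Type*}

lemma coeff_pow_eq_sum_piAntidiag [CommSemiring R] (f : R⟦X⟧) (n j : ℕ) :
    coeff n (f ^ j) =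
      ∑ m ∈ (piAntidiag (univ : Finset (Fin (n + 1))) j).filter (fun m => ∑ i, m i * i.val = n),
        (Nat.multinomial univ m : R) * ∏ i, coeff i.val f ^ m i := by
  have htrunc : (trunc (n + 1) f : R⟦X⟧) = ∑ i : Fin (n + 1), monomial i (coeff i f) := by
    rw [trunc_apply, ← range_eq_Ico, sum_range, ← Polynomial.coeToPowerSeries.ringHom_apply,
      map_sum]
    simp only [Polynomial.coeToPowerSeries.ringHom_apply, Polynomial.coe_monomial]
  have hcoeff : coeff n (f ^ j) = coeff n ((trunc (n + 1) f : R⟦X⟧) ^ j) := by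
    rw [← coeff_coe_trunc_of_lt n.lt_succ_self, ← trunc_trunc_pow,
      coeff_coe_trunc_of_lt n.lt_succ_self]
  rw [hcoeff, htrunc, sum_pow_eq_sum_piAntidiag, map_sum, sum_filter]
  refine sum_congr rfl fun m _ => ?_
  simp only [monomial_pow, prod_monomial, ← nsmul_eq_mul, map_nsmul, coeff_monomial,
    eq_comm (a := n), smul_ite, smul_zero]

lemma coeff_pow_eq_zero_of_lt [CommSemiring R] {f : R⟦X⟧} (hf : constantCoeff f = 0) {n j : ℕ}
    (hnj : n < j) : coeff n (f ^ j) = 0 :=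
  coeff_of_lt_order n <|
    (Nat.cast_lt.mpr hnj).trans_le (le_order_pow_of_constantCoeff_eq_zero j hf)

lemma coeff_pow_self [CommSemiring R] {f : R⟦X⟧} (hf : constantCoeff f = 0) (n : ℕ) :
    coeff n (f ^ n) = coeff 1 f ^ n := by
  obtain ⟨g, rfl⟩ := X_dvd_iff.mpr hf
  have hg : coeff 1 (X * g) = constantCoeff g := by
    rw [coeff_succ_X_mul, coeff_zero_eq_constantCoeff_apply]
  simpa [mul_pow, hg] using coeff_X_pow_mul (g ^ n) n 0

lemma coeff_X_mul_derivative [CommSemiring R] (f : R⟦X⟧) (n : ℕ) :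
    coeff n (X * d⁄dX R f) = n * coeff n f := by
  cases n with
  | zero => simp
  | succ n => rw [coeff_succ_X_mul, coeff_derivative, mul_comm, Nat.cast_succ]

lemma mul_one_sub_eq_sq_of_coeff_eq_sum [CommRing R] {f g : R⟦X⟧} (hf : constantCoeff f = 0)
    (hg : ∀ k, coeff k g = ∑ j ∈ Icc 2 k, coeff k (f ^ j)) : g * (1 - f) = f ^ 2 := by
  ext n
  set S : R⟦X⟧ := ∑ j ∈ Ico 2 (n + 2), f ^ j with hS
  have hgS : X ^ (n + 1) ∣ g - S := by
    rw [X_pow_dvd_iff]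
    intro k hk
    rw [map_sub, sub_eq_zero, hg, hS, map_sum]
    refine sum_subset (fun j => by simp only [mem_Icc, mem_Ico]; omega) fun j hj hjk => ?_
    refine coeff_pow_eq_zero_of_lt hf ?_
    simp only [mem_Icc, mem_Ico] at hj hjk
    omega
  have hsplit : g * (1 - f) = (g - S) * (1 - f) + f ^ 2 - f ^ (n + 2) := by
    linear_combination geom_sum_Ico_mul_neg f (Nat.le_add_left 2 n)
  rw [hsplit, map_sub, map_add, X_pow_dvd_iff.mp (hgS.mul_right _) n n.lt_succ_self,
    coeff_pow_eq_zero_of_lt hf (Nat.lt_add_of_pos_right two_pos), zero_add, sub_zero]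

end PowerSeriesCoefficients

section DifferentialEquation

open PowerSeries

variable {R : Type*} [CommRing R] {p : R} {F : R⟦X⟧}

lemma coeff_pow_recurrence
    (hF : C (p + 1) * (X * d⁄dX R F) * (1 - C p * F) = C (p + 1) * F - C p * F ^ 2) (n b : ℕ) :
    (p + 1) * (b + 1) * (n - b) * coeff n (F ^ b) =
      p * b * ((p + 1) * n - (b + 1)) * coeff n (F ^ (b + 1)) := by
  have hpow : C ((p + 1) * (b + 1)) * (X * d⁄dX R (F ^ b))
        - C ((p + 1) * p * b) * (X * d⁄dX R (F ^ (b + 1)))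
      = C ((b : R) * (b + 1) * (p + 1)) * F ^ b - C ((b : R) * (b + 1) * p) * F ^ (b + 1) := by
    rcases b with _ | b
    · simp
    · simp only [derivative_pow, Nat.add_sub_cancel, map_mul, map_add, map_one, map_natCast,
        Nat.cast_succ] at hF ⊢
      linear_combination ((b : R⟦X⟧) + 1) * (b + 2) * F ^ b * hF
  have hcoeff := congrArg (coeff n) hpow
  simp only [map_sub, coeff_C_mul, coeff_X_mul_derivative] at hcoeff
  linear_combination hcoeff

lemma coeff_pow_eq_ascPochhammer [IsDomain R] [CharZero R] (hF0 : constantCoeff F = 0)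
    (hF : C (p + 1) * (X * d⁄dX R F) * (1 - C p * F) = C (p + 1) * F - C p * F ^ 2)
    {n b d : ℕ} (hn : b + d = n) :
    n * (p + 1) ^ d * d.factorial * coeff n (F ^ b) =
      b * p ^ d * (ascPochhammer R d).eval (n * p) * coeff 1 F ^ n := by
  induction d generalizing b with
  | zero =>
    obtain rfl : b = n := hn
    simp [coeff_pow_self hF0]
  | succ d ih =>
    have ih := ih (b := b + 1) (by omega)
    have hrec := coeff_pow_recurrence hF n b
    have hb : (b : R) + 1 ≠ 0 := Nat.cast_add_one_ne_zero b
    have hn' : (n : R) = b + (d + 1) := by rw [← hn]; push_cast; ring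
    rw [ascPochhammer_succ_eval, Nat.factorial_succ]
    push_cast at ih ⊢
    refine mul_left_cancel₀ hb ?_
    have hnb : (n : R) - b = d + 1 := by rw [hn']; ring
    have hnb' : (p + 1) * n - (b + 1) = n * p + d := by rw [hn']; ring
    rw [hnb, hnb'] at hrec
    linear_combination (n * (p + 1) ^ d * d.factorial) * hrec + p * b * (n * p + d) * ih

end DifferentialEquation

section BellPolynomials

open PowerSeries

/-- The exponential generating function `∑ k ≥ 1, x k * X ^ k / k!` of a sequence indexed from `1`;
the value `x 0` is ignored. -/
noncomputable def expGenFun {K : Type*} [Field K] (x : ℕ → K) : K⟦X⟧ :=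
  X * PowerSeries.mk fun k => x (k + 1) / (k + 1).factorial

lemma constantCoeff_expGenFun {K : Type*} [Field K] (x : ℕ → K) :
    constantCoeff (expGenFun x) = 0 := by
  simp [expGenFun]

lemma coeff_succ_expGenFun {K : Type*} [Field K] (x : ℕ → K) (k : ℕ) :
    coeff (k + 1) (expGenFun x) = x (k + 1) / (k + 1).factorial := by
  rw [expGenFun, coeff_succ_X_mul, coeff_mk]

lemma filter_piFinset_eq_filter_piAntidiag {k j : ℕ} (hjk : j ≤ k) :
    (Fintype.piFinset fun _ : Fin (k - j + 1) => range (k + 1)).filter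
        (fun m => ∑ i : Fin (k - j + 1), ((i : ℕ) + 1) * m i = k ∧ ∑ i, m i = j) =
      (piAntidiag univ j).filter (fun m => ∑ i, m i * i.val = k - j) := by
  ext m
  have hweight : ∑ i : Fin (k - j + 1), ((i : ℕ) + 1) * m i = ∑ i, m i * i.val + ∑ i, m i := by
    rw [← sum_add_distrib]
    exact sum_congr rfl fun i _ => by ring
  have hle (i : Fin (k - j + 1)) : m i ≤ ∑ i, m i :=
    single_le_sum_of_canonicallyOrdered (mem_univ i)
  simp only [mem_filter, Fintype.mem_piFinset, mem_range, mem_piAntidiag, hweight, mem_univ,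
    implies_true, and_true]
  constructor
  · rintro ⟨_, hk, hj⟩
    exact ⟨hj, by omega⟩
  · rintro ⟨hj : ∑ i, m i = j, hk⟩
    exact ⟨fun i => by have := hle i; omega, by omega, hj⟩

lemma factorial_mul_bellPartial (x : ℕ → ℝ) {k j : ℕ} (hjk : j ≤ k) :
    j.factorial * bellPartial k j x = k.factorial * coeff k (expGenFun x ^ j) := by
  have hshift (f : ℝ⟦X⟧) : coeff k ((X * f) ^ j) = coeff (k - j) (f ^ j) := by
    rw [mul_pow, coeff_X_pow_mul', if_pos hjk]
  rw [expGenFun, hshift, coeff_pow_eq_sum_piAntidiag, bellPartial,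
    filter_piFinset_eq_filter_piAntidiag hjk, mul_sum, mul_sum]
  refine sum_congr rfl fun m hm => ?_
  have hj : ∑ i, m i = j := (mem_piAntidiag.mp (mem_filter.mp hm).1).1
  have hmultinomial :
      (j.factorial : ℝ) = (∏ i, ((m i).factorial : ℝ)) * Nat.multinomial univ m := by
    exact_mod_cast ((Nat.multinomial_spec univ m).trans (congrArg Nat.factorial hj)).symm
  have hfactorial : ∏ i, ((m i).factorial : ℝ) ≠ 0 := prod_ne_zero_iff.mpr fun i _ => by positivity
  simp only [coeff_mk, div_pow, prod_div_distrib, prod_mul_distrib]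
  rw [hmultinomial]
  field_simp

lemma expGenFun_differentialEquation {p : ℝ} {c : ℕ → ℝ}
    (hc : ∀ k : ℕ, 2 ≤ k →
      ((k : ℝ) - 1) * (p + 1) * c k
        = ∑ j ∈ Icc 2 k, p ^ j * (j.factorial : ℝ) * bellPartial k j c) :
    C (p + 1) * (X * d⁄dX ℝ (expGenFun c)) * (1 - C p * expGenFun c)
      = C (p + 1) * expGenFun c - C p * expGenFun c ^ 2 := by
  set F := expGenFun c
  have hF0 : constantCoeff F = 0 := constantCoeff_expGenFun c
  have hgeom (k : ℕ) : coeff k (C (p + 1) * (X * d⁄dX ℝ F - F))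
      = ∑ j ∈ Icc 2 k, coeff k ((C p * F) ^ j) := by
    rw [coeff_C_mul, map_sub, coeff_X_mul_derivative]
    match k with
    | 0 => simp [hF0]
    | 1 => simp
    | k + 2 =>
      have hfactorial : ((k + 2).factorial : ℝ) ≠ 0 := by positivity
      have hbell : ∑ j ∈ Icc 2 (k + 2), p ^ j * (j.factorial : ℝ) * bellPartial (k + 2) j c
          = (k + 2).factorial * ∑ j ∈ Icc 2 (k + 2), coeff (k + 2) ((C p * F) ^ j) := by
        rw [mul_sum]
        refine sum_congr rfl fun j hj => ?_
        rw [mul_assoc, factorial_mul_bellPartial c (mem_Icc.mp hj).2, mul_pow, ← map_pow,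
          coeff_C_mul, mul_left_comm]
      refine mul_left_cancel₀ hfactorial ?_
      rw [← hbell, ← hc (k + 2) (by omega), coeff_succ_expGenFun]
      field_simp
  have hode := mul_one_sub_eq_sq_of_coeff_eq_sum (by simp [hF0]) hgeom
  simp only [map_add, map_one] at hode ⊢
  linear_combination hode

lemma bellRec_eq_ascPochhammer {p : ℝ} (hp : p + 1 ≠ 0) {c : ℕ → ℝ} (hc1 : c 1 = 1 / (p + 1))
    (hc : ∀ k : ℕ, 2 ≤ k →
      ((k : ℝ) - 1) * (p + 1) * c k
        = ∑ j ∈ Icc 2 k, p ^ j * (j.factorial : ℝ) * bellPartial k j c) (d : ℕ) :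
    c (d + 1) =
      p ^ d * (ascPochhammer ℝ d).eval (((d + 1 : ℕ) : ℝ) * p) / (p + 1) ^ (2 * d + 1) := by
  have hcoeff := coeff_pow_eq_ascPochhammer (constantCoeff_expGenFun c)
    (expGenFun_differentialEquation hc) (add_comm 1 d)
  have hcoeff1 : coeff 1 (expGenFun c) = 1 / (p + 1) := by
    rw [coeff_succ_expGenFun, zero_add, hc1, Nat.factorial_one, Nat.cast_one, div_one]
  rw [pow_one, coeff_succ_expGenFun, hcoeff1, div_pow, one_pow, Nat.factorial_succ] at hcoeff
  push_cast at hcoeff ⊢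
  have hd : (d : ℝ) + 1 ≠ 0 := Nat.cast_add_one_ne_zero d
  field_simp at hcoeff ⊢
  linear_combination hcoeff

end BellPolynomials

lemma gamma_add_nat_div_gamma_eq_ascPochhammer {x : ℝ} (hx : ∀ m : ℕ, x ≠ -m) (n : ℕ) :
    Real.Gamma (x + n) / Real.Gamma x = (ascPochhammer ℝ n).eval x := by
  have hcomplex := Complex.Gamma_add_nat_div_Gamma_eq (n := n) (x : ℂ)
    fun m => by exact_mod_cast hx m
  have heval : (ascPochhammer ℂ n).eval (x : ℂ) = ((ascPochhammer ℝ n).eval x : ℝ) := by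
    rw [← ascPochhammer_map Complex.ofRealHom, Polynomial.eval_map]
    exact Polynomial.eval₂_at_apply Complex.ofRealHom x
  rw [heval, ← Complex.ofReal_natCast, ← Complex.ofReal_add, Complex.Gamma_ofReal,
    Complex.Gamma_ofReal] at hcomplex
  exact_mod_cast hcomplex

theorem stmt7_general (p : ℝ) (C : ℕ → ℝ) (hC1 : C 1 = 1 / (p + 1))
    (hCk : ∀ k : ℕ, 2 ≤ k →
      ((k : ℝ) - 1) * (p + 1) * C k
        = ∑ j ∈ Finset.Icc 2 k, p ^ j * (j.factorial : ℝ) * bellPartial k j C)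
    (k : ℕ) (hk : 1 ≤ k) (hpole : ∀ m : ℕ, (k : ℝ) * p ≠ -m) :
    C k = p ^ (k - 1) * Real.Gamma ((k : ℝ) * p + (k : ℝ) - 1)
      / ((p + 1) ^ (2 * k - 1) * Real.Gamma ((k : ℝ) * p)) := by
  have hp : p + 1 ≠ 0 := fun h => hpole k (by rw [eq_neg_of_add_eq_zero_left h, mul_neg_one])
  obtain ⟨d, rfl⟩ := Nat.exists_eq_add_of_le' hk
  have hgamma := gamma_add_nat_div_gamma_eq_ascPochhammer hpole d
  have harg : ((d + 1 : ℕ) : ℝ) * p + ((d + 1 : ℕ) : ℝ) - 1 = ((d + 1 : ℕ) : ℝ) * p + d := by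
    push_cast
    ring
  have hexp : 2 * (d + 1) - 1 = 2 * d + 1 := by omega
  rw [bellRec_eq_ascPochhammer hp hC1 hCk d, ← hgamma, harg, hexp, Nat.add_sub_cancel,
    mul_div_assoc', div_div, mul_comm (Real.Gamma _)]

/-- closed form for the Bell-polynomial recursion coefficients when `α = 1`:
`C_k = p^{k-1} Γ(kp+k-1) / ((p+1)^{2k-1} Γ(kp))`. -/
theorem stmt7 (p : ℝ) (hp0 : 0 < p) (hp1 : p < 1)
    (C : ℕ → ℝ) (hC1 : C 1 = 1 / (p + 1))
    (hCk : ∀ k : ℕ, 2 ≤ k →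
      ((k : ℝ) - 1) * (p + 1) * C k
        = ∑ j ∈ Finset.Icc 2 k, p ^ j * (j.factorial : ℝ) * bellPartial k j C) :
    ∀ k : ℕ, 1 ≤ k →
      C k = p ^ (k - 1) * Real.Gamma ((k : ℝ) * p + (k : ℝ) - 1)
        / ((p + 1) ^ (2 * k - 1) * Real.Gamma ((k : ℝ) * p)) := by
  intro k hk
  exact stmt7_general p C hC1 hCk k hk fun m =>
    ((neg_nonpos.mpr m.cast_nonneg).trans_lt (mul_pos (Nat.cast_pos.mpr hk) hp0)).ne'
end

section
/- Let 0<p<1 and let r_{n,k} be the root-cluster weights for random plane-oriented recursive trees, i.e. linear preferential attachment with α=1 (φ(δ)=Γ(δ+1)/Γ(1)=δ!). Then for every integer k ≥ 1, the normalized k-th moment of the root-cluster size satisfies lim_{n→∞} m_k(n)/n^{k(p+1)/2} = 2·p^{k-1}·Γ(kp+k-1)·√π/((p+1)^{2k-1}·Γ(kp)·Γ((kp+k-1)/2)). -/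
open Finset Filter Asymptotics

/-!
Summing the recursion gives, for the bivariate generating function `R(z, u)` of the `r_{n,k} / n!`
and `B(z) = R(z, 1)`, the equation `∂R/∂z = u / (1 - p R - (1 - p) B)`. Expanding it at `u = 1`
gives a hierarchy of equations for the generating functions `M_k` of the binomial moments. It
starts with `(1 - M_0)² = 1 - 2 z`, and after `z ↦ z / 2` its `k`-th equation takes the linear form
`(1 - z) M_k' - (p / 2) M_k = (lower moments)`. Comparison with powers of `1 - z` then shows
inductively that `M_{k+1} = c_k (1 - z)^(-s_k)` up to an error of smaller exponent, where
`s_k = ((k + 1) (1 + p) - 1) / 2` and the `c_k` obey a quadratic recurrence, solved by the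
Rothe–Hagen convolution identity. The coefficients of `M_k` are compared with those of `1 - M_0`,
which are the `b_n` up to normalisation; finally the `k`-th power moment is asymptotically `k!`
times the `k`-th binomial moment.
-/

open PowerSeries
open scoped Polynomial

section TupleProducts

theorem coeff_prod_eq_sum_antidiagonalTuple {R : Type*} [CommSemiring R] {δ : ℕ} (N : ℕ)
    (F : Fin δ → R⟦X⟧) :
    coeff N (∏ i, F i) = ∑ f ∈ Finset.Nat.antidiagonalTuple δ N, ∏ i, coeff (f i) (F i) := by
  classical
  rw [PowerSeries.coeff_prod]
  refine Finset.sum_nbij' (⇑) Finsupp.equivFunOnFinite.symm (fun l hl => ?_) (fun f hf => ?_)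
    (fun l _ => Finsupp.equivFunOnFinite.symm_apply_apply l) (fun f _ => rfl) (fun l _ => rfl)
  · exact Finset.Nat.mem_antidiagonalTuple.mpr (Finset.mem_finsuppAntidiag.mp hl).1
  · exact Finset.mem_finsuppAntidiag.mpr
      ⟨Finset.Nat.mem_antidiagonalTuple.mp hf, Finset.subset_univ _⟩

theorem coeff_prod_of_coeff_zero {R : Type*} [CommSemiring R] {δ : ℕ} (N : ℕ)
    (F : Fin δ → R⟦X⟧) (hF : ∀ i, coeff 0 (F i) = 0) :
    coeff N (∏ i, F i) =
      ∑ f ∈ (Finset.Nat.antidiagonalTuple δ N).filter (fun f => ∀ i, 1 ≤ f i),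
        ∏ i, coeff (f i) (F i) := by
  rw [coeff_prod_eq_sum_antidiagonalTuple]
  refine (Finset.sum_filter_of_ne fun f _ hne i => ?_).symm
  by_contra hi
  refine hne (Finset.prod_eq_zero (Finset.mem_univ i) ?_)
  rw [show f i = 0 by lia, hF]

theorem prod_castLE_mul_prod_filter_le {M : Type*} [CommMonoid M] {s δ : ℕ} (h : s ≤ δ)
    (F G : Fin δ → M) :
    (∏ i : Fin s, F (Fin.castLE h i)) * ∏ j ∈ univ.filter (fun j : Fin δ => s ≤ (j : ℕ)), G j =
      ∏ j : Fin δ, if (j : ℕ) < s then F j else G j := by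
  have hlt : univ.filter (fun j : Fin δ => (j : ℕ) < s) = univ.map (Fin.castLEEmb h) := by
    ext j
    simp only [Finset.mem_filter, Finset.mem_univ, true_and, Finset.mem_map]
    exact ⟨fun hj => ⟨⟨j, hj⟩, rfl⟩, by rintro ⟨i, rfl⟩; exact i.2⟩
  rw [Finset.prod_ite, hlt, Finset.prod_map]
  simp only [not_lt]
  rfl

theorem coeff_pow_mul_pow_of_coeff_zero {R : Type*} [CommSemiring R] {s δ : ℕ} (h : s ≤ δ) (N : ℕ)
    {F G : R⟦X⟧} (hF : coeff 0 F = 0) (hG : coeff 0 G = 0) :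
    coeff N (F ^ s * G ^ (δ - s)) =
      ∑ f ∈ (Finset.Nat.antidiagonalTuple δ N).filter (fun f => ∀ i, 1 ≤ f i),
        (∏ i : Fin s, coeff (f (Fin.castLE h i)) F) *
          ∏ j ∈ univ.filter (fun j : Fin δ => s ≤ (j : ℕ)), coeff (f j) G := by
  have hcard : (univ.filter (fun j : Fin δ => s ≤ (j : ℕ))).card = δ - s := by
    have := Finset.card_filter_add_card_filter_not (s := univ) fun j : Fin δ => (j : ℕ) < s
    simp only [Fin.card_filter_val_lt, not_lt, Finset.card_univ, Fintype.card_fin] at this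
    lia
  have hprod : F ^ s * G ^ (δ - s) = ∏ j : Fin δ, if (j : ℕ) < s then F else G := by
    rw [← prod_castLE_mul_prod_filter_le h (fun _ => F) (fun _ => G), Finset.prod_const,
      Finset.prod_const, Finset.card_univ, Fintype.card_fin, hcard]
  rw [hprod, coeff_prod_of_coeff_zero N _ fun j => by split_ifs <;> assumption]
  refine Finset.sum_congr rfl fun f _ => ?_
  rw [prod_castLE_mul_prod_filter_le h (fun j => coeff (f j) F) (fun j => coeff (f j) G)]
  exact Finset.prod_congr rfl fun j _ => by split_ifs <;> rfl

theorem one_sub_mul_eq_one_of_coeff_eq_geom_sum {R : Type*} [CommRing R] {W F : R⟦X⟧} (hW : X ∣ W)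
    (hF : ∀ N, coeff N F = coeff N (∑ δ ∈ range (N + 1), W ^ δ)) : (1 - W) * F = 1 := by
  have hpow (m N : ℕ) (hm : m < N) : coeff m (W ^ N) = 0 :=
    PowerSeries.X_pow_dvd_iff.mp (pow_dvd_pow_of_dvd hW N) m hm
  have hgeom (m N : ℕ) (hm : m ≤ N) : coeff m F = coeff m (∑ δ ∈ range (N + 1), W ^ δ) := by
    rw [hF, map_sum, map_sum]
    exact Finset.sum_subset (Finset.range_mono (by lia))
      fun δ _ hδ => hpow m δ (by simpa using hδ)
  ext N
  calc coeff N ((1 - W) * F)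
      = coeff N ((1 - W) * ∑ δ ∈ range (N + 1), W ^ δ) := by
        rw [coeff_mul, coeff_mul]
        exact Finset.sum_congr rfl fun x hx => by
          rw [hgeom x.2 N (Finset.HasAntidiagonal.antidiagonal.snd_le hx)]
    _ = coeff N 1 := by rw [mul_neg_geom_sum, map_sub, hpow N (N + 1) N.lt_succ_self, sub_zero]

end TupleProducts

section Recursion

theorem clusterRec.zero_right {p : ℝ} {φ : ℕ → ℝ} {r : ℕ → ℕ → ℝ} {b : ℕ → ℝ}
    (h : clusterRec p φ r b) : b 0 = 0 := by
  rw [h.1, Finset.Icc_eq_empty (by lia), Finset.sum_empty]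

theorem clusterRec.eq_zero_of_lt {p : ℝ} {φ : ℕ → ℝ} {r : ℕ → ℕ → ℝ} {b : ℕ → ℝ}
    (h : clusterRec p φ r b) {n k : ℕ} (hn : 1 ≤ n) (hk : n < k) : r n k = 0 := by
  induction n using Nat.strong_induction_on generalizing k with
  | _ n ih =>
  rw [h.2 n k hn (by lia)]
  refine Finset.sum_eq_zero fun δ _ => Finset.sum_eq_zero fun s _ => ?_
  refine mul_eq_zero_of_right _ (Finset.sum_eq_zero fun f hf => ?_)
  refine mul_eq_zero_of_right _ (Finset.sum_eq_zero fun g hg => ?_)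
  have hs : s.1 ≤ δ := Nat.lt_succ_iff.mp (Finset.mem_range.mp s.2)
  simp only [Finset.mem_filter, Finset.Nat.mem_antidiagonalTuple] at hf hg
  have hsub : ∑ i : Fin s.1, f (Fin.castLE hs i) ≤ ∑ j, f j := by
    rw [← Fin.coe_castLEEmb hs, ← Finset.sum_map univ (Fin.castLEEmb hs) f]
    exact Finset.sum_le_sum_of_subset (Finset.subset_univ _)
  obtain ⟨i, -, hi⟩ : ∃ i ∈ univ, f (Fin.castLE hs i) < g i :=
    Finset.exists_lt_of_sum_lt (by lia)
  have hfi : f (Fin.castLE hs i) ≤ ∑ j, f j :=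
    Finset.single_le_sum (fun _ _ => Nat.zero_le _) (Finset.mem_univ _)
  have hzero : r (f (Fin.castLE hs i)) (g i) = 0 := ih _ (by lia) (hf.2 _) hi
  rw [Finset.prod_eq_zero (Finset.mem_univ i) hzero, mul_zero, zero_mul]

/-- The root-cluster polynomial `∑ₖ r_{n,k} uᵏ`. -/
noncomputable def clusterPoly (r : ℕ → ℕ → ℝ) (n : ℕ) : ℝ[X] :=
  ∑ k ∈ Icc 1 n, Polynomial.monomial k (r n k)

/-- The exponential generating function `∑ₙ (∑ₖ r_{n,k} uᵏ) zⁿ / n!`, a power series in `z`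
over the polynomials in `u`. -/
noncomputable def clusterEGF (r : ℕ → ℕ → ℝ) : ℝ[X]⟦X⟧ :=
  PowerSeries.mk fun n => Polynomial.C (n.factorial : ℝ)⁻¹ * clusterPoly r n

/-- The exponential generating function `∑ₙ bₙ zⁿ / n!` of the total weights, with coefficients
regarded as constant polynomials in `u`. -/
noncomputable def treeEGF (b : ℕ → ℝ) : ℝ[X]⟦X⟧ :=
  PowerSeries.mk fun n => Polynomial.C ((n.factorial : ℝ)⁻¹ * b n)

/-- The exponential generating function of a subtree hanging off the root cluster: with
probability `p` its root joins the cluster, otherwise the subtree carries no `u`. -/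
noncomputable def branchEGF (p : ℝ) (r : ℕ → ℕ → ℝ) (b : ℕ → ℝ) : ℝ[X]⟦X⟧ :=
  C (Polynomial.C p) * clusterEGF r + C (Polynomial.C (1 - p)) * treeEGF b

variable {p : ℝ} {φ : ℕ → ℝ} {r : ℕ → ℕ → ℝ} {b : ℕ → ℝ}

theorem coeff_clusterPoly (n k : ℕ) :
    (clusterPoly r n).coeff k = if k ∈ Icc 1 n then r n k else 0 := by
  simp [clusterPoly, Polynomial.finsetSum_coeff, Polynomial.coeff_monomial]

theorem clusterRec.coeff_clusterPoly_of_pos (h : clusterRec p φ r b) {n k : ℕ} (hn : 1 ≤ n)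
    (hk : 1 ≤ k) : (clusterPoly r n).coeff k = r n k := by
  rw [coeff_clusterPoly, ite_eq_left_iff]
  exact fun hkn => (h.eq_zero_of_lt hn (by simp only [Finset.mem_Icc] at hkn; lia)).symm

theorem coeff_zero_clusterEGF : coeff 0 (clusterEGF r) = 0 := by
  simp [clusterEGF, clusterPoly]

theorem clusterRec.coeff_zero_treeEGF (h : clusterRec p φ r b) : coeff 0 (treeEGF b) = 0 := by
  simp [treeEGF, h.zero_right]

theorem clusterRec.X_dvd_branchEGF (h : clusterRec p φ r b) : X ∣ branchEGF p r b := by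
  rw [PowerSeries.X_dvd_iff, ← PowerSeries.coeff_zero_eq_constantCoeff_apply, branchEGF, map_add,
    coeff_C_mul, coeff_C_mul, coeff_zero_clusterEGF, h.coeff_zero_treeEGF, mul_zero, mul_zero,
    add_zero]

theorem clusterRec.coeff_prod_clusterPoly (h : clusterRec p φ r b) {s : ℕ} {f : Fin s → ℕ}
    (hf : ∀ i, 1 ≤ f i) (k : ℕ) :
    (∏ i, clusterPoly r (f i)).coeff k =
      ∑ g ∈ (Finset.Nat.antidiagonalTuple s k).filter (fun g => ∀ i, 1 ≤ g i),
        ∏ i, r (f i) (g i) := by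
  rw [← Polynomial.coeff_coe, ← Polynomial.coeToPowerSeries.ringHom_apply, map_prod,
    coeff_prod_of_coeff_zero k _ fun i => by simp [coeff_clusterPoly]]
  refine Finset.sum_congr rfl fun g hg => Finset.prod_congr rfl fun i _ => ?_
  rw [Polynomial.coeToPowerSeries.ringHom_apply, Polynomial.coeff_coe,
    h.coeff_clusterPoly_of_pos (hf i) ((Finset.mem_filter.mp hg).2 i)]

theorem clusterRec.coeff_clusterEGF_pow_mul_treeEGF_pow (h : clusterRec p φ r b) {s δ : ℕ}
    (hs : s ≤ δ) (N k : ℕ) :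
    (coeff N (clusterEGF r ^ s * treeEGF b ^ (δ - s))).coeff k =
      ∑ f ∈ (Finset.Nat.antidiagonalTuple δ N).filter (fun f => ∀ i, 1 ≤ f i),
        (∏ i, ((f i).factorial : ℝ))⁻¹ *
          ∑ g ∈ (Finset.Nat.antidiagonalTuple s k).filter (fun g => ∀ i, 1 ≤ g i),
            (∏ i : Fin s, r (f (Fin.castLE hs i)) (g i)) *
              ∏ j ∈ univ.filter (fun j : Fin δ => s ≤ (j : ℕ)), b (f j) := by
  rw [coeff_pow_mul_pow_of_coeff_zero hs N coeff_zero_clusterEGF h.coeff_zero_treeEGF,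
    Polynomial.finsetSum_coeff]
  refine Finset.sum_congr rfl fun f hf => ?_
  have hfact : (∏ i : Fin s, ((f (Fin.castLE hs i)).factorial : ℝ)⁻¹) *
      ∏ j ∈ univ.filter (fun j : Fin δ => s ≤ (j : ℕ)), ((f j).factorial : ℝ)⁻¹ =
        (∏ i, ((f i).factorial : ℝ))⁻¹ := by
    rw [prod_castLE_mul_prod_filter_le hs (fun j => ((f j).factorial : ℝ)⁻¹)
      (fun j => ((f j).factorial : ℝ)⁻¹)]
    simp only [ite_self, Finset.prod_inv_distrib]
  have hscalar : (∏ i : Fin s, coeff (f (Fin.castLE hs i)) (clusterEGF r)) *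
      ∏ j ∈ univ.filter (fun j : Fin δ => s ≤ (j : ℕ)), coeff (f j) (treeEGF b) =
        Polynomial.C ((∏ i, ((f i).factorial : ℝ))⁻¹ *
          ∏ j ∈ univ.filter (fun j : Fin δ => s ≤ (j : ℕ)), b (f j)) *
            ∏ i : Fin s, clusterPoly r (f (Fin.castLE hs i)) := by
    simp only [clusterEGF, treeEGF, coeff_mk, Finset.prod_mul_distrib, ← map_prod, ← hfact,
      Polynomial.C_mul]
    ring
  rw [hscalar, Polynomial.coeff_C_mul,
    h.coeff_prod_clusterPoly fun i => (Finset.mem_filter.mp hf).2 (Fin.castLE hs i),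
    ← Finset.sum_mul]
  ring

theorem coeff_branchEGF_pow (δ N k : ℕ) :
    (coeff N (branchEGF p r b ^ δ)).coeff k =
      ∑ s ∈ (range (δ + 1)).attach, (δ.choose s.1 : ℝ) * (p ^ s.1 * (1 - p) ^ (δ - s.1)) *
        (coeff N (clusterEGF r ^ s.1 * treeEGF b ^ (δ - s.1))).coeff k := by
  rw [branchEGF, add_pow, ← Finset.sum_attach, map_sum, Polynomial.finsetSum_coeff]
  refine Finset.sum_congr rfl fun s _ => ?_
  have hscalar : (C (Polynomial.C p) * clusterEGF r) ^ s.1 *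
      (C (Polynomial.C (1 - p)) * treeEGF b) ^ (δ - s.1) * ((δ.choose s.1 : ℕ) : ℝ[X]⟦X⟧) =
        C (Polynomial.C ((δ.choose s.1 : ℝ) * (p ^ s.1 * (1 - p) ^ (δ - s.1)))) *
          (clusterEGF r ^ s.1 * treeEGF b ^ (δ - s.1)) := by
    simp only [map_mul, map_pow, map_natCast, mul_pow]
    ring
  rw [hscalar, coeff_C_mul, Polynomial.coeff_C_mul]

theorem clusterRec.coeff_derivative_clusterEGF (h : clusterRec p φ r b) (N : ℕ) :
    coeff N (d⁄dX ℝ[X] (clusterEGF r)) =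
      Polynomial.X *
        ∑ δ ∈ range (N + 1), Polynomial.C (φ δ / δ.factorial) * coeff N (branchEGF p r b ^ δ) := by
  have hderiv : coeff N (d⁄dX ℝ[X] (clusterEGF r)) =
      Polynomial.C (N.factorial : ℝ)⁻¹ * clusterPoly r (N + 1) := by
    have hfact : ((N + 1).factorial : ℝ)⁻¹ * (N + 1) = (N.factorial : ℝ)⁻¹ := by
      rw [Nat.factorial_succ]; push_cast; field_simp
    rw [coeff_derivative, clusterEGF, coeff_mk, ← hfact]
    simp only [map_mul, map_add, map_natCast, map_one]
    ring
  rw [hderiv]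
  ext (_ | k)
  · simp [coeff_clusterPoly]
  · rw [Polynomial.coeff_X_mul, Polynomial.coeff_C_mul,
      h.coeff_clusterPoly_of_pos (by lia) (by lia), h.2 (N + 1) (k + 1) (by lia) (by lia),
      Polynomial.finsetSum_coeff, Finset.mul_sum]
    refine Finset.sum_congr rfl fun δ _ => ?_
    rw [Polynomial.coeff_C_mul, coeff_branchEGF_pow, Finset.mul_sum, Finset.mul_sum]
    refine Finset.sum_congr rfl fun s _ => ?_
    rw [h.coeff_clusterEGF_pow_mul_treeEGF_pow (Nat.lt_succ_iff.mp (Finset.mem_range.mp s.2))]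
    simp only [Nat.add_sub_cancel, Finset.mul_sum]
    refine Finset.sum_congr rfl fun f _ => Finset.sum_congr rfl fun g _ => ?_
    field_simp

theorem clusterRec.one_sub_branchEGF_mul_derivative
    (h : clusterRec p (fun δ => (δ.factorial : ℝ)) r b) :
    (1 - branchEGF p r b) * d⁄dX ℝ[X] (clusterEGF r) = C Polynomial.X := by
  set geom : ℝ[X]⟦X⟧ :=
    PowerSeries.mk fun N => coeff N (∑ δ ∈ range (N + 1), branchEGF p r b ^ δ) with hgeom
  have hderiv : d⁄dX ℝ[X] (clusterEGF r) = C Polynomial.X * geom := by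
    ext1 N
    have hfact (δ : ℕ) : (δ.factorial : ℝ) / δ.factorial = 1 := div_self (by positivity)
    rw [h.coeff_derivative_clusterEGF, coeff_C_mul, hgeom, coeff_mk, map_sum]
    simp only [hfact, Polynomial.C_1, one_mul]
  rw [hderiv, mul_left_comm,
    one_sub_mul_eq_one_of_coeff_eq_geom_sum h.X_dvd_branchEGF fun N => coeff_mk N _, mul_one]

end Recursion

section BinomialMoments

/-- The `k`-th Taylor coefficient at `u = 1` of a power series over the polynomials in `u`, taken
coefficientwise. Applied to a generating function it extracts `k`-th binomial moments. -/
noncomputable def taylorCoeffAtOne (k : ℕ) : ℝ[X]⟦X⟧ →+ ℝ⟦X⟧ where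
  toFun F := PowerSeries.mk fun n => (Polynomial.taylor 1 (coeff n F)).coeff k
  map_zero' := by ext n; simp
  map_add' F G := by ext n; simp

theorem coeff_taylorCoeffAtOne (k n : ℕ) (F : ℝ[X]⟦X⟧) :
    coeff n (taylorCoeffAtOne k F) = (Polynomial.taylor 1 (coeff n F)).coeff k :=
  coeff_mk n fun n => (Polynomial.taylor 1 (coeff n F)).coeff k

theorem taylorCoeffAtOne_mul (k : ℕ) (F G : ℝ[X]⟦X⟧) :
    taylorCoeffAtOne k (F * G) = ∑ x ∈ HasAntidiagonal.antidiagonal k,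
      taylorCoeffAtOne x.1 F * taylorCoeffAtOne x.2 G := by
  ext n
  simp only [coeff_taylorCoeffAtOne, coeff_mul, map_sum, Polynomial.taylor_mul,
    Polynomial.finsetSum_coeff, Polynomial.coeff_mul]
  exact Finset.sum_comm

theorem taylorCoeffAtOne_C_C_mul (k : ℕ) (a : ℝ) (F : ℝ[X]⟦X⟧) :
    taylorCoeffAtOne k (C (Polynomial.C a) * F) = C a * taylorCoeffAtOne k F := by
  ext n
  simp only [coeff_taylorCoeffAtOne, coeff_C_mul, Polynomial.taylor_mul, Polynomial.taylor_C,
    Polynomial.coeff_C_mul]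

theorem taylorCoeffAtOne_C_X (k : ℕ) :
    taylorCoeffAtOne k (C Polynomial.X) = if k ≤ 1 then 1 else 0 := by
  ext n
  rcases n with - | n
  · rcases k with - | - | k <;> simp [coeff_taylorCoeffAtOne, Polynomial.coeff_X, coeff_one,
      Polynomial.coeff_one]
  · simp [coeff_taylorCoeffAtOne, apply_ite, coeff_one]

theorem taylorCoeffAtOne_one (k : ℕ) : taylorCoeffAtOne k 1 = if k = 0 then 1 else 0 := by
  ext n
  by_cases hn : n = 0 <;> by_cases hk : k = 0 <;>
    simp [coeff_taylorCoeffAtOne, coeff_one, Polynomial.coeff_one, hn, hk]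

theorem taylorCoeffAtOne_derivative (k : ℕ) (F : ℝ[X]⟦X⟧) :
    taylorCoeffAtOne k (d⁄dX ℝ[X] F) = d⁄dX ℝ (taylorCoeffAtOne k F) := by
  ext n
  have hn : (n : ℝ[X]) + 1 = Polynomial.C ((n : ℝ) + 1) := by simp
  rw [coeff_taylorCoeffAtOne, coeff_derivative, coeff_derivative, coeff_taylorCoeffAtOne, hn,
    Polynomial.taylor_mul, Polynomial.taylor_C, Polynomial.coeff_mul_C]

/-- The exponential generating function `∑ₙ (∑ⱼ (j choose k) r_{n,j}) zⁿ / n!` of the unnormalised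
`k`-th binomial moments of the root-cluster size. -/
noncomputable def momentEGF (r : ℕ → ℕ → ℝ) (k : ℕ) : ℝ⟦X⟧ :=
  PowerSeries.mk fun n => (n.factorial : ℝ)⁻¹ * ∑ j ∈ Icc 1 n, (j.choose k : ℝ) * r n j

variable {p : ℝ} {φ : ℕ → ℝ} {r : ℕ → ℕ → ℝ} {b : ℕ → ℝ}

theorem taylorCoeffAtOne_clusterEGF (k : ℕ) :
    taylorCoeffAtOne k (clusterEGF r) = momentEGF r k := by
  ext n
  rw [coeff_taylorCoeffAtOne, clusterEGF, momentEGF, coeff_mk, coeff_mk, Polynomial.taylor_mul,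
    Polynomial.taylor_C, Polynomial.coeff_C_mul, Polynomial.taylor_coeff, clusterPoly, map_sum,
    Polynomial.eval_finsetSum]
  simp only [Polynomial.hasseDeriv_monomial, Polynomial.eval_monomial, one_pow, mul_one]

theorem clusterRec.taylorCoeffAtOne_treeEGF (h : clusterRec p φ r b) (k : ℕ) :
    taylorCoeffAtOne k (treeEGF b) = if k = 0 then momentEGF r 0 else 0 := by
  ext n
  rw [coeff_taylorCoeffAtOne, treeEGF, coeff_mk, Polynomial.taylor_C, Polynomial.coeff_C]
  split_ifs
  · simp only [momentEGF, coeff_mk, Nat.choose_zero_right, Nat.cast_one, one_mul, h.1]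
  · rw [map_zero]

theorem clusterRec.taylorCoeffAtOne_branchEGF (h : clusterRec p φ r b) (k : ℕ) :
    taylorCoeffAtOne k (branchEGF p r b) =
      if k = 0 then momentEGF r 0 else C p * momentEGF r k := by
  rw [branchEGF, map_add, taylorCoeffAtOne_C_C_mul, taylorCoeffAtOne_C_C_mul,
    taylorCoeffAtOne_clusterEGF, h.taylorCoeffAtOne_treeEGF]
  split_ifs with hk
  · rw [hk, ← add_mul, ← map_add, add_sub_cancel, map_one, one_mul]
  · rw [mul_zero, add_zero]

theorem clusterRec.one_sub_momentEGF_zero_mul_derivative_zero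
    (h : clusterRec p (fun δ => (δ.factorial : ℝ)) r b) :
    (1 - momentEGF r 0) * d⁄dX ℝ (momentEGF r 0) = 1 := by
  have hcoeff := congrArg (taylorCoeffAtOne 0) h.one_sub_branchEGF_mul_derivative
  rwa [taylorCoeffAtOne_mul, Finset.HasAntidiagonal.antidiagonal_zero, Finset.sum_singleton,
    map_sub, taylorCoeffAtOne_one, if_pos rfl, h.taylorCoeffAtOne_branchEGF, if_pos rfl,
    taylorCoeffAtOne_derivative, taylorCoeffAtOne_clusterEGF, taylorCoeffAtOne_C_X,
    if_pos zero_le_one] at hcoeff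

theorem clusterRec.one_sub_momentEGF_zero_mul_derivative_succ
    (h : clusterRec p (fun δ => (δ.factorial : ℝ)) r b) (k : ℕ) :
    (1 - momentEGF r 0) * d⁄dX ℝ (momentEGF r (k + 1)) =
      C p * ∑ x ∈ HasAntidiagonal.antidiagonal k,
        momentEGF r (x.1 + 1) * d⁄dX ℝ (momentEGF r x.2) + if k = 0 then 1 else 0 := by
  have hcoeff := congrArg (taylorCoeffAtOne (k + 1)) h.one_sub_branchEGF_mul_derivative
  simp only [taylorCoeffAtOne_mul, Finset.Nat.sum_antidiagonal_succ, map_sub, taylorCoeffAtOne_one,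
    h.taylorCoeffAtOne_branchEGF, taylorCoeffAtOne_derivative, taylorCoeffAtOne_clusterEGF,
    taylorCoeffAtOne_C_X, if_true, Nat.succ_ne_zero, if_false, zero_sub, neg_mul,
    Finset.sum_neg_distrib, mul_assoc, ← Finset.mul_sum, add_le_iff_nonpos_left,
    nonpos_iff_eq_zero] at hcoeff
  linear_combination hcoeff

end BinomialMoments

section InvOneSubRPow

/-- The power series of `(1 - X) ^ (-s)`. -/
noncomputable def invOneSubRPow (s : ℝ) : ℝ⟦X⟧ :=
  rescale (-1) (binomialSeries ℝ (-s))

theorem invOneSubRPow_add (s t : ℝ) :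
    invOneSubRPow (s + t) = invOneSubRPow s * invOneSubRPow t := by
  rw [invOneSubRPow, neg_add, binomialSeries_add, map_mul, invOneSubRPow, invOneSubRPow]

theorem coeff_invOneSubRPow (s : ℝ) (n : ℕ) :
    coeff n (invOneSubRPow s) = (∏ j ∈ range n, (s + j)) / n.factorial := by
  have hchoose : Ring.choose (-s) n = (n.factorial : ℝ)⁻¹ * ∏ j ∈ range n, (-s - j) := by
    rw [Ring.choose_eq_smul, ← Polynomial.aeval_eq_smeval, Polynomial.aeval_def,
      ← Polynomial.eval_map, descPochhammer_map, descPochhammer_eval_eq_prod_range, smul_eq_mul]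
  rw [invOneSubRPow, coeff_rescale, binomialSeries_coeff, hchoose, smul_eq_mul, mul_one,
    mul_left_comm, div_eq_inv_mul]
  congr 1
  calc (-1) ^ n * ∏ j ∈ range n, (-s - j)
      = ∏ j ∈ range n, -(-s - j) := by rw [Finset.prod_neg, Finset.card_range]
    _ = ∏ j ∈ range n, (s + j) := Finset.prod_congr rfl fun j _ => by ring

theorem constantCoeff_invOneSubRPow (s : ℝ) : constantCoeff (invOneSubRPow s) = 1 := by
  rw [← coeff_zero_eq_constantCoeff_apply, coeff_invOneSubRPow]
  simp

theorem invOneSubRPow_neg_one : invOneSubRPow (-1) = 1 - X := by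
  rw [invOneSubRPow, neg_neg, ← Nat.cast_one, binomialSeries_nat]
  simp [sub_eq_add_neg]

theorem succ_mul_coeff_invOneSubRPow (s : ℝ) (n : ℕ) :
    (n + 1) * coeff (n + 1) (invOneSubRPow s) = (s + n) * coeff n (invOneSubRPow s) := by
  rw [coeff_invOneSubRPow, coeff_invOneSubRPow, Finset.prod_range_succ, Nat.factorial_succ]
  push_cast
  field_simp

theorem coeff_one_sub_X_mul_derivative (F : ℝ⟦X⟧) (n : ℕ) :
    coeff n ((1 - X) * d⁄dX ℝ F) = (n + 1) * coeff (n + 1) F - n * coeff n F := by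
  rw [sub_mul, one_mul, map_sub, coeff_derivative]
  rcases n with - | n
  · simp
  · rw [coeff_succ_X_mul, coeff_derivative]
    push_cast
    ring

theorem one_sub_X_mul_derivative_invOneSubRPow (s : ℝ) :
    (1 - X) * d⁄dX ℝ (invOneSubRPow s) = C s * invOneSubRPow s := by
  ext n
  rw [coeff_one_sub_X_mul_derivative, succ_mul_coeff_invOneSubRPow, coeff_C_mul]
  ring

theorem eq_C_mul_invOneSubRPow_of_derivative {s : ℝ} {F : ℝ⟦X⟧}
    (hF : (1 - X) * d⁄dX ℝ F = C s * F) : F = C (constantCoeff F) * invOneSubRPow s := by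
  ext n
  induction n with
  | zero => simp [constantCoeff_invOneSubRPow]
  | succ n ih =>
    have hcoeff := congrArg (coeff n) hF
    rw [coeff_one_sub_X_mul_derivative, coeff_C_mul] at hcoeff
    have hn : (n : ℝ) + 1 ≠ 0 := by positivity
    rw [coeff_C_mul] at ih ⊢
    refine mul_left_cancel₀ hn ?_
    rw [mul_left_comm, succ_mul_coeff_invOneSubRPow]
    linear_combination hcoeff + (s + n) * ih

theorem coeff_invOneSubRPow_nonneg {s : ℝ} (hs : 0 ≤ s) (n : ℕ) :
    0 ≤ coeff n (invOneSubRPow s) := by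
  rw [coeff_invOneSubRPow]
  positivity

theorem eq_invOneSubRPow_neg_half {Y : ℝ⟦X⟧} (h0 : constantCoeff Y = 1)
    (hY : Y * (2 * d⁄dX ℝ Y) = -1) : Y = invOneSubRPow (-1 / 2) := by
  have hsq : Y ^ 2 = 1 - X := by
    refine PowerSeries.derivative.ext ?_ ?_
    · rw [derivative_pow, map_sub, derivative_X, ← map_one C, derivative_C, zero_sub, map_one]
      linear_combination hY
    · simp [h0]
  have hderiv : (1 - X) * d⁄dX ℝ Y = C (-1 / 2) * Y := by
    have hhalf : C (-1 / 2 : ℝ) * 2 = -1 := by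
      rw [← map_ofNat C 2, ← map_mul, ← map_one C, ← map_neg]; norm_num
    rw [← hsq]
    linear_combination (C (-1 / 2) * Y) * (-hY) + (Y ^ 2 * d⁄dX ℝ Y) * hhalf
  rw [eq_C_mul_invOneSubRPow_of_derivative hderiv, h0, map_one, one_mul]

theorem tendsto_coeff_invOneSubRPow {s : ℝ} (hs : ∀ m : ℕ, s ≠ -m) :
    Tendsto (fun n : ℕ => coeff n (invOneSubRPow s) / (n : ℝ) ^ (s - 1)) atTop
      (nhds (Real.Gamma s)⁻¹) := by
  have hGamma := ((Real.GammaSeq_tendsto_Gamma s).inv₀ (Real.Gamma_ne_zero hs)).mul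
    (tendsto_natCast_div_add_atTop s)
  rw [mul_one] at hGamma
  refine hGamma.congr' ?_
  filter_upwards [eventually_gt_atTop 0] with n hn
  have hn' : (0 : ℝ) < n := by exact_mod_cast hn
  have hsn : (n : ℝ) + s ≠ 0 := fun h0 => hs n (by linarith)
  rw [coeff_invOneSubRPow, Real.GammaSeq, Finset.prod_range_succ, Real.rpow_sub_one hn'.ne']
  have hpow : (n : ℝ) ^ s ≠ 0 := (Real.rpow_pos_of_pos hn' s).ne'
  field_simp
  rw [add_comm s]

end InvOneSubRPow

section CoefficientAsymptotics

theorem isBigO_natCast_rpow_rpow {a b : ℝ} (hab : a ≤ b) :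
    (fun n : ℕ => (n : ℝ) ^ a) =O[atTop] fun n : ℕ => (n : ℝ) ^ b := by
  refine IsBigO.of_bound 1 ?_
  filter_upwards [eventually_ge_atTop 1] with n hn
  rw [one_mul, Real.norm_of_nonneg (by positivity), Real.norm_of_nonneg (by positivity)]
  exact Real.rpow_le_rpow_of_exponent_le (by exact_mod_cast hn) hab

theorem isLittleO_natCast_rpow_rpow {a b : ℝ} (hab : a < b) :
    (fun n : ℕ => (n : ℝ) ^ a) =o[atTop] fun n : ℕ => (n : ℝ) ^ b := by
  refine isLittleO_of_tendsto' ?_ ?_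
  · filter_upwards [eventually_gt_atTop 0] with n hn h0
    exact absurd h0 (Real.rpow_pos_of_pos (by exact_mod_cast hn) b).ne'
  · refine ((tendsto_rpow_neg_atTop (sub_pos.mpr hab)).comp tendsto_natCast_atTop_atTop).congr' ?_
    filter_upwards [eventually_gt_atTop 0] with n hn
    rw [Function.comp_apply, neg_sub, Real.rpow_sub (by exact_mod_cast hn)]

theorem ne_neg_natCast_of_pos {s : ℝ} (hs : 0 < s) (m : ℕ) : s ≠ -m :=
  (lt_of_le_of_lt (neg_nonpos.mpr m.cast_nonneg) hs).ne'

theorem isTheta_coeff_invOneSubRPow {s : ℝ} (hs : ∀ m : ℕ, s ≠ -m) :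
    (fun n : ℕ => coeff n (invOneSubRPow s)) =Θ[atTop] fun n : ℕ => (n : ℝ) ^ (s - 1) :=
  (isTheta_of_div_tendsto_nhds_ne_zero (tendsto_coeff_invOneSubRPow hs)
    (inv_ne_zero (Real.Gamma_ne_zero hs))).symm

/-- Coefficientwise domination `[zⁿ] F = O([zⁿ] (1 - z)^(-s))`. The bound is asked for at every
`n`, not just eventually, so that it survives Cauchy products. -/
def CoeffIsBigO (F : ℝ⟦X⟧) (s : ℝ) : Prop :=
  (fun n => coeff n F) =O[⊤] fun n => coeff n (invOneSubRPow s)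

theorem coeffIsBigO_invOneSubRPow {s t : ℝ} (hs : ∀ m : ℕ, s ≠ -m) (hst : s ≤ t) (ht : 0 < t) :
    CoeffIsBigO (invOneSubRPow s) t := by
  have hpos (n : ℕ) : coeff n (invOneSubRPow t) ≠ 0 := by
    rw [coeff_invOneSubRPow]
    positivity
  refine isBigO_top.mpr ((isBigO_nat_atTop_iff fun n h0 => absurd h0 (hpos n)).mp ?_)
  exact (isTheta_coeff_invOneSubRPow hs).1.trans
    ((isBigO_natCast_rpow_rpow (by linarith)).trans
      (isTheta_coeff_invOneSubRPow (ne_neg_natCast_of_pos ht)).2)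

namespace CoeffIsBigO

variable {F G : ℝ⟦X⟧} {s t : ℝ}

theorem mono (hF : CoeffIsBigO F s) (hs : 0 < s) (hst : s ≤ t) : CoeffIsBigO F t :=
  IsBigO.trans hF <| coeffIsBigO_invOneSubRPow
    (ne_neg_natCast_of_pos hs) hst (hs.trans_le hst)

theorem add (hF : CoeffIsBigO F s) (hG : CoeffIsBigO G s) : CoeffIsBigO (F + G) s := by
  simpa only [CoeffIsBigO, map_add] using IsBigO.add hF hG

theorem C_mul (hF : CoeffIsBigO F s) (a : ℝ) : CoeffIsBigO (C a * F) s := by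
  simpa only [CoeffIsBigO, coeff_C_mul] using hF.const_mul_left a

theorem sum {ι : Type*} {u : Finset ι} {F : ι → ℝ⟦X⟧} (hF : ∀ i ∈ u, CoeffIsBigO (F i) s) :
    CoeffIsBigO (∑ i ∈ u, F i) s := by
  simpa only [CoeffIsBigO, map_sum, Finset.sum_apply] using IsBigO.fun_sum hF

theorem mul (hF : CoeffIsBigO F s) (hG : CoeffIsBigO G t) (hs : 0 ≤ s) (ht : 0 ≤ t) :
    CoeffIsBigO (F * G) (s + t) := by
  obtain ⟨M, hM⟩ := isBigO_top.mp hF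
  obtain ⟨N, hN⟩ := isBigO_top.mp hG
  refine isBigO_top.mpr ⟨M * N, fun n => ?_⟩
  simp only [Real.norm_eq_abs, abs_of_nonneg (coeff_invOneSubRPow_nonneg hs _),
    abs_of_nonneg (coeff_invOneSubRPow_nonneg ht _),
    abs_of_nonneg (coeff_invOneSubRPow_nonneg (add_nonneg hs ht) _)] at hM hN ⊢
  calc |coeff n (F * G)|
      ≤ ∑ x ∈ HasAntidiagonal.antidiagonal n, |coeff x.1 F| * |coeff x.2 G| := by
        rw [coeff_mul]
        simp only [← abs_mul]
        exact Finset.abs_sum_le_sum_abs _ _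
    _ ≤ ∑ x ∈ HasAntidiagonal.antidiagonal n,
          (M * coeff x.1 (invOneSubRPow s)) * (N * coeff x.2 (invOneSubRPow t)) :=
        Finset.sum_le_sum fun x _ => mul_le_mul (hM _) (hN _) (abs_nonneg _)
          ((abs_nonneg _).trans (hM _))
    _ = M * N * coeff n (invOneSubRPow (s + t)) := by
        rw [invOneSubRPow_add, coeff_mul, Finset.mul_sum]
        exact Finset.sum_congr rfl fun x _ => by ring

/-- Comparison for the equation `(1 - z) F' - q F = G`: since `(M / (s - q)) (1 - z)^(-s)` solves
it with right-hand side `M (1 - z)^(-s)`, it dominates `F`. -/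
theorem of_derivative {q : ℝ} (hq : 0 ≤ q) (hqs : q < s) (h0 : constantCoeff F = 0)
    (hG : CoeffIsBigO ((1 - X) * d⁄dX ℝ F - C q * F) s) : CoeffIsBigO F s := by
  obtain ⟨M, hM⟩ := isBigO_top.mp hG
  have hs : 0 ≤ s := hq.trans hqs.le
  have hsq : 0 < s - q := sub_pos.mpr hqs
  simp only [Real.norm_eq_abs, abs_of_nonneg (coeff_invOneSubRPow_nonneg hs _), map_sub,
    coeff_one_sub_X_mul_derivative, coeff_C_mul] at hM
  have hM0 : 0 ≤ M := by
    simpa [constantCoeff_invOneSubRPow] using (abs_nonneg _).trans (hM 0)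
  refine isBigO_top.mpr ⟨M / (s - q), fun n => ?_⟩
  rw [Real.norm_eq_abs, Real.norm_eq_abs, abs_of_nonneg (coeff_invOneSubRPow_nonneg hs n)]
  induction n with
  | zero =>
    rw [coeff_zero_eq_constantCoeff_apply, h0, abs_zero]
    exact mul_nonneg (by positivity) (coeff_invOneSubRPow_nonneg hs 0)
  | succ n ih =>
    have hn : (0 : ℝ) < n + 1 := by positivity
    set g := (n + 1) * coeff (n + 1) F - n * coeff n F - q * coeff n F with hg
    refine le_of_mul_le_mul_left ?_ hn
    calc (n + 1) * |coeff (n + 1) F|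
        = |(n + q) * coeff n F + g| := by
          rw [show (n + q) * coeff n F + g = (n + 1) * coeff (n + 1) F by rw [hg]; ring, abs_mul,
            abs_of_pos hn]
      _ ≤ (n + q) * |coeff n F| + |g| := by
          refine (abs_add_le _ _).trans_eq ?_
          rw [abs_mul, abs_of_nonneg (by positivity : 0 ≤ n + q)]
      _ ≤ (n + q) * (M / (s - q) * coeff n (invOneSubRPow s)) +
            M * coeff n (invOneSubRPow s) := by
          gcongr
          exact hM n
      _ = M / (s - q) * ((s + n) * coeff n (invOneSubRPow s)) := by
          field_simp
          ring
      _ = (n + 1) * (M / (s - q) * coeff (n + 1) (invOneSubRPow s)) := by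
          rw [← succ_mul_coeff_invOneSubRPow]
          ring

end CoeffIsBigO

/-- The expansion `F = c (1 - z)^(-s) + O((1 - z)^(-(s - ε)))`, the error being measured
coefficientwise. -/
def HasLeadingTerm (ε : ℝ) (F : ℝ⟦X⟧) (s c : ℝ) : Prop :=
  CoeffIsBigO (F - C c * invOneSubRPow s) (s - ε)

namespace HasLeadingTerm

variable {F G : ℝ⟦X⟧} {ε s t c d : ℝ}

theorem add (hF : HasLeadingTerm ε F s c) (hG : HasLeadingTerm ε G s d) :
    HasLeadingTerm ε (F + G) s (c + d) := by
  rw [HasLeadingTerm, map_add, add_mul, add_sub_add_comm]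
  exact CoeffIsBigO.add hF hG

theorem C_mul (hF : HasLeadingTerm ε F s c) (a : ℝ) : HasLeadingTerm ε (C a * F) s (a * c) := by
  rw [HasLeadingTerm, map_mul, mul_assoc, ← mul_sub]
  exact CoeffIsBigO.C_mul hF a

theorem sum {ι : Type*} {u : Finset ι} {F : ι → ℝ⟦X⟧} {c : ι → ℝ}
    (hF : ∀ i ∈ u, HasLeadingTerm ε (F i) s (c i)) :
    HasLeadingTerm ε (∑ i ∈ u, F i) s (∑ i ∈ u, c i) := by
  rw [HasLeadingTerm, map_sum, Finset.sum_mul, ← Finset.sum_sub_distrib]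
  exact CoeffIsBigO.sum hF

theorem coeffIsBigO (hF : HasLeadingTerm ε F s c) (hε : 0 ≤ ε) (hεs : ε < s) :
    CoeffIsBigO F s := by
  have hself : CoeffIsBigO (invOneSubRPow s) s := isBigO_refl _ _
  simpa only [sub_add_cancel] using
    (CoeffIsBigO.mono hF (sub_pos.mpr hεs) (sub_le_self s hε)).add (hself.C_mul c)

theorem invOneSubRPow_mul (hF : HasLeadingTerm ε F t c) (hs : 0 ≤ s) (hεt : ε ≤ t) :
    HasLeadingTerm ε (invOneSubRPow s * F) (s + t) c := by
  have hself : CoeffIsBigO (invOneSubRPow s) s := isBigO_refl _ _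
  have hprod := hself.mul hF hs (sub_nonneg.mpr hεt)
  rwa [mul_sub, mul_left_comm, ← invOneSubRPow_add, ← add_sub_assoc] at hprod

theorem mul (hF : HasLeadingTerm ε F s c) (hG : HasLeadingTerm ε G t d) (hε : 0 ≤ ε)
    (hεs : ε < s) (hεt : ε < t) : HasLeadingTerm ε (F * G) (s + t) (c * d) := by
  have hleft := CoeffIsBigO.mul hF (hG.coeffIsBigO hε hεt) (by linarith) (by linarith)
  have hright := (hG.invOneSubRPow_mul (by linarith : 0 ≤ s) hεt.le).C_mul c
  rw [show s - ε + t = s + t - ε by ring] at hleft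
  rw [HasLeadingTerm]
  convert hleft.add hright using 1
  ring

theorem of_derivative {q : ℝ} (hq : 0 < q) (hqs : q < s - ε) (h0 : constantCoeff F = 0)
    (hF : HasLeadingTerm ε ((1 - X) * d⁄dX ℝ F - C q * F) s ((s - q) * c)) :
    HasLeadingTerm ε F s c := by
  set E := F - C c * (invOneSubRPow s - invOneSubRPow q) with hE
  have hE0 : constantCoeff E = 0 := by
    simp [hE, h0, constantCoeff_invOneSubRPow]
  have hderiv : (1 - X) * d⁄dX ℝ E - C q * E =
      (1 - X) * d⁄dX ℝ F - C q * F - C ((s - q) * c) * invOneSubRPow s := by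
    simp only [hE, map_sub, map_mul, Derivation.leibniz, smul_eq_mul, derivative_C]
    linear_combination -C c * one_sub_X_mul_derivative_invOneSubRPow s +
      C c * one_sub_X_mul_derivative_invOneSubRPow q
  have hbound : CoeffIsBigO E (s - ε) :=
    CoeffIsBigO.of_derivative hq.le hqs hE0 (by rw [hderiv]; exact hF)
  rw [HasLeadingTerm]
  have hself := coeffIsBigO_invOneSubRPow (ne_neg_natCast_of_pos hq) hqs.le (hq.trans hqs)
  convert hbound.add (hself.C_mul (-c)) using 1
  rw [hE, map_neg]
  ring

theorem one_sub_X_mul_derivative {q : ℝ} (hF : HasLeadingTerm ε F s c)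
    (hderiv : HasLeadingTerm ε ((1 - X) * d⁄dX ℝ F - C q * F) s ((s - q) * c)) :
    HasLeadingTerm ε ((1 - X) * d⁄dX ℝ F) s (s * c) := by
  convert hderiv.add (hF.C_mul q) using 1 <;> ring

theorem tendsto_coeff_div_rpow (hF : HasLeadingTerm ε F s c) (hε : 0 < ε) (hεs : ε < s) :
    Tendsto (fun n : ℕ => coeff n F / (n : ℝ) ^ (s - 1)) atTop (nhds (c / Real.Gamma s)) := by
  have herrorTheta := isTheta_coeff_invOneSubRPow (ne_neg_natCast_of_pos (sub_pos.mpr hεs))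
  have herror : (fun n => coeff n (F - C c * invOneSubRPow s)) =o[atTop]
      fun n : ℕ => (n : ℝ) ^ (s - 1) :=
    ((IsBigO.mono hF le_top).trans herrorTheta.1).trans_isLittleO
      (isLittleO_natCast_rpow_rpow (by linarith))
  have hlead := (tendsto_coeff_invOneSubRPow (ne_neg_natCast_of_pos (hε.trans hεs))).const_mul c
  have hsum := herror.tendsto_div_nhds_zero.add hlead
  rw [zero_add, ← div_eq_mul_inv] at hsum
  refine hsum.congr fun n => ?_
  rw [map_sub, coeff_C_mul]
  ring

end HasLeadingTerm

end CoefficientAsymptotics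

section MomentSystem

/-- The hierarchy of differential equations for the generating functions of the binomial moments
in the plane-oriented case, normalised so that the dominant singularity is at `1`. -/
structure IsMomentSystem (p : ℝ) (M : ℕ → ℝ⟦X⟧) : Prop where
  constantCoeff_eq_zero (k : ℕ) : constantCoeff (M k) = 0
  derivative_zero : (1 - M 0) * (2 * d⁄dX ℝ (M 0)) = 1
  derivative_succ (k : ℕ) : (1 - M 0) * (2 * d⁄dX ℝ (M (k + 1))) =
    C p * ∑ x ∈ HasAntidiagonal.antidiagonal k, M (x.1 + 1) * (2 * d⁄dX ℝ (M x.2)) +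
      if k = 0 then 1 else 0

/-- The exponent `s` for which `(1 - z) ^ (-s)` is the leading term of the generating function of
the `(k + 1)`-st binomial moments. -/
noncomputable def momentExponent (p : ℝ) (k : ℕ) : ℝ :=
  ((k + 1) * (1 + p) - 1) / 2

theorem momentExponent_zero (p : ℝ) : momentExponent p 0 = p / 2 := by
  simp [momentExponent]

theorem momentExponent_add_add (p : ℝ) (i j : ℕ) :
    1 / 2 + (momentExponent p i + momentExponent p j) = momentExponent p (i + j + 1) := by
  simp only [momentExponent]
  push_cast
  ring

theorem half_le_momentExponent {p : ℝ} (hp : 0 < p) (k : ℕ) : p / 2 ≤ momentExponent p k := by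
  have hk : (0 : ℝ) ≤ k * (1 + p) := by positivity
  rw [momentExponent]
  linarith

/-- The product `M_{i+1} M_{j+1}'` contributes `c_i s_j c_j`; averaging over the exchange of `i`
and `j` replaces `s_j` by half of `s_i + s_j`, which depends on `i + j` only. -/
theorem sum_antidiagonal_mul_momentExponent_mul (p : ℝ) (c : ℕ → ℝ) (j : ℕ) :
    ∑ x ∈ HasAntidiagonal.antidiagonal j, c x.1 * (momentExponent p x.2 * c x.2) =
      ((1 + p) * (j + 2) / 2 - 1) / 2 * ∑ x ∈ HasAntidiagonal.antidiagonal j, c x.1 * c x.2 := by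
  have hswap := Finset.Nat.sum_antidiagonal_swap (n := j)
    (f := fun x => c x.1 * (momentExponent p x.2 * c x.2))
  have hadd : ∑ x ∈ HasAntidiagonal.antidiagonal j, c x.1 * (momentExponent p x.2 * c x.2) +
      ∑ x ∈ HasAntidiagonal.antidiagonal j, c x.2 * (momentExponent p x.1 * c x.1) =
        ((1 + p) * (j + 2) / 2 - 1) * ∑ x ∈ HasAntidiagonal.antidiagonal j, c x.1 * c x.2 := by
    rw [← Finset.sum_add_distrib, Finset.mul_sum]
    refine Finset.sum_congr rfl fun x hx => ?_
    rw [← Finset.HasAntidiagonal.mem_antidiagonal.mp hx, momentExponent, momentExponent]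
    push_cast
    ring
  simp only [Prod.fst_swap, Prod.snd_swap] at hswap
  linarith

theorem neg_half_ne_neg_natCast (m : ℕ) : (-1 / 2 : ℝ) ≠ -m := fun h => by
  have hm : (m : ℝ) * 2 = 1 := by linarith
  have hm' : m * 2 = 1 := by exact_mod_cast hm
  lia

namespace IsMomentSystem

variable {p : ℝ} {M : ℕ → ℝ⟦X⟧}

theorem one_sub_zero (hM : IsMomentSystem p M) : 1 - M 0 = invOneSubRPow (-1 / 2) := by
  refine eq_invOneSubRPow_neg_half ?_ ?_
  · rw [map_sub, map_one, hM.constantCoeff_eq_zero, sub_zero]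
  · rw [map_sub, ← map_one C, derivative_C, zero_sub, map_one]
    linear_combination -hM.derivative_zero

theorem one_sub_zero_sq (hM : IsMomentSystem p M) : (1 - M 0) ^ 2 = 1 - X := by
  rw [hM.one_sub_zero, sq, ← invOneSubRPow_add, ← invOneSubRPow_neg_one]
  norm_num

theorem invOneSubRPow_half_mul (hM : IsMomentSystem p M) :
    invOneSubRPow (1 / 2) * (1 - X) = 1 - M 0 := by
  rw [hM.one_sub_zero, ← invOneSubRPow_neg_one, ← invOneSubRPow_add]
  norm_num

theorem one_sub_X_mul_derivative_one (hM : IsMomentSystem p M) :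
    (1 - X) * d⁄dX ℝ (M 1) - C (p / 2) * M 1 = C (1 / 2) * invOneSubRPow (-1 / 2) := by
  have hhalf : C (1 / 2 : ℝ) * 2 = 1 := by
    rw [← map_ofNat C 2, ← map_mul, ← map_one C]; norm_num
  have hp : C (p / 2) = C (1 / 2) * C p := by
    rw [← map_mul]; ring_nf
  have hone := hM.derivative_succ 0
  simp only [Finset.HasAntidiagonal.antidiagonal_zero, Finset.sum_singleton, zero_add,
    if_true] at hone
  rw [← hM.one_sub_zero, ← hM.one_sub_zero_sq, hp]
  linear_combination C (1 / 2) * ((1 - M 0) * hone + C p * M 1 * hM.derivative_zero) -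
    (1 - M 0) ^ 2 * d⁄dX ℝ (M 1) * hhalf

theorem one_sub_X_mul_derivative_add_two (hM : IsMomentSystem p M) (j : ℕ) :
    (1 - X) * d⁄dX ℝ (M (j + 2)) - C (p / 2) * M (j + 2) =
      C p * (invOneSubRPow (1 / 2) * ∑ x ∈ HasAntidiagonal.antidiagonal j,
        M (x.1 + 1) * ((1 - X) * d⁄dX ℝ (M (x.2 + 1)))) := by
  have hhalf : C (1 / 2 : ℝ) * 2 = 1 := by
    rw [← map_ofNat C 2, ← map_mul, ← map_one C]; norm_num
  have hp : C (p / 2) = C (1 / 2) * C p := by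
    rw [← map_mul]; ring_nf
  set S := ∑ x ∈ HasAntidiagonal.antidiagonal j, M (x.1 + 1) * d⁄dX ℝ (M (x.2 + 1)) with hS
  have hsucc : (1 - M 0) * (2 * d⁄dX ℝ (M (j + 2))) =
      C p * (M (j + 2) * (2 * d⁄dX ℝ (M 0)) + 2 * S) := by
    rw [hM.derivative_succ, Finset.Nat.sum_antidiagonal_succ', if_neg j.succ_ne_zero, add_zero,
      hS, Finset.mul_sum]
    simp only [mul_left_comm (2 : ℝ⟦X⟧)]
  have hsum : ∑ x ∈ HasAntidiagonal.antidiagonal j,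
      M (x.1 + 1) * ((1 - X) * d⁄dX ℝ (M (x.2 + 1))) = (1 - X) * S := by
    simp only [hS, Finset.mul_sum, mul_left_comm (1 - X : ℝ⟦X⟧)]
  rw [hsum, ← mul_assoc (invOneSubRPow _), hM.invOneSubRPow_half_mul, ← hM.one_sub_zero_sq, hp]
  linear_combination C (1 / 2) * ((1 - M 0) * hsucc + C p * M (j + 2) * hM.derivative_zero) +
    (C p * (1 - M 0) * S - (1 - M 0) ^ 2 * d⁄dX ℝ (M (j + 2))) * hhalf

theorem one_eq (hM : IsMomentSystem p M) (hp : 0 < p) :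
    M 1 = C (1 / (1 + p)) * (invOneSubRPow (p / 2) - invOneSubRPow (-1 / 2)) := by
  set F := M 1 + C (1 / (1 + p)) * invOneSubRPow (-1 / 2) with hF
  have hF0 : constantCoeff F = 1 / (1 + p) := by
    simp [hF, hM.constantCoeff_eq_zero, constantCoeff_invOneSubRPow]
  have hcoeff : C (1 / (1 + p)) * C (-1 / 2) - C (p / 2) * C (1 / (1 + p)) + C (1 / 2) =
      (0 : ℝ⟦X⟧) := by
    simp only [← map_mul, ← map_sub, ← map_add, ← map_zero C]
    congr 1
    field_simp
    ring
  have hderiv : (1 - X) * d⁄dX ℝ F = C (p / 2) * F := by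
    simp only [hF, map_add, Derivation.leibniz, smul_eq_mul, derivative_C]
    linear_combination hM.one_sub_X_mul_derivative_one +
      C (1 / (1 + p)) * one_sub_X_mul_derivative_invOneSubRPow (-1 / 2) +
      invOneSubRPow (-1 / 2) * hcoeff
  have hsolve := eq_C_mul_invOneSubRPow_of_derivative hderiv
  rw [hF0] at hsolve
  linear_combination hsolve

theorem hasLeadingTerm_one (hM : IsMomentSystem p M) (hp : 0 < p) :
    HasLeadingTerm (p / 4) (M 1) (momentExponent p 0) (1 / (1 + p)) := by
  have herror := (coeffIsBigO_invOneSubRPow neg_half_ne_neg_natCast (by linarith)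
    (by linarith : 0 < p / 4)).C_mul (-(1 / (1 + p)))
  rw [HasLeadingTerm, momentExponent_zero, hM.one_eq hp]
  convert herror using 1
  · rw [map_neg]; ring
  · ring

theorem hasLeadingTerm_derivative_one (hM : IsMomentSystem p M) (hp : 0 < p) (c : ℝ) :
    HasLeadingTerm (p / 4) ((1 - X) * d⁄dX ℝ (M 1) - C (p / 2) * M 1) (momentExponent p 0)
      ((momentExponent p 0 - p / 2) * c) := by
  rw [HasLeadingTerm, hM.one_sub_X_mul_derivative_one, momentExponent_zero, sub_self,
    zero_mul, map_zero, zero_mul, sub_zero]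
  exact (coeffIsBigO_invOneSubRPow neg_half_ne_neg_natCast (by linarith) (by linarith)).C_mul _

theorem hasLeadingTerm_derivative_add_two (hM : IsMomentSystem p M) (hp : 0 < p) {c : ℕ → ℝ}
    {j : ℕ} (hc : (1 + p) * (j + 1) * c (j + 1) =
      p * ((1 + p) * (j + 2) / 2 - 1) * ∑ x ∈ HasAntidiagonal.antidiagonal j, c x.1 * c x.2)
    (hlead : ∀ i ≤ j, HasLeadingTerm (p / 4) (M (i + 1)) (momentExponent p i) (c i))
    (hderiv : ∀ i ≤ j, HasLeadingTerm (p / 4) ((1 - X) * d⁄dX ℝ (M (i + 1))) (momentExponent p i)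
      (momentExponent p i * c i)) :
    HasLeadingTerm (p / 4) ((1 - X) * d⁄dX ℝ (M (j + 2)) - C (p / 2) * M (j + 2))
      (momentExponent p (j + 1)) ((momentExponent p (j + 1) - p / 2) * c (j + 1)) := by
  have hε (i : ℕ) : p / 4 < momentExponent p i := by linarith [half_le_momentExponent hp i]
  have hterm (x : ℕ × ℕ) (hx : x ∈ HasAntidiagonal.antidiagonal j) : HasLeadingTerm (p / 4)
      (invOneSubRPow (1 / 2) * (M (x.1 + 1) * ((1 - X) * d⁄dX ℝ (M (x.2 + 1)))))
      (momentExponent p (j + 1)) (c x.1 * (momentExponent p x.2 * c x.2)) := by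
    have hj : x.1 + x.2 = j := Finset.HasAntidiagonal.mem_antidiagonal.mp hx
    rw [← hj, ← momentExponent_add_add]
    exact ((hlead x.1 (by lia)).mul (hderiv x.2 (by lia)) (by linarith) (hε _)
      (hε _)).invOneSubRPow_mul (by norm_num) (by linarith [hε x.1, hε x.2])
  have hcoeff : (momentExponent p (j + 1) - p / 2) * c (j + 1) =
      p * ∑ x ∈ HasAntidiagonal.antidiagonal j, c x.1 * (momentExponent p x.2 * c x.2) := by
    rw [sum_antidiagonal_mul_momentExponent_mul, momentExponent]
    push_cast
    linear_combination hc / 2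
  rw [hM.one_sub_X_mul_derivative_add_two, hcoeff, Finset.mul_sum (a := invOneSubRPow _)]
  exact (HasLeadingTerm.sum hterm).C_mul p

theorem hasLeadingTerm_succ (hM : IsMomentSystem p M) (hp : 0 < p) {c : ℕ → ℝ}
    (hc_zero : c 0 = 1 / (1 + p))
    (hc_succ : ∀ j : ℕ, (1 + p) * (j + 1) * c (j + 1) =
      p * ((1 + p) * (j + 2) / 2 - 1) * ∑ x ∈ HasAntidiagonal.antidiagonal j, c x.1 * c x.2)
    (k : ℕ) : HasLeadingTerm (p / 4) (M (k + 1)) (momentExponent p k) (c k) := by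
  suffices h : HasLeadingTerm (p / 4) (M (k + 1)) (momentExponent p k) (c k) ∧
      HasLeadingTerm (p / 4) ((1 - X) * d⁄dX ℝ (M (k + 1)) - C (p / 2) * M (k + 1))
        (momentExponent p k) ((momentExponent p k - p / 2) * c k) from h.1
  induction k using Nat.strong_induction_on with
  | _ k ih =>
  rcases k with - | j
  · rw [hc_zero]
    exact ⟨hM.hasLeadingTerm_one hp, hM.hasLeadingTerm_derivative_one hp _⟩
  · have hlead (i : ℕ) (hi : i ≤ j) := (ih i (Nat.lt_succ_of_le hi)).1
    have hderiv := hM.hasLeadingTerm_derivative_add_two hp (hc_succ j) hlead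
      fun i hi => (hlead i hi).one_sub_X_mul_derivative (ih i (Nat.lt_succ_of_le hi)).2
    have hgap : p / 2 < momentExponent p (j + 1) - p / 4 := by
      have hj : (0 : ℝ) ≤ j * (1 + p) := by positivity
      rw [momentExponent]
      push_cast
      linarith
    exact ⟨hderiv.of_derivative (by positivity) hgap (hM.constantCoeff_eq_zero _), hderiv⟩

end IsMomentSystem

end MomentSystem

section RotheHagen

variable {K : Type*} [Field K]

theorem descPochhammer_succ_eval_add_one (n : ℕ) (x : K) :
    (descPochhammer K (n + 1)).eval (x + 1) = (x + 1) * (descPochhammer K n).eval x := by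
  simp [descPochhammer_succ_left]

/-- The Rothe polynomial `a / (a + b n) * (a + b n choose n)` in the variable `a`, that is, the
coefficient of `zⁿ` in the `a`-th power of the generalised binomial series with parameter `b`. -/
noncomputable def rothePoly (b : K) : ℕ → K[X]
  | 0 => 1
  | n + 1 => Polynomial.C ((n + 1).factorial : K)⁻¹ * Polynomial.X *
      (descPochhammer K n).comp (Polynomial.X + Polynomial.C (b * (n + 1) - 1))

theorem eval_rothePoly_zero (b a : K) : (rothePoly b 0).eval a = 1 :=
  Polynomial.eval_one

theorem eval_rothePoly_succ (b a : K) (n : ℕ) :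
    (rothePoly b (n + 1)).eval a =
      a / (n + 1).factorial * (descPochhammer K n).eval (a + b * (n + 1) - 1) := by
  simp only [rothePoly, Polynomial.eval_mul, Polynomial.eval_C, Polynomial.eval_X,
    Polynomial.eval_comp, Polynomial.eval_add, add_sub_assoc]
  ring

theorem eval_rothePoly_add_one [CharZero K] (b a : K) (n : ℕ) :
    (rothePoly b (n + 1)).eval (a + 1) =
      (rothePoly b (n + 1)).eval a + (rothePoly b n).eval (a + b) := by
  rcases n with - | m
  · rw [eval_rothePoly_succ, eval_rothePoly_succ, eval_rothePoly_zero]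
    simp
  · have hfact : ((m + 1).factorial : K) ≠ 0 := by exact_mod_cast (m + 1).factorial_ne_zero
    have hm : (m : K) + 1 + 1 ≠ 0 := by exact_mod_cast (m + 1).succ_ne_zero
    set x := a + b * (m + 1 + 1) - 1 with hx
    have hleft := descPochhammer_succ_eval_add_one m x
    have hright := descPochhammer_succ_eval (S := K) m x
    rw [eval_rothePoly_succ, eval_rothePoly_succ, eval_rothePoly_succ, Nat.factorial_succ (m + 1)]
    push_cast
    rw [show a + 1 + b * (m + 1 + 1) - 1 = x + 1 by ring, ← hx,
      show a + b + b * (m + 1) - 1 = x by ring, hleft, hright]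
    field_simp
    rw [hx]
    ring

theorem sum_antidiagonal_rothePoly_natCast [CharZero K] {b c : K} {n : ℕ}
    (ih : ∀ a c : K, ∑ x ∈ HasAntidiagonal.antidiagonal n,
      (rothePoly b x.1).eval a * (rothePoly b x.2).eval c = (rothePoly b n).eval (a + c)) (m : ℕ) :
    ∑ x ∈ HasAntidiagonal.antidiagonal (n + 1),
      (rothePoly b x.1).eval (m : K) * (rothePoly b x.2).eval c =
        (rothePoly b (n + 1)).eval (m + c) := by
  induction m with
  | zero =>
    simp [Finset.Nat.sum_antidiagonal_succ, eval_rothePoly_zero, eval_rothePoly_succ]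
  | succ m ihm =>
    rw [Finset.Nat.sum_antidiagonal_succ, eval_rothePoly_zero] at ihm ⊢
    simp only [Nat.cast_succ, eval_rothePoly_add_one, add_mul, Finset.sum_add_distrib, ih]
    rw [← add_assoc, ihm, add_right_comm (m : K) b c, add_right_comm (m : K) 1 c,
      eval_rothePoly_add_one]

/-- The Rothe–Hagen identity. The step `a ↦ a + 1` proves it for `a` a natural number, and both
sides are polynomials in `a`. -/
theorem sum_antidiagonal_rothePoly [CharZero K] (b : K) (n : ℕ) (a c : K) :
    ∑ x ∈ HasAntidiagonal.antidiagonal n, (rothePoly b x.1).eval a * (rothePoly b x.2).eval c =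
      (rothePoly b n).eval (a + c) := by
  induction n generalizing a c with
  | zero => simp [eval_rothePoly_zero]
  | succ n ih =>
    set P : K[X] := ∑ x ∈ HasAntidiagonal.antidiagonal (n + 1),
      rothePoly b x.1 * Polynomial.C ((rothePoly b x.2).eval c)
    set Q : K[X] := (rothePoly b (n + 1)).comp (Polynomial.X + Polynomial.C c)
    have hP (t : K) : P.eval t = ∑ x ∈ HasAntidiagonal.antidiagonal (n + 1),
        (rothePoly b x.1).eval t * (rothePoly b x.2).eval c := by
      simp [P, Polynomial.eval_finsetSum]
    have hQ (t : K) : Q.eval t = (rothePoly b (n + 1)).eval (t + c) := by simp [Q]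
    have hPQ : P = Q := by
      refine Polynomial.eq_of_infinite_eval_eq P Q <|
        (Set.infinite_range_of_injective (Nat.cast_injective (R := K))).mono ?_
      rintro - ⟨m, rfl⟩
      rw [Set.mem_ofPred_eq, hP, hQ, sum_antidiagonal_rothePoly_natCast ih]
    rw [← hP, hPQ, hQ]

theorem succ_mul_eval_rothePoly_succ [CharZero K] (p : K) (j : ℕ) :
    (j + 1) * (rothePoly (1 + p) (j + 1)).eval p =
      ((1 + p) * (j + 2) / 2 - 1) * (rothePoly (1 + p) j).eval (p + p) := by
  rcases j with - | m
  · rw [eval_rothePoly_succ, eval_rothePoly_zero]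
    simp
  · have hfact : ((m + 1).factorial : K) ≠ 0 := by exact_mod_cast (m + 1).factorial_ne_zero
    have hm : (m : K) + 1 + 1 ≠ 0 := by exact_mod_cast (m + 1).succ_ne_zero
    set x := p + (1 + p) * (m + 1 + 1) - 1 with hx
    have hshift : x * (descPochhammer K m).eval (x - 1) =
        (descPochhammer K m).eval x * (x - m) := by
      have hleft := descPochhammer_succ_eval_add_one m (x - 1)
      rw [sub_add_cancel, descPochhammer_succ_eval] at hleft
      exact hleft.symm
    rw [eval_rothePoly_succ, eval_rothePoly_succ, Nat.factorial_succ (m + 1)]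
    push_cast
    rw [← hx, show p + p + (1 + p) * (m + 1) - 1 = x - 1 by rw [hx]; ring,
      descPochhammer_succ_eval, ← hshift]
    field_simp
    rw [hx]
    ring

end RotheHagen

section LeadingCoefficient

/-- The leading coefficients of the binomial-moment generating functions. By Lagrange inversion
these are the coefficients of the solution `h` of `h (1 - p h / (1 + p)) ^ p = x / (1 + p)`. -/
noncomputable def momentCoeff (p : ℝ) (k : ℕ) : ℝ :=
  (p / (1 + p) ^ 2) ^ k / (1 + p) * (rothePoly (1 + p) k).eval p

theorem momentCoeff_zero (p : ℝ) : momentCoeff p 0 = 1 / (1 + p) := by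
  simp [momentCoeff, eval_rothePoly_zero]

theorem sum_antidiagonal_momentCoeff_mul (p : ℝ) (j : ℕ) :
    ∑ x ∈ HasAntidiagonal.antidiagonal j, momentCoeff p x.1 * momentCoeff p x.2 =
      (p / (1 + p) ^ 2) ^ j / (1 + p) ^ 2 * (rothePoly (1 + p) j).eval (p + p) := by
  rw [← sum_antidiagonal_rothePoly, Finset.mul_sum]
  refine Finset.sum_congr rfl fun x hx => ?_
  rw [← Finset.HasAntidiagonal.mem_antidiagonal.mp hx, momentCoeff, momentCoeff,
    mul_mul_mul_comm, div_mul_div_comm, ← pow_add, ← sq]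

theorem momentCoeff_succ {p : ℝ} (hp : 0 < p) (j : ℕ) :
    (1 + p) * (j + 1) * momentCoeff p (j + 1) =
      p * ((1 + p) * (j + 2) / 2 - 1) *
        ∑ x ∈ HasAntidiagonal.antidiagonal j, momentCoeff p x.1 * momentCoeff p x.2 := by
  rw [sum_antidiagonal_momentCoeff_mul, momentCoeff, pow_succ]
  calc (1 + p) * (j + 1) * ((p / (1 + p) ^ 2) ^ j * (p / (1 + p) ^ 2) / (1 + p) *
        (rothePoly (1 + p) (j + 1)).eval p)
      = (p / (1 + p) ^ 2) ^ j * (p / (1 + p) ^ 2) *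
          ((j + 1) * (rothePoly (1 + p) (j + 1)).eval p) := by field_simp
    _ = _ := by rw [succ_mul_eval_rothePoly_succ]; ring

theorem eval_descPochhammer_mul_Gamma {x : ℝ} (hx : 0 < x) (m : ℕ) :
    (descPochhammer ℝ m).eval (x + m) * Real.Gamma (x + 1) = Real.Gamma (x + m + 1) := by
  induction m with
  | zero => simp
  | succ m ih =>
    rw [Nat.cast_succ, ← add_assoc, descPochhammer_succ_eval_add_one, mul_assoc, ih,
      Real.Gamma_add_one (s := x + m + 1) (by positivity)]

theorem factorial_mul_eval_rothePoly {p : ℝ} (hp : 0 < p) (k : ℕ) :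
    (k + 1).factorial * (rothePoly (1 + p) k).eval p =
      Real.Gamma ((k + 1) * p + k) / Real.Gamma ((k + 1) * p) := by
  have hx : 0 < (k + 1) * p := by positivity
  rw [eq_div_iff (Real.Gamma_pos_of_pos hx).ne']
  rcases k with - | m
  · simp [eval_rothePoly_zero]
  · have hGamma := eval_descPochhammer_mul_Gamma hx m
    rw [Real.Gamma_add_one hx.ne'] at hGamma
    push_cast at hGamma ⊢
    rw [← add_assoc ((m + 1 + 1) * p), ← hGamma, eval_rothePoly_succ, Nat.factorial_succ (m + 1),
      show p + (1 + p) * (m + 1) - 1 = (m + 1 + 1) * p + m by ring]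
    push_cast
    field_simp

theorem factorial_mul_momentCoeff {p : ℝ} (hp : 0 < p) (k : ℕ) :
    (k + 1).factorial * momentCoeff p k =
      p ^ k * Real.Gamma ((k + 1) * p + k) /
        ((p + 1) ^ (2 * k + 1) * Real.Gamma ((k + 1) * p)) := by
  rw [momentCoeff, mul_left_comm, factorial_mul_eval_rothePoly hp, div_pow, ← pow_mul, pow_succ,
    add_comm p 1]
  field_simp

end LeadingCoefficient

section RootClusterMoments

theorem pow_eq_sum_stirlingSecond_mul_descFactorial (j n : ℕ) :
    j ^ n = ∑ i ∈ Finset.range (n + 1), n.stirlingSecond i * j.descFactorial i := by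
  induction n with
  | zero => simp
  | succ n ih =>
    have hmul (i : ℕ) :
        j.descFactorial i * j = j.descFactorial (i + 1) + i * j.descFactorial i := by
      rcases le_or_gt i j with hij | hij
      · rw [Nat.descFactorial_succ, ← add_mul, Nat.sub_add_cancel hij, mul_comm]
      · simp [Nat.descFactorial_of_lt hij]
    have hshift : ∑ i ∈ Finset.range (n + 1), n.stirlingSecond i * (i * j.descFactorial i) =
        ∑ i ∈ Finset.range (n + 1),
          n.stirlingSecond (i + 1) * ((i + 1) * j.descFactorial (i + 1)) := by
      rw [Finset.sum_range_succ', zero_mul, mul_zero, add_zero, Finset.sum_range_succ _ n,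
        Nat.stirlingSecond_eq_zero_of_lt n.lt_succ_self, zero_mul, add_zero]
    rw [pow_succ, ih, Finset.sum_mul, Finset.sum_range_succ' _ (n + 1),
      Nat.stirlingSecond_succ_zero, zero_mul, add_zero]
    simp only [mul_assoc, hmul, mul_add, Finset.sum_add_distrib]
    rw [hshift, ← Finset.sum_add_distrib]
    refine Finset.sum_congr rfl fun i _ => ?_
    rw [Nat.stirlingSecond_succ_succ]
    ring

theorem sum_pow_succ_mul_eq_sum_stirlingSecond_mul {R : Type*} [CommSemiring R] (s : Finset ℕ)
    (w : ℕ → R) (k : ℕ) :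
    ∑ j ∈ s, (j : R) ^ (k + 1) * w j = ∑ i ∈ Finset.range (k + 1),
      ((k + 1).stirlingSecond (i + 1) * (i + 1).factorial : R) *
        ∑ j ∈ s, (j.choose (i + 1) : R) * w j := by
  have hpow (j : ℕ) : (j : R) ^ (k + 1) = ∑ i ∈ Finset.range (k + 1),
      ((k + 1).stirlingSecond (i + 1) * (i + 1).factorial : R) * j.choose (i + 1) := by
    have hstirling := pow_eq_sum_stirlingSecond_mul_descFactorial j (k + 1)
    rw [Finset.sum_range_succ', Nat.stirlingSecond_succ_zero, zero_mul, add_zero] at hstirling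
    simp only [Nat.descFactorial_eq_factorial_mul_choose, ← mul_assoc] at hstirling
    rw [← Nat.cast_pow, hstirling]
    push_cast
    rfl
  simp only [hpow, Finset.sum_mul, Finset.mul_sum, mul_assoc]
  exact Finset.sum_comm

theorem tendsto_div_natCast_rpow_of_lt {f : ℕ → ℝ} {s t c : ℝ} (hst : s < t)
    (hf : Tendsto (fun n : ℕ => f n / (n : ℝ) ^ s) atTop (nhds c)) :
    Tendsto (fun n : ℕ => f n / (n : ℝ) ^ t) atTop (nhds 0) := by
  have hmul := hf.mul (isLittleO_natCast_rpow_rpow hst).tendsto_div_nhds_zero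
  rw [mul_zero] at hmul
  refine hmul.congr' ?_
  filter_upwards [eventually_gt_atTop 0] with n hn
  exact div_mul_div_cancel₀ (Real.rpow_pos_of_pos (Nat.cast_pos.mpr hn) s).ne'

theorem Gamma_neg_half : Real.Gamma (-1 / 2) = -2 * Real.sqrt Real.pi := by
  have hGamma := Real.Gamma_add_one (s := -1 / 2) (by norm_num)
  rw [show (-1 / 2 : ℝ) + 1 = 1 / 2 by norm_num, Real.Gamma_one_half_eq] at hGamma
  linarith

theorem derivative_rescale {R : Type*} [CommSemiring R] (a : R) (F : R⟦X⟧) :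
    d⁄dX R (rescale a F) = C a * rescale a (d⁄dX R F) := by
  ext n
  simp only [coeff_derivative, coeff_rescale, coeff_C_mul]
  ring

namespace clusterRec

variable {p : ℝ} {r : ℕ → ℕ → ℝ} {b : ℕ → ℝ}

theorem isMomentSystem (h : clusterRec p (fun δ => (δ.factorial : ℝ)) r b) :
    IsMomentSystem p fun k => rescale (1 / 2) (momentEGF r k) := by
  have hderiv (k : ℕ) : 2 * d⁄dX ℝ (rescale (1 / 2) (momentEGF r k)) =
      rescale (1 / 2) (d⁄dX ℝ (momentEGF r k)) := by
    rw [derivative_rescale, ← mul_assoc, ← map_ofNat C 2, ← map_mul, mul_one_div_cancel two_ne_zero,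
      map_one, one_mul]
  have hC (a : ℝ) : rescale (1 / 2) (C a) = C a := by
    ext n
    rcases n with - | n <;> simp [coeff_C]
  refine ⟨fun k => ?_, ?_, fun k => ?_⟩
  · rw [← coeff_zero_eq_constantCoeff_apply, coeff_rescale, momentEGF, coeff_mk]
    simp
  · rw [hderiv, ← map_one (rescale (1 / 2 : ℝ)), ← map_sub, ← map_mul,
      h.one_sub_momentEGF_zero_mul_derivative_zero]
  · have hsucc := congrArg (rescale (1 / 2)) (h.one_sub_momentEGF_zero_mul_derivative_succ k)
    simpa only [map_mul, map_add, map_sub, map_sum, map_one, map_zero, apply_ite, hC,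
      ← hderiv] using hsucc

theorem sum_choose_mul_div_eq_neg_coeff_div (h : clusterRec p (fun δ => (δ.factorial : ℝ)) r b)
    (k : ℕ) {n : ℕ} (hn : 0 < n) :
    (∑ j ∈ Icc 1 n, (j.choose k : ℝ) * r n j) / b n =
      -(coeff n (rescale (1 / 2) (momentEGF r k)) / coeff n (invOneSubRPow (-1 / 2))) := by
  have hcoeff (i : ℕ) : coeff n (rescale (1 / 2) (momentEGF r i)) =
      (1 / 2) ^ n * (n.factorial : ℝ)⁻¹ * ∑ j ∈ Icc 1 n, (j.choose i : ℝ) * r n j := by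
    rw [coeff_rescale, momentEGF, coeff_mk, mul_assoc]
  have hzero : coeff n (invOneSubRPow (-1 / 2)) = -((1 / 2) ^ n * (n.factorial : ℝ)⁻¹ * b n) := by
    rw [← h.isMomentSystem.one_sub_zero, map_sub, coeff_one, if_neg hn.ne', zero_sub, hcoeff, h.1]
    simp only [Nat.choose_zero_right, Nat.cast_one, one_mul]
  have hscale : (1 / 2 : ℝ) ^ n * (n.factorial : ℝ)⁻¹ ≠ 0 := by positivity
  rw [hcoeff, hzero, div_neg, neg_neg, mul_div_mul_left _ _ hscale]

theorem tendsto_sum_choose_succ_mul_div (h : clusterRec p (fun δ => (δ.factorial : ℝ)) r b)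
    (hp : 0 < p) (k : ℕ) :
    Tendsto (fun n : ℕ => (∑ j ∈ Icc 1 n, (j.choose (k + 1) : ℝ) * r n j) / b n /
        (n : ℝ) ^ ((k + 1) * (p + 1) / 2)) atTop
      (nhds (momentCoeff p k * (2 * Real.sqrt Real.pi / Real.Gamma (momentExponent p k)))) := by
  have hε : p / 4 < momentExponent p k := by linarith [half_le_momentExponent hp k]
  have hmoment := (h.isMomentSystem.hasLeadingTerm_succ hp (momentCoeff_zero p)
    (momentCoeff_succ hp) k).tendsto_coeff_div_rpow (by positivity) hε
  have htotal := tendsto_coeff_invOneSubRPow neg_half_ne_neg_natCast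
  have hGamma : (Real.Gamma (-1 / 2))⁻¹ ≠ 0 := by
    rw [Gamma_neg_half]
    positivity
  have hratio := (hmoment.div htotal hGamma).neg
  rw [Gamma_neg_half] at hratio
  convert hratio.congr' ?_ using 2
  · field_simp
  filter_upwards [eventually_gt_atTop 0] with n hn
  have hn' : (0 : ℝ) < n := Nat.cast_pos.mpr hn
  have hexp : (n : ℝ) ^ (momentExponent p k - 1) =
      (n : ℝ) ^ ((k + 1) * (p + 1) / 2) * (n : ℝ) ^ (-1 / 2 - 1 : ℝ) := by
    rw [← Real.rpow_add hn', momentExponent]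
    ring_nf
  simp only [Pi.div_apply, h.sum_choose_mul_div_eq_neg_coeff_div _ hn, hexp]
  field_simp

theorem tendsto_sum_pow_succ_mul_div (h : clusterRec p (fun δ => (δ.factorial : ℝ)) r b)
    (hp : 0 < p) (k : ℕ) :
    Tendsto (fun n : ℕ => (∑ j ∈ Icc 1 n, (j : ℝ) ^ (k + 1) * r n j) / b n /
        (n : ℝ) ^ ((k + 1) * (p + 1) / 2)) atTop
      (nhds ((k + 1).factorial * momentCoeff p k *
        (2 * Real.sqrt Real.pi / Real.Gamma (momentExponent p k)))) := by
  set e : ℝ := (k + 1) * (p + 1) / 2 with he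
  have hsplit (n : ℕ) : (∑ j ∈ Icc 1 n, (j : ℝ) ^ (k + 1) * r n j) / b n / (n : ℝ) ^ e =
      ∑ i ∈ Finset.range k, ((k + 1).stirlingSecond (i + 1) * (i + 1).factorial : ℝ) *
          ((∑ j ∈ Icc 1 n, (j.choose (i + 1) : ℝ) * r n j) / b n / (n : ℝ) ^ e) +
        (k + 1).factorial *
          ((∑ j ∈ Icc 1 n, (j.choose (k + 1) : ℝ) * r n j) / b n / (n : ℝ) ^ e) := by
    simp only [Finset.sum_div, mul_div_assoc]
    rw [sum_pow_succ_mul_eq_sum_stirlingSecond_mul, Finset.sum_range_succ,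
      Nat.stirlingSecond_self, Nat.cast_one, one_mul]
  have hlow (i : ℕ) (hi : i ∈ Finset.range k) : Tendsto (fun n : ℕ =>
      ((k + 1).stirlingSecond (i + 1) * (i + 1).factorial : ℝ) *
        ((∑ j ∈ Icc 1 n, (j.choose (i + 1) : ℝ) * r n j) / b n / (n : ℝ) ^ e)) atTop (nhds 0) := by
    have hik : (i : ℝ) < k := Nat.cast_lt.mpr (Finset.mem_range.mp hi)
    rw [← mul_zero ((k + 1).stirlingSecond (i + 1) * (i + 1).factorial : ℝ)]
    refine (tendsto_div_natCast_rpow_of_lt ?_ (h.tendsto_sum_choose_succ_mul_div hp i)).const_mul _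
    rw [he]
    gcongr
  have htop := (h.tendsto_sum_choose_succ_mul_div hp k).const_mul ((k + 1).factorial : ℝ)
  have hsum := (tendsto_finsetSum (Finset.range k) hlow).add htop
  rw [Finset.sum_const_zero, zero_add, ← mul_assoc] at hsum
  exact hsum.congr fun n => (hsplit n).symm

end clusterRec

end RootClusterMoments

theorem stmt8_general (p : ℝ) (hp0 : 0 < p)
    (r : ℕ → ℕ → ℝ) (b : ℕ → ℝ)
    (hrec : clusterRec p (fun δ => (δ.factorial : ℝ)) r b)
    (k : ℕ) (hk : 1 ≤ k) :
    Tendsto (fun n : ℕ =>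
        ((∑ j ∈ Finset.Icc 1 n, (j : ℝ) ^ k * r n j) / b n)
          / (n : ℝ) ^ ((k : ℝ) * (p + 1) / 2))
      atTop
      (nhds (2 * p ^ (k - 1) * Real.Gamma ((k : ℝ) * p + (k : ℝ) - 1) * Real.sqrt Real.pi
        / ((p + 1) ^ (2 * k - 1) * Real.Gamma ((k : ℝ) * p)
            * Real.Gamma (((k : ℝ) * p + (k : ℝ) - 1) / 2)))) := by
  obtain ⟨k, rfl⟩ := Nat.exists_eq_add_of_le' hk
  have hlimit := hrec.tendsto_sum_pow_succ_mul_div hp0 k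
  rw [factorial_mul_momentCoeff hp0, momentExponent,
    show ((k : ℝ) + 1) * (1 + p) - 1 = (k + 1) * p + k by ring,
    div_mul_div_comm] at hlimit
  rw [Nat.add_sub_cancel, show 2 * (k + 1) - 1 = 2 * k + 1 by lia, Nat.cast_succ,
    show ((k : ℝ) + 1) * p + (k + 1) - 1 = (k + 1) * p + k by ring]
  convert hlimit using 3
  ring

/-- for random plane-oriented recursive trees (`α = 1`, `φ(δ) = δ!`),
the `k`-th moment of the root-cluster size, normalized by `n^{k(p+1)/2}`, converges to
`2 p^{k-1} Γ(kp+k-1) √π / ((p+1)^{2k-1} Γ(kp) Γ((kp+k-1)/2))`. -/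
theorem stmt8 (p : ℝ) (hp0 : 0 < p) (hp1 : p < 1)
    (r : ℕ → ℕ → ℝ) (b : ℕ → ℝ)
    (hrec : clusterRec p (fun δ => (δ.factorial : ℝ)) r b)
    (k : ℕ) (hk : 1 ≤ k) :
    Tendsto (fun n : ℕ =>
        ((∑ j ∈ Finset.Icc 1 n, (j : ℝ) ^ k * r n j) / b n)
          / (n : ℝ) ^ ((k : ℝ) * (p + 1) / 2))
      atTop
      (nhds (2 * p ^ (k - 1) * Real.Gamma ((k : ℝ) * p + (k : ℝ) - 1) * Real.sqrt Real.pi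
        / ((p + 1) ^ (2 * k - 1) * Real.Gamma ((k : ℝ) * p)
            * Real.Gamma (((k : ℝ) * p + (k : ℝ) - 1) / 2)))) := by
  exact stmt8_general p hp0 r b hrec k hk
end
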